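/- arXiv:1503.00325 — 3 statements merged into one kernel-verified Lean document; each statement's English description precedes it below -/
import Mathlib

section
/- For every positive integer m there exists a constant A_m > 0 depending only on m with the following property. Let 0 < R, let f(z) = Σ_{k≥0} a_k z^k be analytic in the open disk D_R = {z ∈ ℂ : |z| < R} (with Taylor series converging on a disk of radius strictly larger than R), let s ≥ 0 and p ≥ s+1 be integers, set m = p − s, and suppose f is (s,p)-valent in D_R. Then the lower s-truncation f̂(z) = Σ_{k≥1} a_{s+k} z^k possesses the (m, R, S(k))-Taylor domination property with S(k) = (A_m·k/m)^{2m}; that is, for every k ≥ m+1, |a_{s+k}| R^k ≤ (A_m·k/m)^{2m} · max_{1≤i≤m} |a_{s+i}| R^i. -/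
-- The order of vanishing of `g` at `z` (zero if `g` is not analytic at `z`).
open scoped Classical in
noncomputable def ordAt (g : ℂ → ℂ) (z : ℂ) : ℕ∞ :=
  if h : AnalyticAt ℂ g z then analyticOrderAt g z else 0

/-- The number of zeroes of `g` in `Ω`, counted with multiplicity. -/
noncomputable def solCount (g : ℂ → ℂ) (Ω : Set ℂ) : ℕ∞ :=
  ∑' z : Ω, ordAt g z

/-- `f` is `(s,p)`-valent in `Ω`: for every polynomial `P` of degree at most `s`,
the equation `f = P` has at most `p` solutions in `Ω`, counted with multiplicity. -/
def IsSPValentOn (f : ℂ → ℂ) (Ω : Set ℂ) (s p : ℕ) : Prop :=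
  ∀ P : Polynomial ℂ, P.degree ≤ (s : ℕ) →
    solCount (fun z => f z - P.eval z) Ω ≤ (p : ℕ∞)

section Aux
open MeasureTheory Set Filter Topology ENNReal

def NV (f : ℂ → ℂ) (Ω : Set ℂ) (p : ℕ) : Prop :=
  ∀ w : ℂ, ∀ S : Finset ℂ, (∀ z ∈ S, z ∈ Ω ∧ f z = w) → S.card ≤ p

lemma det_smul (c : ℂ) :
    ENNReal.ofReal |(((ContinuousLinearMap.toSpanSingleton ℂ c : ℂ →L[ℂ] ℂ).restrictScalars ℝ)).det| = ‖c‖ₑ ^ 2 := by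
  have : (((ContinuousLinearMap.toSpanSingleton ℂ c : ℂ →L[ℂ] ℂ).restrictScalars ℝ)).det = ‖c‖ ^ 2 := by
    simp [ContinuousLinearMap.det, LinearMap.det_restrictScalars, Algebra.norm_complex_eq, Complex.normSq_eq_norm_sq]
  rw [this, abs_of_nonneg (by positivity), ENNReal.ofReal_pow (norm_nonneg _), ofReal_norm]

lemma area_inj (f : ℂ → ℂ) (D U : Set ℂ) (hU : IsOpen U) (hf : DifferentiableOn ℂ f U)
    (hDU : D ⊆ U) (hD : MeasurableSet D) (hi : InjOn f D) (φ : ℂ → ℝ≥0∞) :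
    ∫⁻ z in D, ‖deriv f z‖ₑ ^ 2 * φ (f z) = ∫⁻ w in f '' D, φ w := by
  rw [lintegral_image_eq_lintegral_abs_det_fderiv_mul volume hD
    (f' := fun z => (ContinuousLinearMap.toSpanSingleton ℂ (deriv f z) : ℂ →L[ℂ] ℂ).restrictScalars ℝ) _ hi]
  · simp_rw [det_smul]
  · intro x hx
    have := ((hf.differentiableAt (hU.mem_nhds (hDU hx))).hasDerivAt).hasFDerivAt
    exact (this.restrictScalars ℝ).hasFDerivWithinAt

lemma meas_image (f : ℂ → ℂ) (D U : Set ℂ) (_hU : IsOpen U) (hf : DifferentiableOn ℂ f U)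
    (hDU : D ⊆ U) (hD : MeasurableSet D) (hi : InjOn f D) : MeasurableSet (f '' D) :=
  hD.image_of_continuousOn_injOn (hf.continuousOn.mono hDU) hi

lemma area_bound (f : ℂ → ℂ) (Ω : Set ℂ) (hΩ : IsOpen Ω) (hf : DifferentiableOn ℂ f Ω) (p : ℕ)
    (hp : NV f Ω p) (φ : ℂ → ℝ≥0∞) (hφ : Measurable φ) :
    ∫⁻ z in Ω, ‖deriv f z‖ₑ ^ 2 * φ (f z) ≤ p * ∫⁻ w, φ w := by
  classical
  have hd : ContinuousOn (deriv f) Ω := (hf.deriv hΩ).continuousOn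
  set Ω' : Set ℂ := Ω ∩ deriv f ⁻¹' {0}ᶜ with hΩ'
  have hΩ'o : IsOpen Ω' := hd.isOpen_inter_preimage hΩ isOpen_compl_singleton
  have h1 : ∀ z : ℂ, ∃ V : Set ℂ, IsOpen V ∧ V ⊆ Ω' ∧ InjOn f V ∧ (z ∈ Ω' → z ∈ V) := by
    intro z
    by_cases hz : z ∈ Ω'
    · have han : AnalyticAt ℂ f z := hf.analyticAt (hΩ.mem_nhds hz.1)
      have hsd : HasStrictDerivAt f (deriv f z) z := han.hasStrictDerivAt
      have hne : deriv f z ≠ 0 := hz.2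
      obtain ⟨V, hV1, hV2, hV3⟩ := eventually_nhds_iff.mp (HasStrictDerivAt.eventually_left_inverse hsd hne)
      refine ⟨V ∩ Ω', hV2.inter hΩ'o, inter_subset_right, ?_, fun _ => ⟨hV3, hz⟩⟩
      intro x hx y hy hxy
      rw [← hV1 x hx.1, ← hV1 y hy.1, hxy]
    · exact ⟨∅, isOpen_empty, empty_subset _, injOn_empty _, fun h => absurd h hz⟩
  choose V hVo hVΩ hVi hVm using h1
  obtain ⟨T, hTc, hT⟩ := TopologicalSpace.isOpen_iUnion_countable V hVo
  obtain ⟨g, hg⟩ := Set.countable_iff_exists_subset_range.mp hTc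
  set W : ℕ → Set ℂ := fun n => V (g n) with hW
  set D := disjointed W with hD
  have hDW : ∀ n, D n ⊆ W n := fun n => disjointed_le W n
  have hDm : ∀ n, MeasurableSet (D n) := fun n => MeasurableSet.disjointed (fun i => (hVo (g i)).measurableSet) n
  have hDd : Pairwise (Function.onFun Disjoint D) := disjoint_disjointed W
  have hDU : ⋃ n, D n = Ω' := by
    rw [hD, iUnion_disjointed]
    apply Subset.antisymm
    · exact iUnion_subset fun n => hVΩ _
    · intro z hz
      have : z ∈ ⋃ i, V i := mem_iUnion.mpr ⟨z, hVm z hz⟩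
      rw [← hT] at this
      simp only [mem_iUnion] at this
      obtain ⟨i, hi, hzi⟩ := this
      obtain ⟨n, rfl⟩ := hg hi
      exact mem_iUnion.mpr ⟨n, hzi⟩
  have hDi : ∀ n, InjOn f (D n) := fun n => (hVi _).mono (hDW n)
  have hDΩ : ∀ n, D n ⊆ Ω := fun n => ((hDW n).trans (hVΩ _)).trans inter_subset_left
  have hfD : ∀ n, MeasurableSet (f '' D n) := fun n => meas_image f (D n) Ω hΩ hf (hDΩ n) (hDm n) (hDi n)
  have e1 : ∫⁻ z in Ω, ‖deriv f z‖ₑ ^ 2 * φ (f z) = ∫⁻ z in Ω', ‖deriv f z‖ₑ ^ 2 * φ (f z) := by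
    rw [← lintegral_inter_add_sdiff (B := Ω') _ Ω hΩ'o.measurableSet]
    have : ∫⁻ z in Ω \ Ω', ‖deriv f z‖ₑ ^ 2 * φ (f z) = 0 := by
      rw [setLIntegral_congr_fun (g := fun _ => 0) (hΩ.measurableSet.diff hΩ'o.measurableSet)]
      · simp
      · intro z hz
        have : deriv f z = 0 := by
          by_contra h
          exact hz.2 ⟨hz.1, h⟩
        simp [this]
    rw [this, add_zero, inter_eq_self_of_subset_right inter_subset_left]
  rw [e1, ← hDU, lintegral_iUnion hDm hDd]
  calc ∑' n, ∫⁻ z in D n, ‖deriv f z‖ₑ ^ 2 * φ (f z)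
      = ∑' n, ∫⁻ w, (f '' D n).indicator φ w := by
        congr 1; ext n
        rw [area_inj f (D n) Ω hΩ hf (hDΩ n) (hDm n) (hDi n), lintegral_indicator (hfD n)]
    _ = ∫⁻ w, ∑' n, (f '' D n).indicator φ w := by
        rw [lintegral_tsum]
        exact fun n => (hφ.indicator (hfD n)).aemeasurable
    _ ≤ ∫⁻ w, p * φ w := by
        apply lintegral_mono
        intro w
        show ∑' n, (f '' D n).indicator φ w ≤ p * φ w
        rw [ENNReal.tsum_eq_iSup_sum]
        apply iSup_le
        intro s
        have : ∑ n ∈ s, (f '' D n).indicator φ w = ((s.filter fun n => w ∈ f '' D n).card : ℝ≥0∞) * φ w := by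
          rw [← nsmul_eq_mul, ← Finset.sum_const, Finset.sum_filter]
          apply Finset.sum_congr rfl
          intro n _
          simp [indicator]
        rw [this]
        gcongr
        have h2 : ∀ n ∈ s.filter fun n => w ∈ f '' D n, ∃ z, z ∈ D n ∧ f z = w := by
          intro n hn
          exact (Finset.mem_filter.mp hn).2
        choose! z hz using h2
        rw [← Finset.card_image_of_injOn (f := z)]
        · apply hp w
          intro x hx
          obtain ⟨n, hn, rfl⟩ := Finset.mem_image.mp hx
          exact ⟨hDΩ n (hz n hn).1, (hz n hn).2⟩
        · intro n hn k hk hnk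
          by_contra hne
          have := hDd hne
          apply (Set.disjoint_left.mp this) (hz n hn).1
          show z n ∈ D k
          have hnk' : z n = z k := hnk
          rw [hnk']; exact (hz k hk).1
    _ = p * ∫⁻ w, φ w := by rw [lintegral_const_mul _ hφ]

lemma annulus_int (a b : ℝ) (hab : a ≤ b) :
    ∫⁻ w : ℂ, {w : ℂ | Real.exp a < ‖w‖ ∧ ‖w‖ < Real.exp b}.indicator (fun w => (‖w‖ₑ ^ 2)⁻¹) w
      = ENNReal.ofReal (2 * Real.pi * (b - a)) := by
  rw [← Complex.lintegral_comp_polarCoord_symm]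
  have : ∀ q ∈ polarCoord.target, ENNReal.ofReal q.1 • {w : ℂ | Real.exp a < ‖w‖ ∧ ‖w‖ < Real.exp b}.indicator (fun w => (‖w‖ₑ ^ 2)⁻¹) (Complex.polarCoord.symm q) = (Ioo (Real.exp a) (Real.exp b)).indicator (fun x => ENNReal.ofReal (x⁻¹)) q.1 * 1 := by
    intro q hq
    have hq1 : 0 < q.1 := hq.1
    have hn : ‖Complex.polarCoord.symm q‖ = q.1 := by
      rw [Complex.norm_polarCoord_symm, abs_of_pos hq1]
    have hn' : ‖Complex.polarCoord.symm q‖ₑ = ENNReal.ofReal q.1 := by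
      rw [← ofReal_norm, hn]
    by_cases h : q.1 ∈ Ioo (Real.exp a) (Real.exp b)
    · rw [indicator_of_mem h, indicator_of_mem (show Complex.polarCoord.symm q ∈ {w : ℂ | Real.exp a < ‖w‖ ∧ ‖w‖ < Real.exp b} by rw [mem_ofPred_eq, hn]; exact h), hn', mul_one, smul_eq_mul,
        ← ENNReal.ofReal_pow hq1.le, ← ENNReal.ofReal_inv_of_pos (by positivity), ← ENNReal.ofReal_mul hq1.le]
      congr 1; field_simp
    · rw [indicator_of_notMem h, indicator_of_notMem (by intro h'; apply h; have h2 : _ ∧ _ := h'; rw [hn] at h2; exact h2)]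
      simp
  rw [setLIntegral_congr_fun polarCoord.open_target.measurableSet this]
  have ht : polarCoord.target = Ioi (0:ℝ) ×ˢ Ioo (-Real.pi) Real.pi := rfl
  have hm : Measurable ((Ioo (Real.exp a) (Real.exp b)).indicator (fun x : ℝ => ENNReal.ofReal (x⁻¹))) :=
    Measurable.indicator (by fun_prop) measurableSet_Ioo
  rw [ht, Measure.volume_eq_prod, ← Measure.prod_restrict, lintegral_prod_mul (f := (Ioo (Real.exp a) (Real.exp b)).indicator (fun x => ENNReal.ofReal (x⁻¹))) (g := fun _ => 1) hm.aemeasurable (by fun_prop)]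
  have : ∫⁻ x in Ioi (0:ℝ), (Ioo (Real.exp a) (Real.exp b)).indicator (fun x => ENNReal.ofReal (x⁻¹)) x = ENNReal.ofReal (b - a) := by
    rw [lintegral_indicator measurableSet_Ioo, Measure.restrict_restrict measurableSet_Ioo,
      inter_eq_self_of_subset_left (show Ioo (Real.exp a) (Real.exp b) ⊆ Ioi 0 from fun x hx => lt_trans (Real.exp_pos a) hx.1)]
    have hle : Real.exp a ≤ Real.exp b := Real.exp_le_exp.mpr hab
    have h0 : (0:ℝ) ∉ uIcc (Real.exp a) (Real.exp b) := by
      rw [uIcc_of_le hle]; intro h; linarith [h.1, Real.exp_pos a]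
    have hint : IntervalIntegrable (fun x : ℝ => x⁻¹) volume (Real.exp a) (Real.exp b) := by
      rw [intervalIntegrable_inv_iff]; exact Or.inr h0
    rw [← ofReal_integral_eq_lintegral_ofReal, ← integral_Ioc_eq_integral_Ioo, ← intervalIntegral.integral_of_le hle, integral_inv h0]
    · rw [Real.log_div (by positivity) (by positivity)]; simp
    · exact ((intervalIntegrable_iff_integrableOn_Ioo_of_le hle).mp hint)
    · refine (ae_restrict_iff' measurableSet_Ioo).mpr (Eventually.of_forall fun x hx => ?_)
      have : 0 < x := lt_trans (Real.exp_pos a) hx.1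
      simp; positivity
  rw [this]
  simp only [lintegral_const, one_mul, MeasurableSet.univ, Measure.restrict_apply, univ_inter, Real.volume_Ioo]
  rw [← ENNReal.ofReal_mul (by linarith)]
  congr 1; ring


lemma osc0 (v : ℝ → ℝ) (A B y1 y2 : ℝ) (h12 : y1 ≤ y2) (hv : ContinuousOn v (Icc y1 y2))
    (hA : v y1 ≤ A) (hB : B ≤ v y2) (hAB : A < B) :
    ∃ c d, y1 ≤ c ∧ c < d ∧ d ≤ y2 ∧ v c = A ∧ v d = B ∧ ∀ x ∈ Ioo c d, A < v x ∧ v x < B := by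
  have hc1 : IsCompact (Icc y1 y2 ∩ v ⁻¹' Ici B) :=
    isCompact_Icc.of_isClosed_subset (hv.preimage_isClosed_of_isClosed isClosed_Icc isClosed_Ici) inter_subset_left
  obtain ⟨d, ⟨hd1, hd2⟩, hd3⟩ := hc1.exists_isLeast ⟨y2, ⟨h12, le_rfl⟩, hB⟩
  have hd2 : B ≤ v d := hd2
  have hv' : ContinuousOn v (Icc y1 d) := hv.mono (Icc_subset_Icc_right hd1.2)
  have hdB : v d = B := by
    obtain ⟨x, hx, hxB⟩ := intermediate_value_Icc hd1.1 hv' ⟨(hA.trans hAB.le), hd2⟩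
    have := hd3 ⟨⟨hx.1, hx.2.trans hd1.2⟩, hxB.ge⟩
    rw [← hxB, le_antisymm this hx.2]
  have hc2 : IsCompact (Icc y1 d ∩ v ⁻¹' Iic A) :=
    isCompact_Icc.of_isClosed_subset (hv'.preimage_isClosed_of_isClosed isClosed_Icc isClosed_Iic) inter_subset_left
  obtain ⟨c, ⟨hc1, hc2⟩, hc3⟩ := hc2.exists_isGreatest ⟨y1, ⟨le_rfl, hd1.1⟩, hA⟩
  have hc2 : v c ≤ A := hc2
  have hcA : v c = A := by
    obtain ⟨x, hx, hxB⟩ := intermediate_value_Icc hc1.2 (hv'.mono (Icc_subset_Icc_left hc1.1)) ⟨hc2, hAB.le.trans hd2⟩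
    have := hc3 ⟨⟨hc1.1.trans hx.1, hx.2⟩, hxB.le⟩
    rw [← hxB, le_antisymm this hx.1]
  have hcd : c < d := lt_of_le_of_ne hc1.2 (by rintro rfl; linarith)
  refine ⟨c, d, hc1.1, hcd, hd1.2, hcA, hdB, fun x hx => ⟨?_, ?_⟩⟩
  · by_contra h
    have := hc3 ⟨⟨hc1.1.trans hx.1.le, hx.2.le⟩, not_lt.mp h⟩
    linarith [hx.1]
  · by_contra h
    have := hd3 ⟨⟨hc1.1.trans hx.1.le, hx.2.le.trans hd1.2⟩, not_lt.mp h⟩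
    linarith [hx.2]

lemma osc (v : ℝ → ℝ) (A B y1 y2 α β : ℝ) (h1 : y1 ∈ Ioo α β) (h2 : y2 ∈ Ioo α β) (hv : ContinuousOn v (Ioo α β))
    (hA : v y1 ≤ A) (hB : B ≤ v y2) (hAB : A < B) :
    ∃ c d, α < c ∧ c < d ∧ d < β ∧ (v c = A ∧ v d = B ∨ v c = B ∧ v d = A) ∧ ∀ x ∈ Ioo c d, A < v x ∧ v x < B := by
  rcases le_total y1 y2 with h | h
  · obtain ⟨c, d, h3, h4, h5, h6, h7, h8⟩ := osc0 v A B y1 y2 h (hv.mono (Icc_subset_Ioo h1.1 h2.2)) hA hB hAB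
    exact ⟨c, d, h1.1.trans_le h3, h4, h5.trans_lt h2.2, Or.inl ⟨h6, h7⟩, h8⟩
  · obtain ⟨c, d, h3, h4, h5, h6, h7, h8⟩ := osc0 (fun x => - v x) (-B) (-A) y2 y1 h
      (hv.mono (Icc_subset_Ioo h2.1 h1.2)).neg (neg_le_neg hB) (neg_le_neg hA) (neg_lt_neg hAB)
    refine ⟨c, d, h2.1.trans_le h3, h4, h5.trans_lt h1.2, Or.inr ⟨neg_injective h6, neg_injective h7⟩, fun x hx => ?_⟩
    have := h8 x hx
    constructor <;> linarith [this.1, this.2]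

lemma seg_var (γ γ' : ℝ → ℂ) (A B y1 y2 α β : ℝ) (h1 : y1 ∈ Ioo α β) (h2 : y2 ∈ Ioo α β)
    (hγ : ∀ y ∈ Ioo α β, HasDerivAt γ (γ' y) y) (hγ' : ContinuousOn γ' (Ioo α β))
    (hA : ‖γ y1‖ ≤ A) (hB : B ≤ ‖γ y2‖) (hA0 : 0 < A) (hAB : A < B) :
    ENNReal.ofReal (Real.log B - Real.log A) ≤
      ∫⁻ y in Ioo α β, ‖γ' y‖ₑ * {w : ℂ | A < ‖w‖ ∧ ‖w‖ < B}.indicator (fun w => ‖w‖ₑ⁻¹) (γ y) := by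
  have hc : ContinuousOn γ (Ioo α β) := fun y hy => (hγ y hy).continuousAt.continuousWithinAt
  obtain ⟨c, d, h3, h4, h5, h6, h7⟩ := osc (fun y => ‖γ y‖) A B y1 y2 α β h1 h2 hc.norm hA hB hAB
  have hsub : Icc c d ⊆ Ioo α β := Icc_subset_Ioo h3 h5
  have hpos : ∀ y ∈ Icc c d, 0 < ‖γ y‖ := by
    intro y hy
    rcases eq_or_lt_of_le hy.1 with rfl | hy1
    · rcases h6 with h6 | h6
      · rw [h6.1]; exact hA0
      · rw [h6.1]; linarith
    rcases eq_or_lt_of_le hy.2 with rfl | hy2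
    · rcases h6 with h6 | h6
      · rw [h6.2]; linarith
      · rw [h6.2]; linarith
    exact hA0.trans (h7 y ⟨hy1, hy2⟩).1
  set u' : ℝ → ℝ := fun y => (inner ℝ (γ y) (γ' y)) / ‖γ y‖ ^ 2 with hu'
  have hu : ∀ y ∈ Icc c d, HasDerivAt (fun y => Real.log (‖γ y‖ ^ 2) / 2) (u' y) y := by
    intro y hy
    have := (((hγ y (hsub hy)).norm_sq).log (by have := hpos y hy; positivity)).div_const 2
    have e : u' y = 2 * inner ℝ (γ y) (γ' y) / ‖γ y‖ ^ 2 / 2 := by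
      show inner ℝ (γ y) (γ' y) / ‖γ y‖ ^ 2 = _
      ring
    rw [e]; exact this
  have hcu : ContinuousOn u' (Icc c d) := by
    apply ContinuousOn.div
    · exact (hc.mono hsub).inner (𝕜 := ℝ) (hγ'.mono hsub)
    · exact ((hc.mono hsub).norm.pow 2)
    · intro y hy; have := hpos y hy; positivity
  have hint : IntervalIntegrable u' volume c d := by
    apply ContinuousOn.intervalIntegrable; rwa [uIcc_of_le h4.le]
  have hftc := intervalIntegral.integral_eq_sub_of_hasDerivAt (by rw [uIcc_of_le h4.le]; exact hu) hint
  have hval : ENNReal.ofReal (Real.log B - Real.log A) = ‖∫ y in c..d, u' y‖ₑ := by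
    rw [hftc]
    have hlt := Real.log_lt_log hA0 hAB
    rcases h6 with ⟨e1, e2⟩ | ⟨e1, e2⟩
    · rw [e1, e2, Real.log_pow, Real.log_pow, ← ofReal_norm, Real.norm_eq_abs]
      congr 1; push_cast; rw [abs_of_pos] <;> linarith
    · rw [e1, e2, Real.log_pow, Real.log_pow, ← ofReal_norm, Real.norm_eq_abs]
      congr 1; push_cast; rw [abs_of_neg] <;> linarith
  rw [hval, intervalIntegral.integral_of_le h4.le, integral_Ioc_eq_integral_Ioo]
  refine (enorm_integral_le_lintegral_enorm _).trans ?_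
  refine le_trans ?_ (lintegral_mono_set (Ioo_subset_Icc_self.trans hsub))
  apply setLIntegral_mono' measurableSet_Ioo
  intro y hy
  have hp := hpos y (Ioo_subset_Icc_self hy)
  rw [indicator_of_mem (show γ y ∈ {w : ℂ | A < ‖w‖ ∧ ‖w‖ < B} from h7 y hy), ← ofReal_norm, ← ofReal_norm, ← ofReal_norm, ← ENNReal.ofReal_inv_of_pos hp,
    ← ENNReal.ofReal_mul (norm_nonneg _)]
  apply ENNReal.ofReal_le_ofReal
  show ‖inner ℝ (γ y) (γ' y) / ‖γ y‖ ^ 2‖ ≤ _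
  rw [norm_div, norm_pow, norm_norm]
  rw [← div_eq_mul_inv, div_le_div_iff₀ (by positivity) hp]
  have := norm_inner_le_norm (𝕜 := ℝ) (γ y) (γ' y)
  calc _ ≤ (‖γ y‖ * ‖γ' y‖) * ‖γ y‖ := by gcongr
    _ = _ := by ring


lemma amgm (x L w : ℝ) (hL : 0 < L) (hw : 0 < w) : x ≤ w / (2 * L) * x ^ 2 + L / (2 * w) := by
  have : w / (2 * L) * x ^ 2 + L / (2 * w) - x = (w * x - L) ^ 2 / (2 * L * w) := by
    field_simp; ring
  have h : 0 ≤ (w * x - L) ^ 2 / (2 * L * w) := by positivity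
  linarith

lemma seg_sq (γ γ' : ℝ → ℂ) (A B y1 y2 α β : ℝ) (h1 : y1 ∈ Ioo α β) (h2 : y2 ∈ Ioo α β)
    (hγ : ∀ y ∈ Ioo α β, HasDerivAt γ (γ' y) y) (hγ' : ContinuousOn γ' (Ioo α β))
    (hA : ‖γ y1‖ ≤ A) (hB : B ≤ ‖γ y2‖) (hA0 : 0 < A) (hAB : A < B) :
    ENNReal.ofReal ((Real.log B - Real.log A) / 2) ≤
      ENNReal.ofReal ((β - α) / (2 * (Real.log B - Real.log A))) *
      ∫⁻ y in Ioo α β, ‖γ' y‖ₑ ^ 2 * {w : ℂ | A < ‖w‖ ∧ ‖w‖ < B}.indicator (fun w => (‖w‖ₑ ^ 2)⁻¹) (γ y) := by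
  have h := seg_var γ γ' A B y1 y2 α β h1 h2 hγ hγ' hA hB hA0 hAB
  set L := Real.log B - Real.log A with hL
  have hL0 : 0 < L := by have := Real.log_lt_log hA0 hAB; linarith
  have hw : 0 < β - α := by linarith [h1.1, h1.2]
  have key : ENNReal.ofReal L ≤ ENNReal.ofReal ((β - α) / (2 * L)) *
      (∫⁻ y in Ioo α β, ‖γ' y‖ₑ ^ 2 * {w : ℂ | A < ‖w‖ ∧ ‖w‖ < B}.indicator (fun w => (‖w‖ₑ ^ 2)⁻¹) (γ y))
      + ENNReal.ofReal (L / 2) := by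
    refine h.trans ?_
    calc _ ≤ ∫⁻ y in Ioo α β, (ENNReal.ofReal ((β - α) / (2 * L)) * (‖γ' y‖ₑ ^ 2 * {w : ℂ | A < ‖w‖ ∧ ‖w‖ < B}.indicator (fun w => (‖w‖ₑ ^ 2)⁻¹) (γ y)) + ENNReal.ofReal (L / (2 * (β - α)))) := by
          apply lintegral_mono
          intro y
          show _ * _ ≤ _ * (_ * _) + _
          by_cases hm : γ y ∈ {w : ℂ | A < ‖w‖ ∧ ‖w‖ < B}
          · rw [indicator_of_mem hm, indicator_of_mem hm]
            have hp : 0 < ‖γ y‖ := hA0.trans hm.1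
            rw [← ofReal_norm, ← ofReal_norm, ← ENNReal.ofReal_pow (norm_nonneg _), ← ENNReal.ofReal_pow (norm_nonneg _),
              ← ENNReal.ofReal_inv_of_pos hp, ← ENNReal.ofReal_inv_of_pos (by positivity), ← ENNReal.ofReal_mul (by positivity),
              ← ENNReal.ofReal_mul (by positivity), ← ENNReal.ofReal_mul (by positivity), ← ENNReal.ofReal_add (by positivity) (by positivity)]
            apply ENNReal.ofReal_le_ofReal
            have := amgm (‖γ' y‖ * ‖γ y‖⁻¹) L (β - α) hL0 hw
            rwa [mul_pow, inv_pow] at this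
          · rw [indicator_of_notMem hm]; simp
      _ = _ := by
          rw [lintegral_add_right _ (by fun_prop), lintegral_const_mul' _ _ (by simp)]
          congr 1
          simp only [lintegral_const, MeasurableSet.univ, Measure.restrict_apply, univ_inter, Real.volume_Ioo]
          rw [← ENNReal.ofReal_mul (by positivity)]
          congr 1; field_simp
  have e : ENNReal.ofReal L = ENNReal.ofReal (L / 2) + ENNReal.ofReal (L / 2) := by
    rw [← ENNReal.ofReal_add (by positivity) (by positivity)]; congr 1; ring
  rw [e] at key
  exact (ENNReal.add_le_add_iff_right ENNReal.ofReal_ne_top).mp key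

def rect (t0 t1 y0 y1 : ℝ) : Set ℂ := {z | z.re ∈ Ioo t0 t1 ∧ z.im ∈ Ioo y0 y1}

lemma rect_open (t0 t1 y0 y1 : ℝ) : IsOpen (rect t0 t1 y0 y1) :=
  (isOpen_Ioo.preimage Complex.continuous_re).inter (isOpen_Ioo.preimage Complex.continuous_im)

lemma rect_int (t0 t1 y0 y1 : ℝ) (ψ : ℂ → ℝ≥0∞) (hψ : AEMeasurable ψ (volume.restrict (rect t0 t1 y0 y1))) :
    ∫⁻ z in rect t0 t1 y0 y1, ψ z = ∫⁻ t in Ioo t0 t1, ∫⁻ y in Ioo y0 y1, ψ (t + y * Complex.I) := by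
  have h1 := (Complex.volume_preserving_equiv_real_prod.symm)
  have e : Complex.measurableEquivRealProd.symm ⁻¹' (rect t0 t1 y0 y1) = Ioo t0 t1 ×ˢ Ioo y0 y1 := by
    ext q; simp [rect, Complex.measurableEquivRealProd]
  have h2 := h1.restrict_preimage (rect_open t0 t1 y0 y1).measurableSet
  rw [← h2.lintegral_comp_emb (MeasurableEquiv.measurableEmbedding _), e, Measure.volume_eq_prod, ← Measure.prod_restrict, lintegral_prod]
  · have : ∀ x y : ℝ, Complex.measurableEquivRealProd.symm (x, y) = x + y * Complex.I := by
      intro x y; apply Complex.ext <;> simp [Complex.measurableEquivRealProd]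
    simp_rw [this]
  · rw [Measure.prod_restrict, ← Measure.volume_eq_prod, ← e]
    exact hψ.comp_quasiMeasurePreserving h2.quasiMeasurePreserving

lemma lemV (G : ℂ → ℂ) (p : ℕ) (t0 t1 y0 y1 A B : ℝ) (hG : DifferentiableOn ℂ G (rect t0 t1 y0 y1))
    (hp : NV G (rect t0 t1 y0 y1) p) (hA : 0 < A) (hB : 0 < B) (ht : t0 < t1) (hy : y0 < y1)
    (hbig : 2 * Real.pi * p * (y1 - y0) < (Real.log B - Real.log A) * (t1 - t0)) :
    ∃ t ∈ Ioo t0 t1, (∀ y ∈ Ioo y0 y1, A ≤ ‖G (t + y * Complex.I)‖) ∨ (∀ y ∈ Ioo y0 y1, ‖G (t + y * Complex.I)‖ ≤ B) := by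
  by_contra hcon
  push Not at hcon
  have hL : 0 < Real.log B - Real.log A := by
    by_contra h
    have h1 : (Real.log B - Real.log A) * (t1 - t0) ≤ 0 := mul_nonpos_of_nonpos_of_nonneg (by linarith) (by linarith)
    have h2 : 0 ≤ 2 * Real.pi * p * (y1 - y0) := by have := Real.pi_pos; have : 0 < y1 - y0 := by linarith
                                                    positivity
    linarith
  have hAB : A < B := by
    by_contra h
    have := Real.log_le_log hB (not_lt.mp h)
    linarith
  set L := Real.log B - Real.log A with hLd
  set ann := {w : ℂ | A < ‖w‖ ∧ ‖w‖ < B} with hann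
  have hannm : MeasurableSet ann := by
    apply MeasurableSet.inter
    · exact measurableSet_lt measurable_const measurable_norm
    · exact measurableSet_lt measurable_norm measurable_const
  set φ : ℂ → ℝ≥0∞ := ann.indicator (fun w => (‖w‖ₑ ^ 2)⁻¹) with hφ
  have hφm : Measurable φ := Measurable.indicator (by fun_prop) hannm
  set Rr := rect t0 t1 y0 y1 with hR
  have hRo : IsOpen Rr := rect_open _ _ _ _
  have hd : ContinuousOn (deriv G) Rr := (hG.deriv hRo).continuousOn
  have harea := area_bound G Rr hRo hG p hp φ hφm
  have hφi : ∫⁻ w, φ w = ENNReal.ofReal (2 * Real.pi * L) := by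
    have := annulus_int (Real.log A) (Real.log B) (by linarith)
    rw [Real.exp_log hA, Real.exp_log hB] at this
    exact this
  have hmem : ∀ t ∈ Ioo t0 t1, ∀ y ∈ Ioo y0 y1, ((t : ℂ) + y * Complex.I) ∈ Rr := by
    intro t ht y hy
    simp only [hR, rect, mem_ofPred_eq]
    simpa using And.intro ht hy
  rw [rect_int] at harea
  swap
  · apply AEMeasurable.mul
    · exact ((hd.aemeasurable hRo.measurableSet).enorm).pow_const 2
    · exact hφm.comp_aemeasurable (hG.continuousOn.aemeasurable hRo.measurableSet)
  have hpt : ∀ t ∈ Ioo t0 t1, ENNReal.ofReal (L / 2) ≤ ENNReal.ofReal ((y1 - y0) / (2 * L)) *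
      ∫⁻ y in Ioo y0 y1, ‖deriv G (t + y * Complex.I)‖ₑ ^ 2 * φ (G (t + y * Complex.I)) := by
    intro t ht
    obtain ⟨⟨ya, hya, ha⟩, ⟨yb, hyb, hb⟩⟩ := hcon t ht
    have := seg_sq (fun y => G (t + y * Complex.I)) (fun y => deriv G (t + y * Complex.I) * Complex.I) A B ya yb y0 y1 hya hyb
      ?_ ?_ ha.le hb.le hA hAB
    · have hI : ‖Complex.I‖ₑ = 1 := by rw [← ofReal_norm]; simp
      simp only [enorm_mul, hI, mul_one] at this
      exact this
    · intro y hy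
      have h1 : HasDerivAt (fun y : ℝ => (t : ℂ) + y * Complex.I) Complex.I y := by
        simpa using ((Complex.ofRealCLM.hasDerivAt (x := y)).mul_const Complex.I).const_add (t : ℂ)
      exact (hG.differentiableAt (hRo.mem_nhds (hmem t ht y hy))).hasDerivAt.comp y h1
    · apply ContinuousOn.mul _ continuousOn_const
      exact hd.comp (by fun_prop) (fun y hy => hmem t ht y hy)
  have hint : ENNReal.ofReal (L / 2) * ENNReal.ofReal (t1 - t0) ≤ ENNReal.ofReal ((y1 - y0) / (2 * L)) * (p * ENNReal.ofReal (2 * Real.pi * L)) := by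
    calc _ = ∫⁻ t in Ioo t0 t1, ENNReal.ofReal (L / 2) := by simp
      _ ≤ ∫⁻ t in Ioo t0 t1, ENNReal.ofReal ((y1 - y0) / (2 * L)) *
        ∫⁻ y in Ioo y0 y1, ‖deriv G (t + y * Complex.I)‖ₑ ^ 2 * φ (G (t + y * Complex.I)) :=
          setLIntegral_mono' measurableSet_Ioo hpt
      _ ≤ _ := by
          rw [lintegral_const_mul' _ _ (by simp)]
          gcongr
          rw [← hφi]; exact harea
  have hpi := Real.pi_pos
  have hw : 0 < y1 - y0 := by linarith
  rw [← ENNReal.ofReal_natCast, ← ENNReal.ofReal_mul (by positivity), ← ENNReal.ofReal_mul (by positivity), ← ENNReal.ofReal_mul (by positivity),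
    ENNReal.ofReal_le_ofReal_iff (by positivity)] at hint
  have e : (y1 - y0) / (2 * L) * (p * (2 * Real.pi * L)) = Real.pi * p * (y1 - y0) := by field_simp
  rw [e] at hint
  linarith


lemma NV.comp {f g : ℂ → ℂ} {Ω Ω' : Set ℂ} {p : ℕ} (h : NV f Ω p) (hi : InjOn g Ω') (hm : MapsTo g Ω' Ω) :
    NV (fun z => f (g z)) Ω' p := by
  classical
  intro w S hS
  rw [← Finset.card_image_of_injOn (f := g) (hi.mono fun z hz => (hS z hz).1)]
  apply h w
  intro z hz
  obtain ⟨x, hx, rfl⟩ := Finset.mem_image.mp hz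
  exact ⟨hm (hS x hx).1, (hS x hx).2⟩

lemma lemH (G : ℂ → ℂ) (p : ℕ) (t0 t1 y0 y1 A B : ℝ) (hG : DifferentiableOn ℂ G (rect t0 t1 y0 y1))
    (hp : NV G (rect t0 t1 y0 y1) p) (hA : 0 < A) (hB : 0 < B) (ht : t0 < t1) (hy : y0 < y1)
    (h1 : ∀ y ∈ Ioo y0 y1, ∃ t ∈ Ioo t0 t1, ‖G (t + y * Complex.I)‖ < A)
    (h2 : ∀ y ∈ Ioo y0 y1, ∃ t ∈ Ioo t0 t1, B < ‖G (t + y * Complex.I)‖) :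
    (Real.log B - Real.log A) * (y1 - y0) ≤ 2 * Real.pi * p * (t1 - t0) := by
  by_contra hcon
  have hm : MapsTo (fun w : ℂ => -Complex.I * w) (rect (-y1) (-y0) t0 t1) (rect t0 t1 y0 y1) := by
    intro w hw
    obtain ⟨⟨a1, a2⟩, ⟨a3, a4⟩⟩ := hw
    refine ⟨⟨?_, ?_⟩, ⟨?_, ?_⟩⟩ <;> simp <;> linarith
  have hi : InjOn (fun w : ℂ => -Complex.I * w) (rect (-y1) (-y0) t0 t1) := by
    intro a _ b _ hab
    simpa using hab
  obtain ⟨t, ht, h⟩ := lemV (fun w => G (-Complex.I * w)) p (-y1) (-y0) t0 t1 A B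
    (hG.comp (by fun_prop) hm) (hp.comp hi hm) hA hB (by linarith) (by linarith) (by linarith)
  have ht' : -t ∈ Ioo y0 y1 := ⟨by linarith [ht.2], by linarith [ht.1]⟩
  have e : ∀ y : ℝ, -Complex.I * ((t : ℂ) + y * Complex.I) = (y : ℂ) + ((-t : ℝ) : ℂ) * Complex.I := by
    intro y
    push_cast
    linear_combination (-(y : ℂ)) * Complex.I_mul_I
  simp only [e] at h
  rcases h with h | h
  · obtain ⟨y, hy, hlt⟩ := h1 _ ht'
    linarith [h y hy]
  · obtain ⟨y, hy, hlt⟩ := h2 _ ht'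
    linarith [h y hy]

lemma lemC (f : ℂ → ℂ) (p : ℕ) (c : ℂ) (ρ0 ρ1 A B : ℝ) (hf : DifferentiableOn ℂ f (Metric.ball c ρ1))
    (hp : NV f (Metric.ball c ρ1) p) (hA : 0 < A) (hB : 0 < B) (h0 : 0 < ρ0) (h01 : ρ0 < ρ1)
    (hbig : 4 * Real.pi ^ 2 * p < (Real.log B - Real.log A) * (Real.log ρ1 - Real.log ρ0)) :
    ∃ ρ ∈ Ioo ρ0 ρ1, (∀ z ∈ Metric.sphere c ρ, A ≤ ‖f z‖) ∨ (∀ z ∈ Metric.sphere c ρ, ‖f z‖ ≤ B) := by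
  have hpi := Real.pi_pos
  have hm : MapsTo (fun w : ℂ => c + Complex.exp w) (rect (Real.log ρ0) (Real.log ρ1) (-Real.pi) Real.pi) (Metric.ball c ρ1) := by
    intro w hw
    simp only [Metric.mem_ball, dist_eq_norm, add_sub_cancel_left, Complex.norm_exp]
    exact (Real.lt_log_iff_exp_lt (h0.trans h01)).mp hw.1.2
  have hi : InjOn (fun w : ℂ => c + Complex.exp w) (rect (Real.log ρ0) (Real.log ρ1) (-Real.pi) Real.pi) := by
    intro a ha b hb hab
    have hab : c + Complex.exp a = c + Complex.exp b := hab
    exact Complex.exp_inj_of_neg_pi_lt_of_le_pi ha.2.1 ha.2.2.le hb.2.1 hb.2.2.le (add_left_cancel hab)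
  obtain ⟨t, ht, h⟩ := lemV (fun w => f (c + Complex.exp w)) p (Real.log ρ0) (Real.log ρ1) (-Real.pi) Real.pi A B
    (hf.comp (by fun_prop) hm) (hp.comp hi hm) hA hB (Real.log_lt_log h0 h01) (by linarith) (by nlinarith)
  have hρ : Real.exp t ∈ Ioo ρ0 ρ1 := ⟨(Real.log_lt_iff_lt_exp h0).mp ht.1, (Real.lt_log_iff_exp_lt (h0.trans h01)).mp ht.2⟩
  refine ⟨Real.exp t, hρ, ?_⟩
  have hcont : Continuous (fun y : ℝ => c + Complex.exp (t + y * Complex.I)) := by fun_prop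
  have hnorm : ∀ y : ℝ, ‖Complex.exp (t + y * Complex.I)‖ = Real.exp t := by
    intro y; rw [Complex.norm_exp]; simp
  have hfc : Continuous (fun y : ℝ => f (c + Complex.exp (t + y * Complex.I))) := by
    rw [← continuousOn_univ]
    apply hf.continuousOn.comp hcont.continuousOn
    intro y _
    simp only [Metric.mem_ball, dist_eq_norm, add_sub_cancel_left, hnorm]
    exact hρ.2
  have hcl : closure (Ioo (-Real.pi) Real.pi) = Icc (-Real.pi) Real.pi := closure_Ioo (by linarith)
  have hz : ∀ z ∈ Metric.sphere c (Real.exp t), ∃ y ∈ Icc (-Real.pi) Real.pi, z = c + Complex.exp (t + y * Complex.I) := by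
    intro z hz
    refine ⟨(z - c).arg, ⟨(Complex.neg_pi_lt_arg _).le, Complex.arg_le_pi _⟩, ?_⟩
    have := Complex.norm_mul_exp_arg_mul_I (z - c)
    rw [mem_sphere_iff_norm.mp hz] at this
    rw [Complex.exp_add, ← Complex.ofReal_exp, this]; ring
  rcases h with h | h
  · left
    intro z hzs
    obtain ⟨y, hy, rfl⟩ := hz z hzs
    rw [← hcl] at hy
    exact le_on_closure h continuousOn_const hfc.norm.continuousOn hy
  · right
    intro z hzs
    obtain ⟨y, hy, rfl⟩ := hz z hzs
    rw [← hcl] at hy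
    exact le_on_closure h hfc.norm.continuousOn continuousOn_const hy


noncomputable def st (u w : ℂ) : ℂ := u * ((Complex.exp w - 1) / (Complex.exp w + 1))

def strip : Set ℂ := {w | w.im ∈ Ioo (-(Real.pi / 2)) (Real.pi / 2)}

lemma strip_re {w : ℂ} (hw : w ∈ strip) : 0 < (Complex.exp w).re := by
  rw [Complex.exp_re]
  exact mul_pos (Real.exp_pos _) (Real.cos_pos_of_mem_Ioo hw)

lemma strip_ne {w : ℂ} (hw : w ∈ strip) : Complex.exp w + 1 ≠ 0 := by
  intro h
  have := congrArg Complex.re h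
  simp only [Complex.add_re, Complex.one_re, Complex.zero_re] at this
  linarith [strip_re hw]

lemma st_maps (u : ℂ) (hu : ‖u‖ = 1) : MapsTo (st u) strip (Metric.ball 0 1) := by
  intro w hw
  have h1 := strip_re hw
  have h2 : 0 < ‖Complex.exp w + 1‖ := norm_pos_iff.mpr (strip_ne hw)
  rw [mem_ball_zero_iff, st, norm_mul, hu, one_mul, norm_div, div_lt_one h2]
  rw [← sq_lt_sq₀ (norm_nonneg _) (norm_nonneg _), ← Complex.normSq_eq_norm_sq, ← Complex.normSq_eq_norm_sq,
    Complex.normSq_apply, Complex.normSq_apply]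
  simp only [Complex.add_re, Complex.sub_re, Complex.add_im, Complex.sub_im, Complex.one_re, Complex.one_im]
  nlinarith

lemma st_inj (u : ℂ) (hu : ‖u‖ = 1) : InjOn (st u) strip := by
  intro a ha b hb hab
  have hu0 : u ≠ 0 := by rintro rfl; simp at hu
  have h := mul_left_cancel₀ hu0 hab
  rw [div_eq_div_iff (strip_ne ha) (strip_ne hb)] at h
  have h' : Complex.exp a = Complex.exp b := by linear_combination h / 2
  have hpi := Real.pi_pos
  exact Complex.exp_inj_of_neg_pi_lt_of_le_pi (by linarith [ha.1]) (by linarith [ha.2]) (by linarith [hb.1]) (by linarith [hb.2]) h'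

lemma st_diff (u : ℂ) : DifferentiableOn ℂ (st u) strip := by
  unfold st
  apply DifferentiableOn.const_mul
  apply DifferentiableOn.div (by fun_prop) (by fun_prop)
  intro w hw
  exact strip_ne hw

lemma rect_strip (t0 t1 : ℝ) : rect t0 t1 (-(Real.pi / 2)) (Real.pi / 2) ⊆ strip := fun _ hw => hw.2

lemma NV.mono {f : ℂ → ℂ} {Ω Ω' : Set ℂ} {p : ℕ} (h : NV f Ω p) (hs : Ω' ⊆ Ω) : NV f Ω' p :=
  fun w S hS => h w S fun z hz => ⟨hs (hS z hz).1, (hS z hz).2⟩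

lemma ball_strip (T : ℝ) : Metric.ball (T : ℂ) 1 ⊆ strip := by
  intro w hw
  have h1 := Complex.abs_im_le_norm (w - T)
  rw [mem_ball_iff_norm] at hw
  have h2 : |w.im| < 1 := by simpa using h1.trans_lt hw
  have := Real.pi_gt_three
  have h3 := abs_lt.mp h2
  exact ⟨by linarith [h3.1], by linarith [h3.2]⟩

lemma logx (B : ℝ) (hB : 0 < B) (x : ℝ) : Real.log (B * Real.exp x) = Real.log B + x := by
  rw [Real.log_mul hB.ne' (Real.exp_pos _).ne', Real.log_exp]

lemma growth (f : ℂ → ℂ) (p : ℕ) (hp1 : 1 ≤ p) (M : ℝ) (hM : 0 < M) (hf : DifferentiableOn ℂ f (Metric.ball 0 1))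
    (hp : NV f (Metric.ball 0 1) p) (hmin : ∀ ρ ∈ Ioo (1/4 : ℝ) (1/2), ∃ z : ℂ, ‖z‖ = ρ ∧ ‖f z‖ ≤ M)
    (u : ℂ) (hu : ‖u‖ = 1) (T : ℝ) (hT : 0 ≤ T) :
    ‖f (st u T)‖ ≤ 64 * Real.exp (402 * p) * M * Real.exp (2 * p * T) := by
  have hpi := Real.pi_pos
  have hpi3 := Real.pi_gt_three
  have hpi4 : Real.pi < 3.15 := Real.pi_lt_d2
  have hpi2 : Real.pi ^ 2 < 10 := by nlinarith
  have hp1' : (1:ℝ) ≤ p := by exact_mod_cast hp1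
  have hl2 := Real.log_two_gt_d9
  have hE := Real.exp_pos (100 * p)
  rcases eq_or_lt_of_le (norm_nonneg (f (st u T))) with hN | hN
  · rw [← hN]; positivity
  set N := ‖f (st u T)‖ with hNd
  -- bottom
  obtain ⟨ρ, hρ, hbot⟩ : ∃ ρ ∈ Ioo (1/4 : ℝ) (1/2), ∀ z ∈ Metric.sphere (0:ℂ) ρ, ‖f z‖ ≤ 2 * M * Real.exp (100 * p) := by
    have hsub : Metric.ball (0:ℂ) (1/2) ⊆ Metric.ball 0 1 := Metric.ball_subset_ball (by norm_num)
    obtain ⟨ρ, hρ, h⟩ := lemC f p 0 (1/4) (1/2) (2 * M) (2 * M * Real.exp (100 * p)) (hf.mono hsub) (hp.mono hsub)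
      (by positivity) (by positivity) (by norm_num) (by norm_num) (by
        rw [logx _ (by positivity)]
        have : Real.log (1/2) - Real.log (1/4) = Real.log 2 := by
          rw [← Real.log_div (by norm_num) (by norm_num)]; norm_num
        rw [this]
        nlinarith)
    refine ⟨ρ, hρ, ?_⟩
    rcases h with h | h
    · obtain ⟨z, hz, hz2⟩ := hmin ρ hρ
      have := h z (by simpa using hz)
      linarith
    · exact h
  set B1 := 2 * M * Real.exp (100 * p) with hB1
  have hB1p : 0 < B1 := by positivity
  have hbot2 : ∀ z : ℂ, ‖z‖ ≤ 1/4 → ‖f z‖ ≤ B1 := by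
    intro z hz
    have hρ0 : ρ ≠ 0 := by linarith [hρ.1]
    have hcb : Metric.closedBall (0:ℂ) ρ ⊆ Metric.ball 0 1 := Metric.closedBall_subset_ball (by linarith [hρ.2])
    refine Complex.norm_le_of_forall_mem_frontier_norm_le (U := Metric.ball (0:ℂ) ρ) Metric.isBounded_ball ?_ ?_ ?_
    · apply DifferentiableOn.diffContOnCl
      rw [closure_ball _ hρ0]
      exact hf.mono hcb
    · rw [frontier_ball _ hρ0]; exact hbot
    · rw [closure_ball _ hρ0]; simp; linarith [hρ.1]
  set g : ℂ → ℂ := fun w => f (st u w) with hg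
  have hgd : DifferentiableOn ℂ g strip := hf.comp (st_diff u) (st_maps u hu)
  have hgp : NV g strip p := hp.comp (st_inj u hu) (st_maps u hu)
  have h0m : (0:ℝ) ∈ Ioo (-(Real.pi/2)) (Real.pi/2) := ⟨by linarith, by linarith⟩
  obtain ⟨tL, htL, hL⟩ : ∃ t ∈ Ioo (0:ℝ) (1/2), ∀ y ∈ Ioo (-(Real.pi / 2)) (Real.pi / 2), ‖g (t + y * Complex.I)‖ ≤ 2 * B1 * Real.exp (100 * p) := by
    obtain ⟨t, ht, h⟩ := lemV g p 0 (1/2) (-(Real.pi/2)) (Real.pi/2) (2 * B1) (2 * B1 * Real.exp (100 * p))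
      (hgd.mono (rect_strip _ _)) (hgp.mono (rect_strip _ _)) (by positivity) (by positivity) (by norm_num) (by linarith) (by
        rw [logx _ (by positivity)]; nlinarith)
    refine ⟨t, ht, ?_⟩
    rcases h with h | h
    · have h1 := h 0 h0m
      have h2 : ‖g (t + (0:ℝ) * Complex.I)‖ ≤ B1 := by
        apply hbot2
        have e : (t : ℂ) + (0:ℝ) * Complex.I = t := by simp
        rw [e, st, norm_mul, hu, one_mul]
        have e2 : (Complex.exp t - 1) / (Complex.exp t + 1) = (((Real.exp t - 1) / (Real.exp t + 1) : ℝ) : ℂ) := by push_cast; rfl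
        have h5 : 1 ≤ Real.exp t := Real.one_le_exp ht.1.le
        rw [e2, Complex.norm_real, Real.norm_of_nonneg (by apply div_nonneg <;> linarith), div_le_iff₀ (by linarith)]
        have h6 : Real.exp t ≤ 5/3 := by
          have h7 : Real.exp t ≤ Real.exp (1/2) := Real.exp_le_exp.mpr ht.2.le
          have h8 : Real.exp (1/2) ^ 2 = Real.exp 1 := by rw [← Real.exp_nat_mul]; norm_num
          have h9 := Real.exp_one_lt_d9
          have h10 := Real.exp_pos (1/2)
          nlinarith
        linarith
      linarith
    · exact h
  set B2 := 2 * B1 * Real.exp (100 * p) with hB2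
  have hB2p : 0 < B2 := by positivity
  -- top
  have hEn : Real.exp (-(100 * p)) ≤ 1 := by rw [Real.exp_le_one_iff]; linarith
  have hEnp := Real.exp_pos (-(100 * (p:ℝ)))
  obtain ⟨ρ', hρ', htop⟩ : ∃ ρ ∈ Ioo (1/2 : ℝ) 1, ∀ z ∈ Metric.sphere (T:ℂ) ρ, N / 2 * Real.exp (-(100 * p)) ≤ ‖g z‖ := by
    obtain ⟨ρ, hρ, h⟩ := lemC g p T (1/2) 1 (N / 2 * Real.exp (-(100 * p))) (N / 2) (hgd.mono (ball_strip T)) (hgp.mono (ball_strip T))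
      (by positivity) (by positivity) (by norm_num) (by norm_num) (by
        rw [logx _ (by positivity)]
        have : Real.log 1 - Real.log (1/2) = Real.log 2 := by
          rw [← Real.log_div (by norm_num) (by norm_num)]; norm_num
        rw [this]
        nlinarith)
    refine ⟨ρ, hρ, ?_⟩
    rcases h with h | h
    · exact h
    · exfalso
      have hρ0 : ρ ≠ 0 := by linarith [hρ.1]
      have : N ≤ N / 2 := by
        refine Complex.norm_le_of_forall_mem_frontier_norm_le (f := g) (z := (T:ℂ)) (U := Metric.ball (T:ℂ) ρ) Metric.isBounded_ball ?_ ?_ ?_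
        · apply DifferentiableOn.diffContOnCl
          rw [closure_ball _ hρ0]
          exact hgd.mono ((Metric.closedBall_subset_ball hρ.2).trans (ball_strip T))
        · rw [frontier_ball _ hρ0]; exact h
        · rw [closure_ball _ hρ0]; simp; linarith [hρ.1]
      linarith
  set N1 := N / 2 * Real.exp (-(100 * p)) with hN1
  have hN1p : 0 < N1 := by positivity
  obtain ⟨tR, htR, hR⟩ : ∃ t ∈ Ioo T (T + 1/2), ∀ y ∈ Ioo (-(Real.pi / 2)) (Real.pi / 2), N1 / 2 * Real.exp (-(100 * p)) ≤ ‖g (t + y * Complex.I)‖ := by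
    obtain ⟨t, ht, h⟩ := lemV g p T (T + 1/2) (-(Real.pi/2)) (Real.pi/2) (N1 / 2 * Real.exp (-(100 * p))) (N1 / 2)
      (hgd.mono (rect_strip _ _)) (hgp.mono (rect_strip _ _)) (by positivity) (by positivity) (by linarith) (by linarith) (by
        rw [logx _ (by positivity)]; nlinarith)
    refine ⟨t, ht, ?_⟩
    rcases h with h | h
    · exact h
    · exfalso
      have hsq : 0 ≤ ρ' ^ 2 - (t - T) ^ 2 := by nlinarith [ht.1, ht.2, hρ'.1]
      have hmem : ((t:ℂ) + (Real.sqrt (ρ' ^ 2 - (t - T) ^ 2) : ℝ) * Complex.I) ∈ Metric.sphere (T:ℂ) ρ' := by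
        rw [mem_sphere_iff_norm, ← sq_eq_sq₀ (norm_nonneg _) (by linarith [hρ'.1]), ← Complex.normSq_eq_norm_sq, Complex.normSq_apply]
        simp
        rw [← pow_two (√_), Real.sq_sqrt hsq]; ring
      have h1 := htop _ hmem
      have h2 := h (Real.sqrt (ρ' ^ 2 - (t - T) ^ 2)) ⟨by linarith [Real.sqrt_nonneg (ρ' ^ 2 - (t - T) ^ 2)], by
        have : Real.sqrt (ρ' ^ 2 - (t - T) ^ 2) ≤ 1 := by
          exact Real.sqrt_le_iff.mpr ⟨by norm_num, by nlinarith [hρ'.1, hρ'.2, sq_nonneg (t - T)]⟩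
        linarith⟩
      linarith
  set N2 := N1 / 2 * Real.exp (-(100 * p)) with hN2
  have hN2p : 0 < N2 := by positivity
  have hfin := lemH g p 0 (T + 1) (-(Real.pi/2)) (Real.pi/2) (2 * B2) (N2 / 2) (hgd.mono (rect_strip _ _)) (hgp.mono (rect_strip _ _))
    (by positivity) (by positivity) (by linarith) (by linarith)
    (fun y hy => ⟨tL, ⟨htL.1, by linarith [htL.2]⟩, by linarith [hL y hy]⟩)
    (fun y hy => ⟨tR, ⟨by linarith [htR.1], by linarith [htR.2]⟩, by linarith [hR y hy]⟩)
  have hfin2 : Real.log (N2 / 2) ≤ Real.log (2 * B2) + 2 * p * (T + 1) := by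
    have : (Real.log (N2 / 2) - Real.log (2 * B2)) * Real.pi ≤ (2 * p * (T + 1)) * Real.pi := by linarith
    have := le_of_mul_le_mul_right this hpi
    linarith
  rw [← logx _ (by positivity), Real.log_le_log_iff (by positivity) (by positivity)] at hfin2
  have hc : Real.exp (-(100 * (p:ℝ))) * Real.exp (100 * p) = 1 := by rw [← Real.exp_add]; simp
  calc N = 8 * (N2 / 2) * Real.exp (100 * p) ^ 2 := by
        rw [hN2, hN1]
        linear_combination (-N) * (Real.exp (-(100 * (p:ℝ))) * Real.exp (100 * p) + 1) * hc
    _ ≤ 8 * (2 * B2 * Real.exp (2 * p * (T + 1))) * Real.exp (100 * p) ^ 2 := by gcongr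
    _ = _ := by
        rw [hB2, hB1]
        have e1 : Real.exp (402 * p) = Real.exp (100 * p) ^ 4 * Real.exp (2 * p) := by
          rw [← Real.exp_nat_mul, ← Real.exp_add]; congr 1; push_cast; ring
        have e2 : Real.exp (2 * p * (T + 1)) = Real.exp (2 * p * T) * Real.exp (2 * p) := by
          rw [← Real.exp_add]; congr 1; ring
        rw [e1, e2]; ring


lemma enat_sum_le {ι : Type*} (f : ι → ℕ∞) (s : Finset ι) : ∑ x ∈ s, f x ≤ ∑' x, f x := by
  have : HasSum f (⨆ t : Finset ι, ∑ x ∈ t, f x) :=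
    tendsto_atTop_iSup (fun a b h => Finset.sum_le_sum_of_subset h)
  rw [this.tsum_eq]
  exact le_iSup (fun t : Finset ι => ∑ x ∈ t, f x) s

lemma mult_le (U : Set ℂ) (hU : IsOpen U) (g G : ℂ → ℂ) (M : Multiset ℂ) (hM : ∀ x ∈ M, x ∈ U)
    (hG : DifferentiableOn ℂ G U) (h : ∀ z ∈ U, g z = (M.map (fun x => z - x)).prod * G z) :
    (Multiset.card M : ℕ∞) ≤ solCount g U := by
  classical
  have hgd : DifferentiableOn ℂ g U := by
    have : DifferentiableOn ℂ (fun z => (M.map (fun x => z - x)).prod * G z) U := by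
      refine DifferentiableOn.mul ?_ hG
      refine Differentiable.differentiableOn ?_
      clear h hM
      induction M using Multiset.induction with
      | empty => simp
      | cons a M ih => simp only [Multiset.map_cons, Multiset.prod_cons]; fun_prop
    exact this.congr h
  have hord : ∀ x ∈ M.toFinset, (M.count x : ℕ∞) ≤ ordAt g x := by
    intro x hx
    have hx' : x ∈ U := hM x (by simpa using hx)
    have hga : AnalyticAt ℂ g x := hgd.analyticAt (hU.mem_nhds hx')
    unfold ordAt
    rw [dif_pos hga, natCast_le_analyticOrderAt hga]
    refine ⟨fun z => ((M.filter (fun y => ¬ x = y)).map (fun x => z - x)).prod * G z, ?_, ?_⟩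
    · refine AnalyticAt.mul ?_ (hG.analyticAt (hU.mem_nhds hx'))
      generalize M.filter (fun y => ¬ x = y) = M'
      induction M' using Multiset.induction with
      | empty => simp; exact analyticAt_const
      | cons a M ih =>
        simp only [Multiset.map_cons, Multiset.prod_cons]
        exact (analyticAt_id.sub analyticAt_const).mul ih
    · filter_upwards [hU.mem_nhds hx'] with z hz
      rw [h z hz]
      conv_lhs => rw [← Multiset.filter_add_not (fun y => x = y) M]
      rw [Multiset.map_add, Multiset.prod_add, Multiset.filter_eq]
      simp [mul_assoc]
  have h1 : (Multiset.card M : ℕ∞) = ∑ x ∈ M.toFinset, (M.count x : ℕ∞) := by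
    rw [← Multiset.toFinset_sum_count_eq]; push_cast; rfl
  rw [h1]
  have hsub : ∀ x ∈ M.toFinset, x ∈ U := fun x hx => hM x (by simpa using hx)
  calc ∑ x ∈ M.toFinset, (M.count x : ℕ∞) ≤ ∑ x ∈ M.toFinset, ordAt g x := Finset.sum_le_sum hord
    _ = ∑ x ∈ M.toFinset.subtype (· ∈ U), ordAt g x := (Finset.sum_subtype_of_mem (ordAt g) hsub).symm
    _ ≤ _ := enat_sum_le (fun x : U => ordAt g x) _

def WV (F : ℂ → ℂ) (p : ℕ) : Prop := ∀ c : ℂ, ∀ M : Multiset ℂ, (∀ x ∈ M, x ∈ Metric.ball (0:ℂ) 1) → ∀ G : ℂ → ℂ,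
  DifferentiableOn ℂ G (Metric.ball 0 1) → (∀ z ∈ Metric.ball (0:ℂ) 1, F z - c = (M.map (fun x => z - x)).prod * G z) →
  Multiset.card M ≤ p

lemma factor_one (U : Set ℂ) (hU : IsOpen U) (G : ℂ → ℂ) (hG : DifferentiableOn ℂ G U) (x : ℂ) (hx : x ∈ U) (h0 : G x = 0) :
    ∃ H : ℂ → ℂ, DifferentiableOn ℂ H U ∧ ∀ z, G z = (z - x) * H z := by
  refine ⟨dslope G x, (Complex.differentiableOn_dslope (hU.mem_nhds hx)).2 hG, fun z => ?_⟩
  have := sub_smul_dslope G x z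
  rw [smul_eq_mul, h0, sub_zero] at this
  exact this.symm

lemma WV.nv {F : ℂ → ℂ} {p : ℕ} (hF : DifferentiableOn ℂ F (Metric.ball 0 1)) (h : WV F p) : NV F (Metric.ball 0 1) p := by
  classical
  intro w S hS
  have key : ∀ S : Finset ℂ, (∀ z ∈ S, z ∈ Metric.ball (0:ℂ) 1 ∧ F z = w) → ∃ G : ℂ → ℂ, DifferentiableOn ℂ G (Metric.ball 0 1) ∧
      ∀ z, F z - w = (S.val.map (fun x => z - x)).prod * G z := by
    intro S
    induction S using Finset.induction_on with
    | empty => intro _; exact ⟨fun z => F z - w, hF.sub_const w, by simp⟩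
    | insert a S ha ih =>
      intro hS
      obtain ⟨G, hG, hGe⟩ := ih (fun z hz => hS z (by simp [hz]))
      obtain ⟨haU, haw⟩ := hS a (by simp)
      have h0 : G a = 0 := by
        have := hGe a
        rw [haw, sub_self] at this
        rcases mul_eq_zero.1 this.symm with h | h
        · exfalso
          rw [Multiset.prod_eq_zero_iff] at h
          simp only [Multiset.mem_map] at h
          obtain ⟨b, hb, hb2⟩ := h
          rw [sub_eq_zero] at hb2
          exact ha (by rw [hb2]; exact hb)
        · exact h
      obtain ⟨H, hH, hHe⟩ := factor_one _ Metric.isOpen_ball G hG a haU h0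
      refine ⟨H, hH, fun z => ?_⟩
      rw [hGe, hHe, Finset.insert_val, Multiset.ndinsert_of_notMem (by simpa using ha)]
      simp only [Multiset.map_cons, Multiset.prod_cons]; ring
  obtain ⟨G, hG, hGe⟩ := key S hS
  exact h w S.val (fun x hx => (hS x hx).1) G hG (fun z _ => hGe z)

lemma maxfac {F : ℂ → ℂ} {p : ℕ} (hF : DifferentiableOn ℂ F (Metric.ball 0 1)) (h : WV F p) :
    ∃ M : Multiset ℂ, (∀ x ∈ M, x ∈ Metric.ball (0:ℂ) 1) ∧ Multiset.card M ≤ p ∧ ∃ G : ℂ → ℂ, DifferentiableOn ℂ G (Metric.ball 0 1) ∧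
      (∀ z ∈ Metric.ball (0:ℂ) 1, F z = (M.map (fun x => z - x)).prod * G z) ∧ ∀ z ∈ Metric.ball (0:ℂ) 1, G z ≠ 0 := by
  classical
  let Q : ℕ → Prop := fun n => ∃ M : Multiset ℂ, (∀ x ∈ M, x ∈ Metric.ball (0:ℂ) 1) ∧ Multiset.card M = n ∧ ∃ G : ℂ → ℂ,
      DifferentiableOn ℂ G (Metric.ball 0 1) ∧ (∀ z ∈ Metric.ball (0:ℂ) 1, F z = (M.map (fun x => z - x)).prod * G z)
  have hQ : ∀ n, Q n → n ≤ p := by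
    rintro n ⟨M, hM, hn, G, hG, hGe⟩
    rw [← hn]
    exact h 0 M hM G hG (fun z hz => by rw [sub_zero]; exact hGe z hz)
  have hQ0 : Q 0 := ⟨0, by simp, by simp, F, hF, by simp⟩
  obtain ⟨M, hM, hn, G, hG, hGe⟩ := Nat.findGreatest_spec (P := Q) (Nat.zero_le p) hQ0
  have hle : Multiset.card M ≤ p := hQ _ ⟨M, hM, rfl, G, hG, hGe⟩
  refine ⟨M, hM, hle, G, hG, hGe, ?_⟩
  intro x hx h0
  obtain ⟨H, hH, hHe⟩ := factor_one _ Metric.isOpen_ball G hG x hx h0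
  have h2 : Q (Multiset.card M + 1) := by
    refine ⟨x ::ₘ M, ?_, by simp, H, hH, fun z hz => ?_⟩
    · intro y hy
      rcases Multiset.mem_cons.1 hy with rfl | hy
      · exact hx
      · exact hM y hy
    · rw [hGe z hz, hHe z]
      simp only [Multiset.map_cons, Multiset.prod_cons]; ring
  have := Nat.le_findGreatest (hQ _ h2) h2
  omega


lemma fps (b : ℕ → ℂ) (F : ℂ → ℂ) (h : ∀ z ∈ Metric.ball (0:ℂ) 1, HasSum (fun k => b k * z ^ k) (F z)) :
    HasFPowerSeriesOnBall F (FormalMultilinearSeries.ofScalars ℂ b) 0 1 := by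
  refine ⟨?_, by norm_num, ?_⟩
  · refine ENNReal.le_of_forall_nnreal_lt (fun r hr => ?_)
    have hr1 : (r:ℝ) < 1 := by exact_mod_cast hr
    refine FormalMultilinearSeries.le_radius_of_tendsto _ (l := 0) ?_
    have := (h (r:ℂ) (by simpa using hr1)).summable.tendsto_atTop_zero.norm
    simpa [FormalMultilinearSeries.ofScalars_norm] using this
  · intro y hy
    have hy' : y ∈ Metric.ball (0:ℂ) 1 := by
      rw [← Metric.eball_ofReal]; simpa using hy
    simpa [FormalMultilinearSeries.ofScalars_apply_eq, mul_comm] using h y hy'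

lemma fps_diff (b : ℕ → ℂ) (F : ℂ → ℂ) (h : ∀ z ∈ Metric.ball (0:ℂ) 1, HasSum (fun k => b k * z ^ k) (F z)) :
    DifferentiableOn ℂ F (Metric.ball 0 1) := by
  have := (fps b F h).differentiableOn
  rw [← Metric.eball_ofReal]; simpa using this

lemma fps_coeff (b : ℕ → ℂ) (F : ℂ → ℂ) (h : ∀ z ∈ Metric.ball (0:ℂ) 1, HasSum (fun k => b k * z ^ k) (F z)) (n : ℕ) :
    iteratedDeriv n F 0 = n.factorial * b n := by
  have := (fps b F h).factorial_smul (1:ℂ) n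
  rw [iteratedDeriv_eq_iteratedFDeriv, ← this]
  simp

lemma poly_hasSum (Q : Polynomial ℂ) (z : ℂ) : HasSum (fun k => Q.coeff k * z ^ k) (Q.eval z) := by
  rw [Polynomial.eval_eq_sum_range]
  apply hasSum_sum_of_ne_finset_zero
  intro k hk
  rw [Polynomial.coeff_eq_zero_of_natDegree_lt, zero_mul]
  simpa using hk

lemma minlem (b : ℕ → ℂ) (F : ℂ → ℂ) (h : ∀ z ∈ Metric.ball (0:ℂ) 1, HasSum (fun k => b k * z ^ k) (F z)) (hb0 : b 0 = 0)
    (p : ℕ) (hW : WV F p) (μ : ℝ) (hμ : 0 < μ) (hb : ∀ i, 1 ≤ i → i ≤ p → ‖b i‖ ≤ μ) (ρ : ℝ) (hρ : ρ ∈ Ioo (1/4:ℝ) (1/2)) :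
    ∃ z : ℂ, ‖z‖ = ρ ∧ ‖F z‖ ≤ (p * 8 ^ p + 1) * μ := by
  have hF := fps_diff b F h
  obtain ⟨M, hM, hMp, G, hG, hFG, hG0⟩ := maxfac hF hW
  by_contra! hcon
  set U := Metric.ball (0:ℂ) 1 with hU
  have h0U : (0:ℂ) ∈ U := by simp [hU]
  have hUn : U ∈ 𝓝 (0:ℂ) := Metric.isOpen_ball.mem_nhds h0U
  set d := Multiset.card M with hd
  let Q : Polynomial ℂ := (M.map (fun x => Polynomial.X - Polynomial.C x)).prod
  have hQe : ∀ z, Q.eval z = (M.map (fun x => z - x)).prod := by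
    intro z
    simp [Q, Polynomial.eval_multiset_prod]
  have hQc : Q.coeff d = 1 := by
    have hm : Q.Monic := Polynomial.monic_multiset_prod_of_monic _ _ (fun x _ => Polynomial.monic_X_sub_C x)
    have hn : Q.natDegree = d := Polynomial.natDegree_multiset_prod_X_sub_C_eq_card M
    rw [← hn]; exact hm
  let P : ℂ → ℂ := fun z => ∑ k ∈ Finset.range (p+1), b k * z ^ k
  have hPd : Differentiable ℂ P := by fun_prop
  have hPb : ∀ z, ‖z‖ ≤ 1 → ‖P z‖ ≤ p * μ := by
    intro z hz
    simp only [P]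
    rw [Finset.sum_range_succ', hb0]
    simp only [zero_mul, add_zero]
    refine (norm_sum_le _ _).trans ?_
    refine (Finset.sum_le_card_nsmul _ _ μ ?_).trans ?_
    · intro i hi
      rw [norm_mul, norm_pow]
      have h1 := hb (i+1) (by omega) (by have := Finset.mem_range.1 hi; omega)
      have h2 : ‖z‖ ^ (i+1) ≤ 1 := pow_le_one₀ (norm_nonneg _) hz
      calc _ ≤ μ * 1 := by gcongr
        _ = μ := mul_one _
    · simp
  let D : ℂ → ℂ := fun z => F z - P z
  have hDd : DifferentiableOn ℂ D U := hF.sub hPd.differentiableOn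
  have hDs : ∀ z ∈ U, HasSum (fun k => (if k < p + 1 then 0 else b k) * z ^ k) (D z) := by
    intro z hz
    have h2 : HasSum (fun k => (if k < p + 1 then b k else 0) * z ^ k) (P z) := by
      have : P z = ∑ k ∈ Finset.range (p+1), (if k < p + 1 then b k else 0) * z ^ k := by
        refine Finset.sum_congr rfl (fun k hk => ?_)
        rw [if_pos (Finset.mem_range.1 hk)]
      rw [this]
      apply hasSum_sum_of_ne_finset_zero
      intro k hk
      rw [if_neg (by simpa using hk), zero_mul]
    refine ((h z hz).sub h2).congr_fun ?_ |> id
    intro k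
    split_ifs <;> simp
  have hDa : AnalyticAt ℂ D 0 := hDd.analyticAt hUn
  have hDo : ((p+1 : ℕ) : ℕ∞) ≤ analyticOrderAt D 0 := by
    rw [natCast_le_analyticOrderAt_iff_iteratedDeriv_eq_zero hDa]
    intro i hi
    rw [fps_coeff _ D hDs i, if_pos hi, mul_zero]
  have hGi : DifferentiableOn ℂ (fun z => (G z)⁻¹) U := hG.inv hG0
  let E : ℂ → ℂ := D * (fun z => (G z)⁻¹)
  have hGia : AnalyticAt ℂ (fun z => (G z)⁻¹) 0 := hGi.analyticAt hUn
  have hEa : AnalyticAt ℂ E 0 := hDa.mul hGia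
  have hEo : ((p+1 : ℕ) : ℕ∞) ≤ analyticOrderAt E 0 := by
    rw [analyticOrderAt_mul hDa hGia]
    exact hDo.trans le_self_add
  have hEd : iteratedDeriv d E 0 = 0 :=
    (natCast_le_analyticOrderAt_iff_iteratedDeriv_eq_zero hEa).1 hEo d (by omega)
  have hQd : iteratedDeriv d (fun z => Q.eval z) 0 = d.factorial := by
    rw [fps_coeff Q.coeff _ (fun z _ => poly_hasSum Q z) d, hQc, mul_one]
  let φ : ℂ → ℂ := fun z => P z * (G z)⁻¹
  have hφd : DifferentiableOn ℂ φ U := hPd.differentiableOn.mul hGi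
  have hφ : iteratedDeriv d φ 0 = d.factorial := by
    have he : φ =ᶠ[𝓝 0] (fun z => Q.eval z) - E := by
      filter_upwards [hUn] with z hz
      have := hFG z hz
      have hne := hG0 z hz
      simp only [φ, E, D, Pi.sub_apply, Pi.mul_apply, hQe]
      rw [this]
      field_simp
      ring
    rw [he.iteratedDeriv_eq d, iteratedDeriv_sub, hQd, hEd, sub_zero]
    · exact ((fps_diff Q.coeff _ (fun z _ => poly_hasSum Q z)).analyticAt hUn).contDiffAt
    · exact hEa.contDiffAt
  have hρ0 : 0 < ρ := by linarith [hρ.1]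
  have hK : (0:ℝ) < (p * 8 ^ p + 1) * μ := by positivity
  have hsub : Metric.closedBall (0:ℂ) ρ ⊆ U := Metric.closedBall_subset_ball (by linarith [hρ.2])
  have hc := Complex.norm_iteratedDeriv_le_of_forall_mem_sphere_norm_le (C := p * μ * 2 ^ d / ((p * 8 ^ p + 1) * μ)) d hρ0
    (hφd.diffContOnCl_ball hsub) (by
      intro z hz
      have hzU : z ∈ U := hsub (Metric.sphere_subset_closedBall hz)
      have hzn : ‖z‖ = ρ := by simpa using hz
      have h1 := hcon z hzn
      have h2 : ‖F z‖ ≤ 2 ^ d * ‖G z‖ := by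
        rw [hFG z hzU, norm_mul]
        gcongr
        rw [hd]
        clear_value d
        have : ∀ M : Multiset ℂ, (∀ x ∈ M, x ∈ U) → ‖(M.map (fun x => z - x)).prod‖ ≤ 2 ^ (Multiset.card M) := by
          intro M
          induction M using Multiset.induction with
          | empty => simp
          | cons a M ih =>
            intro hM
            simp only [Multiset.map_cons, Multiset.prod_cons, Multiset.card_cons, norm_mul]
            rw [pow_succ, mul_comm]
            have h3 := ih (fun x hx => hM x (Multiset.mem_cons_of_mem hx))
            have h4 : a ∈ U := hM a (Multiset.mem_cons_self a M)
            have h5 : ‖a‖ < 1 := by simpa [hU] using h4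
            have h6 : ‖z - a‖ ≤ 2 := (norm_sub_le _ _).trans (by linarith [hρ.2])
            gcongr
        exact this M hM
      have hGp : 0 < ‖G z‖ := norm_pos_iff.2 (hG0 z hzU)
      simp only [φ]
      rw [norm_mul, norm_inv, le_div_iff₀ hK]
      have h7 := hPb z (by linarith [hρ.2])
      calc ‖P z‖ * ‖G z‖⁻¹ * ((p * 8 ^ p + 1) * μ) ≤ (p * μ) * ‖G z‖⁻¹ * (2 ^ d * ‖G z‖) := by
            exact mul_le_mul (by gcongr) (by linarith) hK.le (by positivity)
        _ = _ := by field_simp)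
  rw [hφ] at hc
  have hf0 : (0:ℝ) < d.factorial := by exact_mod_cast Nat.factorial_pos d
  rw [Complex.norm_natCast, mul_div_assoc] at hc
  have hc2 : 1 ≤ p * μ * 2 ^ d / ((p * 8 ^ p + 1) * μ) / ρ ^ d := by
    by_contra! hlt
    nlinarith
  rw [div_div, le_div_iff₀ (by positivity), one_mul] at hc2
  have h8 : (1/4:ℝ) ^ d ≤ ρ ^ d := by gcongr; exact hρ.1.le
  have h9 : (p * 8 ^ p + 1) * μ * (1/4:ℝ) ^ d ≤ p * μ * 2 ^ d := le_trans (by gcongr) hc2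
  have h10 : (8:ℝ) ^ d = 2 ^ d * 4 ^ d := by rw [← mul_pow]; norm_num
  have h11 : (8:ℝ) ^ d ≤ 8 ^ p := pow_le_pow_right₀ (by norm_num) hMp
  rw [one_div, inv_pow, ← div_eq_mul_inv, div_le_iff₀ (by positivity), mul_assoc, ← h10] at h9
  have h12 : (p:ℝ) * μ * 8 ^ d ≤ p * μ * 8 ^ p := by gcongr
  nlinarith


lemma coeff_bound (b : ℕ → ℂ) (F : ℂ → ℂ) (h : ∀ z ∈ Metric.ball (0:ℂ) 1, HasSum (fun k => b k * z ^ k) (F z)) (hb0 : b 0 = 0)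
    (p : ℕ) (hp : 1 ≤ p) (hW : WV F p) (μ : ℝ) (hμ : 0 < μ) (hb : ∀ i, 1 ≤ i → i ≤ p → ‖b i‖ ≤ μ) (k : ℕ) (hk : 2 ≤ k) :
    ‖b k‖ ≤ 8 * (64 * Real.exp (402 * p) * (p * 8 ^ p + 1)) * (2 * k) ^ (2 * p) * μ := by
  have hF := fps_diff b F h
  have hg := growth F p hp ((p * 8 ^ p + 1) * μ) (by positivity) hF (hW.nv hF) (minlem b F h hb0 p hW μ hμ hb)
  have hk2 : (2:ℝ) ≤ k := by exact_mod_cast hk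
  set r : ℝ := 1 - 1 / k with hr
  have hrk : 1 / (k:ℝ) ≤ 1 / 2 := one_div_le_one_div_of_le (by norm_num) hk2
  have hrk0 : 0 < 1 / (k:ℝ) := by positivity
  have hr2 : 1 / 2 ≤ r := by linarith
  have hr1 : r < 1 := by linarith
  have hq : 0 < (1 + r) / (1 - r) := div_pos (by linarith) (by linarith)
  have hq1 : 1 ≤ (1 + r) / (1 - r) := by rw [le_div_iff₀ (by linarith)]; linarith
  set T := Real.log ((1 + r) / (1 - r)) with hT
  have hT0 : 0 ≤ T := Real.log_nonneg hq1
  have hTe : Real.exp T = (1 + r) / (1 - r) := Real.exp_log hq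
  have hst : ∀ u, st u T = u * r := by
    intro u
    unfold st
    rw [← Complex.ofReal_exp, hTe]
    have : (1 - r : ℂ) ≠ 0 := by
      have : (1 - r) ≠ 0 := by linarith
      exact_mod_cast this
    congr 1
    have h1 : ((1 + r) / (1 - r) - 1) / ((1 + r) / (1 - r) + 1) = r := by
      have : (1 - r) ≠ 0 := by linarith
      field_simp
      ring
    exact_mod_cast congrArg Complex.ofReal h1
  have hTk : Real.exp (2 * p * T) ≤ (2 * k) ^ (2 * p) := by
    have : Real.exp (2 * p * T) = (Real.exp T) ^ (2 * p) := by
      rw [← Real.exp_nat_mul]; push_cast; rfl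
    rw [this, hTe]
    have : (1 + r) / (1 - r) ≤ 2 * k := by
      have h2 : 1 - r = 1 / k := by rw [hr]; ring
      rw [h2, div_div_eq_mul_div, div_one]
      nlinarith
    gcongr
  have hc := Complex.norm_iteratedDeriv_le_of_forall_mem_sphere_norm_le (f := F) (c := 0) (R := r)
    (C := 64 * Real.exp (402 * p) * ((p * 8 ^ p + 1) * μ) * (2 * k) ^ (2 * p)) k (by linarith)
    (hF.diffContOnCl_ball (Metric.closedBall_subset_ball hr1)) (by
      intro z hz
      have hzn : ‖z‖ = r := by simpa using hz
      have hrc : (r:ℂ) ≠ 0 := by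
        have : r ≠ 0 := by linarith
        exact_mod_cast this
      have h3 := hg (z / r) (by rw [norm_div, hzn, Complex.norm_real, Real.norm_of_nonneg (by linarith), div_self (by linarith)]) T hT0
      rw [hst, div_mul_cancel₀ _ hrc] at h3
      refine h3.trans ?_
      gcongr)
  rw [fps_coeff b F h k, norm_mul, Complex.norm_natCast, mul_div_assoc] at hc
  have hf0 : (0:ℝ) < k.factorial := by exact_mod_cast Nat.factorial_pos k
  have hc2 := le_of_mul_le_mul_left hc hf0
  have hrp : 1 / 8 ≤ r ^ k := by
    obtain ⟨n, rfl | rfl⟩ := Nat.even_or_odd' k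
    · have h4 : (1/2:ℝ) ≤ r ^ n := by
        have := one_add_mul_le_pow (a := -(1 / ((2 * n : ℕ):ℝ))) (by linarith) n
        have h5 : 1 + (n:ℝ) * (-(1 / ((2 * n : ℕ):ℝ))) = 1 / 2 := by
          have : (n:ℝ) ≠ 0 := by
            have : n ≠ 0 := by omega
            exact_mod_cast this
          push_cast; field_simp; norm_num
        rw [h5] at this
        rw [hr, sub_eq_add_neg]; exact this
      rw [mul_comm, pow_mul]
      nlinarith
    · have h4 := one_add_mul_le_pow (a := -(1 / ((2 * n + 1 : ℕ):ℝ))) (by linarith) n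
      have h6 : (1 + -(1 / ((2 * n + 1 : ℕ):ℝ))) = r := by rw [hr]; ring
      rw [h6] at h4
      have e1 : 1 + (n:ℝ) * (-(1 / ((2 * n + 1 : ℕ):ℝ))) = (n + 1) / (2 * n + 1) := by
        push_cast; field_simp; ring
      rw [e1] at h4
      have h7 : (1/2:ℝ) ≤ (n + 1) / (2 * n + 1) := by
        rw [le_div_iff₀ (by positivity)]; linarith
      have h8 : 1 / 4 ≤ (r ^ n) ^ 2 := by nlinarith
      rw [pow_succ, mul_comm 2 n, pow_mul]
      nlinarith
  rw [le_div_iff₀ (by positivity)] at hc2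
  nlinarith [norm_nonneg (b k)]

lemma spv_main (m : ℕ) (R : ℝ) (a : ℕ → ℂ) (f : ℂ → ℂ) (s : ℕ) (hR : 0 < R)
    (hf : ∀ z ∈ Metric.ball (0 : ℂ) R, HasSum (fun k => a k * z ^ k) (f z))
    (hv : IsSPValentOn f (Metric.ball (0 : ℂ) R) s (s + m)) (b : ℕ → ℂ)
    (hb : b = fun k => if k = 0 then 0 else a (s + k) * R ^ k) :
    ∃ F : ℂ → ℂ, (∀ z ∈ Metric.ball (0:ℂ) 1, HasSum (fun k => b k * z ^ k) (F z)) ∧ WV F m := by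
  have hRc : (R:ℂ) ≠ 0 := by exact_mod_cast hR.ne'
  have hb0 : b 0 = 0 := by simp [hb]
  have hbs : ∀ k, b (k+1) = a (s + (k+1)) * R ^ (k+1) := by intro k; simp [hb]
  have hmem : ∀ z ∈ Metric.ball (0:ℂ) 1, R * z ∈ Metric.ball (0:ℂ) R := by
    intro z hz
    have hz1 : ‖z‖ < 1 := by simpa using hz
    rw [mem_ball_zero_iff, norm_mul, Complex.norm_real, Real.norm_of_nonneg hR.le]
    nlinarith
  have hsum : ∀ z ∈ Metric.ball (0:ℂ) 1, Summable (fun k => b k * z ^ k) := by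
    intro z hz
    by_cases hz0 : z = 0
    · convert summable_zero (α := ℂ) (β := ℕ) using 1
      funext k
      rcases k with _ | k
      · simp [hb0]
      · simp [hz0]
    · rw [← summable_nat_add_iff 1]
      have h1 := (summable_nat_add_iff (s+1)).2 (hf _ (hmem z hz)).summable
      rw [← summable_mul_left_iff (a := (R * z) ^ s) (pow_ne_zero _ (mul_ne_zero hRc hz0))]
      refine h1.congr (fun k => ?_)
      rw [hbs, show k + (s + 1) = s + (k+1) by ring, mul_pow, mul_pow, pow_add, pow_add]
      ring
  refine ⟨fun z => ∑' k, b k * z ^ k, fun z hz => (hsum z hz).hasSum, ?_⟩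
  have hid : ∀ z ∈ Metric.ball (0:ℂ) 1, f (R * z) = (∑ k ∈ Finset.range (s+1), a k * (R * z) ^ k) + (R * z) ^ s * ∑' k, b k * z ^ k := by
    intro z hz
    have h1 := hf _ (hmem z hz)
    rw [← h1.tsum_eq, ← h1.summable.sum_add_tsum_nat_add (s+1), (hsum z hz).tsum_eq_zero_add, hb0, zero_mul, zero_add, ← tsum_mul_left]
    congr 1
    refine tsum_congr (fun k => ?_)
    rw [hbs, show k + (s + 1) = s + (k+1) by ring, mul_pow, mul_pow, pow_add, pow_add]
    ring
  intro c M hM G hG hGe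
  let P : Polynomial ℂ := (∑ k ∈ Finset.range (s+1), Polynomial.C (a k) * Polynomial.X ^ k) + Polynomial.C c * Polynomial.X ^ s
  have hPe : ∀ z, P.eval z = (∑ k ∈ Finset.range (s+1), a k * z ^ k) + c * z ^ s := by
    intro z; simp [P, Polynomial.eval_finsetSum]
  have hPd : P.degree ≤ (s:ℕ) := by
    refine (Polynomial.degree_add_le _ _).trans (max_le ?_ (Polynomial.degree_C_mul_X_pow_le _ _))
    refine (Polynomial.degree_sum_le _ _).trans (Finset.sup_le fun k hk => ?_)
    refine (Polynomial.degree_C_mul_X_pow_le _ _).trans ?_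
    have := Finset.mem_range.1 hk
    exact_mod_cast (by omega : k ≤ s)
  have h1 := hv P hPd
  have hmaps : ∀ w ∈ Metric.ball (0:ℂ) R, w / R ∈ Metric.ball (0:ℂ) 1 := by
    intro w hw
    have hw1 : ‖w‖ < R := by simpa using hw
    rw [mem_ball_zero_iff, norm_div, Complex.norm_real, Real.norm_of_nonneg hR.le]
    exact (div_lt_one hR).2 hw1
  have h2 := mult_le (Metric.ball 0 R) Metric.isOpen_ball (fun z => f z - P.eval z)
    (fun w => ((R:ℂ) ^ (Multiset.card M))⁻¹ * G (w / R)) (Multiset.replicate s (0:ℂ) + M.map (fun x : ℂ => (R:ℂ) * x)) (by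
      intro x hx
      rcases Multiset.mem_add.1 hx with hx | hx
      · rw [Multiset.eq_of_mem_replicate hx]; simpa using hR
      · obtain ⟨y, hy, rfl⟩ := Multiset.mem_map.1 hx
        exact hmem y (hM y hy)) (by
      refine DifferentiableOn.const_mul ?_ _
      exact hG.comp (by fun_prop) hmaps) (by
      intro w hw
      have h3 := hid (w / R) (hmaps w hw)
      have h4 := hGe (w / R) (hmaps w hw)
      rw [mul_div_cancel₀ _ hRc] at h3
      have h5 : ∀ M : Multiset ℂ, ((M.map (fun x : ℂ => (R:ℂ) * x)).map (fun x => w - x)).prod = R ^ (Multiset.card M) * (M.map (fun x => w / R - x)).prod := by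
        intro M
        induction M using Multiset.induction with
        | empty => simp
        | cons x M ih =>
          simp only [Multiset.map_cons, Multiset.prod_cons, Multiset.card_cons, ih]
          have : w - R * x = R * (w / R - x) := by field_simp
          rw [this]; ring
      rw [Multiset.map_add, Multiset.prod_add, h5 M, hPe, h3]
      simp only [Multiset.map_replicate, Multiset.prod_replicate, sub_zero]
      have h6 : ∑' k, b k * (w / R) ^ k = c + (M.map (fun x => w / R - x)).prod * G (w / R) := by
        rw [← h4]; ring
      rw [h6]
      have : (R:ℂ) ^ (Multiset.card M) ≠ 0 := pow_ne_zero _ hRc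
      field_simp
      ring)
  have h3 := h2.trans h1
  have h4 : Multiset.card (Multiset.replicate s (0:ℂ) + M.map (fun x : ℂ => (R:ℂ) * x)) ≤ s + m := by exact_mod_cast h3
  simp at h4
  exact h4

lemma final_bound (m : ℕ) (hm : 0 < m) :
    ∃ A : ℝ, 0 < A ∧
      ∀ (R : ℝ) (a : ℕ → ℂ) (f : ℂ → ℂ) (s p : ℕ), 0 < R →
        p = s + m →
        (∀ z ∈ Metric.ball (0 : ℂ) R, HasSum (fun k => a k * z ^ k) (f z)) →
        IsSPValentOn f (Metric.ball (0 : ℂ) R) s p →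
        ∀ k : ℕ, m + 1 ≤ k →
          ‖a (s + k)‖ * R ^ k ≤
            (A * k / m) ^ (2 * m) *
              (Finset.Icc 1 m).sup' (Finset.nonempty_Icc.mpr hm)
                (fun i => ‖a (s + i)‖ * R ^ i) := by
  set C : ℝ := 8 * (64 * Real.exp (402 * m) * (m * 8 ^ m + 1)) with hC
  have hm0 : (0:ℝ) < m := by exact_mod_cast hm
  have hCp : 0 < C := by positivity
  refine ⟨2 * m * max 1 C, by positivity, ?_⟩
  intro R a f s p hR hp hf hv k hk
  subst hp
  set μ := (Finset.Icc 1 m).sup' (Finset.nonempty_Icc.mpr hm) (fun i => ‖a (s + i)‖ * R ^ i) with hμ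
  have hμi : ∀ i, 1 ≤ i → i ≤ m → ‖a (s + i)‖ * R ^ i ≤ μ := fun i h1 h2 =>
    Finset.le_sup' (fun i => ‖a (s + i)‖ * R ^ i) (Finset.mem_Icc.2 ⟨h1, h2⟩)
  have hμ0 : 0 ≤ μ := le_trans (by positivity) (hμi 1 le_rfl hm)
  obtain ⟨F, hF, hW⟩ := spv_main m R a f s hR hf hv _ rfl
  have hbn : ∀ i, 1 ≤ i → ‖(if i = 0 then 0 else a (s + i) * (R:ℂ) ^ i : ℂ)‖ = ‖a (s + i)‖ * R ^ i := by
    intro i hi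
    rw [if_neg (by omega), norm_mul, norm_pow, Complex.norm_real, Real.norm_of_nonneg hR.le]
  have key : ∀ ε > 0, ‖a (s + k)‖ * R ^ k ≤ C * (2 * k) ^ (2 * m) * (μ + ε) := by
    intro ε hε
    have := coeff_bound _ F hF (by simp) m hm hW (μ + ε) (by linarith) (fun i h1 h2 => by
      rw [hbn i h1]; linarith [hμi i h1 h2]) k (by omega)
    rw [hbn k (by omega)] at this
    exact this
  have key2 : ‖a (s + k)‖ * R ^ k ≤ C * (2 * k) ^ (2 * m) * μ := by
    have ht : Tendsto (fun ε : ℝ => C * (2 * k) ^ (2 * m) * (μ + ε)) (𝓝[>] 0) (𝓝 (C * (2 * k) ^ (2 * m) * (μ + 0))) := by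
      apply Tendsto.mono_left _ nhdsWithin_le_nhds
      apply Continuous.tendsto
      fun_prop
    rw [add_zero] at ht
    exact ge_of_tendsto ht (by filter_upwards [self_mem_nhdsWithin] with ε hε using key ε hε)
  refine key2.trans (mul_le_mul_of_nonneg_right ?_ hμ0)
  have e : 2 * (m:ℝ) * max 1 C * k / m = max 1 C * (2 * k) := by field_simp
  rw [e, mul_pow (max 1 C)]
  refine mul_le_mul_of_nonneg_right ?_ (by positivity)
  calc C ≤ max 1 C := le_max_right _ _
    _ ≤ max 1 C ^ (2 * m) := le_self_pow₀ (le_max_left _ _) (by omega)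


end Aux

/-- For every positive integer `m` there is a constant `A_m > 0` such that whenever
`f(z) = ∑ a_k z^k` (converging on a disk of radius strictly larger than `R`) is
`(s,p)`-valent in `D_R` with `p = s + m`, the lower `s`-truncation
`f̂(z) = ∑_{k ≥ 1} a_{s+k} z^k` possesses the `(m, R, (A_m k/m)^{2m})`-Taylor domination
property. -/
theorem statement0 (m : ℕ) (hm : 0 < m) :
    ∃ A : ℝ, 0 < A ∧
      ∀ (R : ℝ) (a : ℕ → ℂ) (f : ℂ → ℂ) (s p : ℕ), 0 < R →
        p = s + m →
        (∃ R' : ℝ, R < R' ∧ ∀ z : ℂ, ‖z‖ < R' →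
          Summable (fun k => a k * z ^ k)) →
        (∀ z ∈ Metric.ball (0 : ℂ) R, HasSum (fun k => a k * z ^ k) (f z)) →
        IsSPValentOn f (Metric.ball (0 : ℂ) R) s p →
        ∀ k : ℕ, m + 1 ≤ k →
          ‖a (s + k)‖ * R ^ k ≤
            (A * k / m) ^ (2 * m) *
              (Finset.Icc 1 m).sup' (Finset.nonempty_Icc.mpr hm)
                (fun i => ‖a (s + i)‖ * R ^ i) := by
  obtain ⟨A, hA, h⟩ := final_bound m hm
  exact ⟨A, hA, fun R a f s p hR hp _ hf hv k hk => h R a f s p hR hp hf hv k hk⟩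
end

section
/- Let f(z) = Σ_{k≥0} a_k z^k be analytic in D_R, let s ≥ 0 and p ≥ s+1 be integers, and suppose f is (s,p)-valent in D_R. Then the lower s-truncation f̂(z) = Σ_{k≥1} a_{s+k} z^k is (p−s)-valent in D_R, i.e., for every c ∈ ℂ the equation f̂(z) = c has at most p − s solutions in D_R, counted with multiplicity. -/
/-- `g` is `p`-valent in `Ω`: for every constant `c`, the equation `g = c` has
at most `p` solutions in `Ω`, counted with multiplicity. -/
def IsPValentOn (g : ℂ → ℂ) (Ω : Set ℂ) (p : ℕ) : Prop :=
  ∀ c : ℂ, solCount (fun z => g z - c) Ω ≤ (p : ℕ∞)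

theorem enat_summable {ι : Type*} (u : ι → ℕ∞) : Summable u :=
  ⟨_, hasSum_of_isLUB _ (isLUB_iSup)⟩

theorem fhat_analytic (b : ℕ → ℂ) (g : ℂ → ℂ) (R : ℝ) (hR : 0 < R)
    (h : ∀ z ∈ Metric.ball (0 : ℂ) R, HasSum (fun k => b (k + 1) * z ^ (k + 1)) (g z)) :
    AnalyticAt ℂ g 0 := by
  refine ⟨FormalMultilinearSeries.ofScalars ℂ (fun k => if k = 0 then 0 else b k), ?_⟩
  rw [hasFPowerSeriesAt_iff]
  filter_upwards [Metric.ball_mem_nhds (0 : ℂ) hR] with z hz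
  rw [← hasSum_nat_add_iff' 1]
  simpa [mul_comm] using h z hz

theorem ordAt_le (s : ℕ) (g F : ℂ → ℂ) (z : ℂ) (h0 : AnalyticAt ℂ g 0)
    (h : F =ᶠ[nhds z] fun w => w ^ s * g w) :
    (if z = 0 then (s : ℕ∞) else 0) + ordAt g z ≤ ordAt F z := by
  by_cases hg : AnalyticAt ℂ g z
  · have hp : AnalyticAt ℂ (fun w : ℂ => w ^ s) z := by fun_prop
    have hF : AnalyticAt ℂ F z := (hp.mul hg).congr h.symm
    have e : analyticOrderAt F z
        = analyticOrderAt (fun w : ℂ => w ^ s) z + analyticOrderAt g z := by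
      rw [analyticOrderAt_congr h]; exact analyticOrderAt_mul hp hg
    simp only [ordAt, hg, hF, dif_pos, e]
    gcongr
    split_ifs with hz
    · subst hz
      apply le_of_eq
      symm
      rw [hp.analyticOrderAt_eq_natCast]
      exact ⟨fun _ => 1, analyticAt_const, one_ne_zero, by simp⟩
    · simp
  · have hz : z ≠ 0 := by rintro rfl; exact hg h0
    simp [ordAt, hg, hz]

/-- If `f(z) = ∑ a_k z^k` is `(s,p)`-valent in `D_R` (with `p ≥ s + 1`), then its lower
`s`-truncation `f̂(z) = ∑_{k ≥ 1} a_{s+k} z^k` is `(p - s)`-valent in `D_R`. -/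
theorem statement2 (R : ℝ) (hR : 0 < R) (a : ℕ → ℂ) (f fhat : ℂ → ℂ) (s p : ℕ)
    (hp : s + 1 ≤ p)
    (hf : ∀ z ∈ Metric.ball (0 : ℂ) R, HasSum (fun k => a k * z ^ k) (f z))
    (hfhat : ∀ z ∈ Metric.ball (0 : ℂ) R,
      HasSum (fun k => a (s + (k + 1)) * z ^ (k + 1)) (fhat z))
    (hval : IsSPValentOn f (Metric.ball (0 : ℂ) R) s p) :
    IsPValentOn fhat (Metric.ball (0 : ℂ) R) (p - s) := by
  intro c
  have han : AnalyticAt ℂ (fun z => fhat z - c) 0 :=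
    (fhat_analytic (fun k => a (s + k)) fhat R hR hfhat).sub analyticAt_const
  let P : Polynomial ℂ := ∑ k ∈ Finset.range (s + 1), Polynomial.monomial k (a k)
    + Polynomial.monomial s c
  have hP : P.degree ≤ (s : ℕ) := by
    refine (Polynomial.degree_add_le _ _).trans (max_le ?_ (Polynomial.degree_monomial_le _ _))
    refine (Polynomial.degree_sum_le _ _).trans (Finset.sup_le fun k hk => ?_)
    refine (Polynomial.degree_monomial_le _ _).trans ?_
    have := Finset.mem_range.1 hk
    exact_mod_cast (by omega : k ≤ s)
  have key : ∀ z ∈ Metric.ball (0 : ℂ) R, f z - P.eval z = z ^ s * (fhat z - c) := by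
    intro z hz
    have h1 := (hasSum_nat_add_iff' (s + 1)).2 (hf z hz)
    have h2 := (hfhat z hz).mul_left (z ^ s)
    have e : (fun n => a (n + (s + 1)) * z ^ (n + (s + 1)))
        = fun i => z ^ s * (a (s + (i + 1)) * z ^ (i + 1)) := by
      funext k
      rw [show k + (s + 1) = s + (k + 1) by ring]; ring
    rw [e] at h1
    have h3 := h1.unique h2
    simp only [P, Polynomial.eval_add, Polynomial.eval_finset_sum, Polynomial.eval_monomial]
    linear_combination h3
  have hle := hval P hP
  have h0 : (0 : ℂ) ∈ Metric.ball (0 : ℂ) R := Metric.mem_ball_self hR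
  have hs : (s : ℕ∞) + solCount (fun z => fhat z - c) (Metric.ball (0 : ℂ) R) ≤ p := by
    refine le_trans ?_ hle
    have e : (s : ℕ∞) = ∑' z : Metric.ball (0 : ℂ) R,
        (if (z : ℂ) = 0 then (s : ℕ∞) else 0) := by
      rw [tsum_eq_single (⟨0, h0⟩ : Metric.ball (0 : ℂ) R)]
      · simp
      · intro z hz
        rw [if_neg]
        exact fun h => hz (Subtype.ext h)
    unfold solCount
    rw [e, ← (enat_summable _).tsum_add (enat_summable _)]
    refine (enat_summable _).tsum_le_tsum (fun z => ?_) (enat_summable _)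
    refine ordAt_le s _ _ z han ?_
    filter_upwards [Metric.isOpen_ball.mem_nhds z.2] with w hw using key w hw
  have hps : (p : ℕ∞) = s + ((p - s : ℕ) : ℕ∞) := by
    exact_mod_cast (by omega : p = s + (p - s))
  rw [hps] at hs
  exact (ENat.add_le_add_iff_left (ENat.coe_ne_top s)).1 hs
end

section
/- (Biernacki) For every positive integer m there exists a constant A_m > 0 depending only on m such that: if f(z) = Σ_{k≥0} a_k z^k is analytic and m-valent in the disk D_R of radius R centered at 0 ∈ ℂ, then for every k ≥ m+1, |a_k| R^k ≤ (A_m·k/m)^{2m} · max_{1≤i≤m} |a_i| R^i. -/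
section Helpers

open Real Set Filter Topology MeasureTheory Metric
open scoped ComplexConjugate

lemma poisson_log_single {w u : ℂ} {R : ℝ} (hw : w ∈ ball (0:ℂ) R) (hu : u ∈ closedBall (0:ℂ) R) (hwu : w ≠ u) :
    log ‖w - u‖ ≤ circleAverage (fun z => poissonKernel 0 w z * log ‖z - u‖) 0 R := by
  have hR : 0 < R := pos_of_mem_ball hw
  rcases eq_or_lt_of_le (mem_closedBall_zero_iff.1 hu) with h | h
  · have := circleAverage_re_herglotzRieszKernel_mul_log (ρ := u) (c := 0) (by simpa using h) hw
    rw [← poissonKernel_eq_re_herglotzRieszKernel] at this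
    exact this.ge
  · have hw' : ‖w‖ < R := by simpa using hw
    let G : ℂ → ℂ := fun z => (R^2 - conj u * z) / R
    have hG : AnalyticOnNhd ℂ G (closedBall 0 R) := by
      intro z _; unfold G; fun_prop (disch := exact_mod_cast hR.ne')
    have hnz : ∀ z ∈ closedBall (0:ℂ) R, G z ≠ 0 := by
      intro z hz h0
      have hz' : ‖z‖ ≤ R := by simpa using hz
      have hRc : (R:ℂ) ≠ 0 := by exact_mod_cast hR.ne'
      simp only [G, div_eq_zero_iff, hRc, or_false, sub_eq_zero] at h0
      have := congrArg norm h0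
      simp at this
      nlinarith [norm_nonneg u, norm_nonneg z]
    have hharm : InnerProductSpace.HarmonicOnNhd (fun z => log ‖G z‖) (closedBall 0 R) :=
      fun x hx ↦ (hG x hx).harmonicAt_log_norm (hnz x hx)
    have hP := hharm.circleAverage_poissonKernel_smul hw
    have key : ∀ z : ℂ, ‖R^2 - conj u * z‖^2 - (R * ‖z - u‖)^2 = (R^2 - ‖u‖^2) * (R^2 - ‖z‖^2) := by
      intro z
      rw [mul_pow, ← Complex.normSq_eq_norm_sq, ← Complex.normSq_eq_norm_sq, ← Complex.normSq_eq_norm_sq, ← Complex.normSq_eq_norm_sq]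
      simp [Complex.normSq_apply, pow_two]
      ring
    have hGn : ∀ z, ‖G z‖ = ‖R^2 - conj u * z‖ / R := by
      intro z; simp [G, abs_of_pos hR]
    have h1 : circleAverage (fun z => poissonKernel 0 w z * log ‖z - u‖) 0 R = log ‖G w‖ := by
      rw [← hP]
      apply circleAverage_congr_sphere
      intro z hz
      rw [abs_of_pos hR] at hz
      have hz' : ‖z‖ = R := by simpa using hz
      have := key z
      rw [hz', sub_self, mul_zero, sub_eq_zero, sq_eq_sq₀ (norm_nonneg _) (by positivity)] at this
      simp only [Pi.smul_apply', smul_eq_mul, hGn, this]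
      congr 3; field_simp
    rw [h1]
    apply log_le_log (norm_pos_iff.2 (sub_ne_zero.2 hwu))
    rw [hGn, le_div_iff₀ hR]
    have := key w
    have h2 : 0 ≤ (R^2 - ‖u‖^2) * (R^2 - ‖w‖^2) := by
      apply mul_nonneg <;> nlinarith [norm_nonneg u, norm_nonneg w]
    rw [mul_comm]
    exact abs_le_of_sq_le_sq' (by linarith) (norm_nonneg _) |>.2

lemma circleIntegrable_poisson_mul {w : ℂ} {R : ℝ} (hw : w ∈ ball (0:ℂ) R) {g : ℂ → ℝ} (hg : CircleIntegrable g 0 R) :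
    CircleIntegrable (fun z => poissonKernel 0 w z * g z) 0 R := by
  have hR : 0 < R := pos_of_mem_ball hw
  have : ContinuousOn (poissonKernel 0 w) (sphere 0 |R|) := by
    rw [poissonKernel_eq_re_herglotzRieszKernel]
    exact Complex.continuous_re.comp_continuousOn (continuousOn_herglotzRieszKernel_sphere hw)
  exact hg.continuousOn_smul this

lemma poisson_log {w : ℂ} {R : ℝ} (hw : w ∈ ball (0:ℂ) R) {f : ℂ → ℂ}
    (hf : AnalyticOnNhd ℂ f (closedBall 0 R)) (hfw : f w ≠ 0) :
    log ‖f w‖ ≤ circleAverage (fun z => poissonKernel 0 w z * log ‖f z‖) 0 R := by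
  have hR : 0 < R := pos_of_mem_ball hw
  have hwc : w ∈ closedBall (0:ℂ) R := ball_subset_closedBall hw
  set CB := closedBall (0:ℂ) R with hCB
  set D := MeromorphicOn.divisor f CB with hD
  have h₁f := hf.meromorphicOn
  have hord : ∀ u : CB, meromorphicOrderAt f u ≠ ⊤ := by
    rw [← h₁f.exists_meromorphicOrderAt_ne_top_iff_forall
      ⟨nonempty_closedBall.mpr hR.le, (convex_closedBall _ _).isPreconnected⟩]
    refine ⟨⟨w, hwc⟩, ?_⟩
    rw [(hf w hwc).meromorphicNFAt.meromorphicOrderAt_eq_zero_iff.2 hfw]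
    simp
  have h₃f := D.finiteSupport (isCompact_closedBall 0 R)
  obtain ⟨g, h₁g, h₂g, h₃g⟩ := h₁f.extract_zeros_poles hord h₃f
  have h₄g := MeromorphicOn.extract_zeros_poles_log h₂g h₃g
  have t₁ : AccPt w (𝓟 CB) := by
    apply accPt_iff_frequently_nhdsNE.mpr
    apply compl_notMem
    apply mem_nhdsWithin.mpr
    exact ⟨ball 0 R, isOpen_ball, hw, fun _ ⟨h, _⟩ ↦ ball_subset_closedBall h⟩
  have e1 := MeromorphicOn.log_norm_meromorphicTrailingCoeffAt_extract_zeros_poles h₃f hwc t₁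
        (h₁f w hwc) (h₁g w hwc) (h₂g ⟨w, hwc⟩) h₃g
  rw [(hf w hwc).meromorphicTrailingCoeffAt_of_ne_zero hfw] at e1
  have hfin : ∀ F : ℂ → ℝ, ∑ᶠ u, (D u : ℝ) * F u = ∑ u ∈ h₃f.toFinset, (D u : ℝ) * F u := by
    intro F
    rw [finsum_eq_sum_of_support_subset]
    intro u; simp; tauto
  have hfin2 : (∑ᶠ u, (D u * log ‖· - u‖)) = ∑ u ∈ h₃f.toFinset, (fun z : ℂ => (D u : ℝ) * log ‖z - u‖) := by
    rw [finsum_eq_sum_of_support_subset]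
    intro u hu
    contrapose! hu
    simp only [Finset.mem_coe, Set.Finite.mem_toFinset, Function.mem_support, not_not] at hu
    simp [hu]; rfl
  have hci : ∀ u, CircleIntegrable (fun z : ℂ => log ‖z - u‖) 0 R := fun u =>
    MeromorphicOn.circleIntegrable_log_norm (f := fun z => z - u) (fun z _ => by fun_prop)
  have hcg : CircleIntegrable (fun z : ℂ => log ‖g z‖) 0 R := by
    refine MeromorphicOn.circleIntegrable_log_norm ?_
    rw [abs_of_pos hR]
    exact (h₁g.mono sphere_subset_closedBall).meromorphicOn
  have hharm : InnerProductSpace.HarmonicOnNhd (fun z => log ‖g z‖) (closedBall 0 R) :=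
      fun x hx ↦ (h₁g x hx).harmonicAt_log_norm (h₂g ⟨x, hx⟩)
  have hP := hharm.circleAverage_poissonKernel_smul hw
  have e2 : circleAverage (fun z => poissonKernel 0 w z * log ‖f z‖) 0 R
      = ∑ u ∈ h₃f.toFinset, (D u : ℝ) * circleAverage (fun z => poissonKernel 0 w z * log ‖z - u‖) 0 R + log ‖g w‖ := by
    have : circleAverage (fun z => poissonKernel 0 w z * log ‖f z‖) 0 R =
      circleAverage ((∑ u ∈ h₃f.toFinset, (fun z => (D u:ℝ) • (poissonKernel 0 w z * log ‖z - u‖))) + (poissonKernel 0 w • (fun z => log ‖g z‖))) 0 R := by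
      apply circleAverage_congr_codiscreteWithin _ hR.ne'
      have := codiscreteWithin_mono (sphere_subset_closedBall (x := (0:ℂ)) (ε := R)) h₄g
      rw [abs_of_pos hR]
      filter_upwards [this] with z hz
      rw [hz, hfin2]
      simp [mul_add, Finset.mul_sum]
      apply Finset.sum_congr rfl; intros; ring
    rw [this, circleAverage_add, hP, circleAverage_sum]
    · congr 1
      apply Finset.sum_congr rfl; intro u _
      rw [circleAverage_fun_smul]; rfl
    · intro u _
      exact (circleIntegrable_poisson_mul hw (hci u)).const_smul
    · apply CircleIntegrable.sum
      intro u _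
      exact (circleIntegrable_poisson_mul hw (hci u)).const_smul
    · exact circleIntegrable_poisson_mul hw hcg
  rw [e2, e1, hfin]
  gcongr with u hu
  · have := (MeromorphicOn.AnalyticOnNhd.divisor_nonneg hf) u
    exact_mod_cast this
  · have huD : D u ≠ 0 := by simpa using hu
    have huc : u ∈ CB := by
      by_contra h; exact huD (D.apply_eq_zero_of_notMem h)
    apply poisson_log_single hw huc
    rintro rfl
    apply huD
    rw [hD, MeromorphicOn.divisor_apply h₁f huc, (hf w huc).meromorphicNFAt.meromorphicOrderAt_eq_zero_iff.2 hfw]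
    simp

def AtMost (m : ℕ) (f : ℂ → ℂ) (S : Set ℂ) : Prop :=
  ∀ c : ℂ, ∀ T : Finset ℂ, (∀ z ∈ T, z ∈ S ∧ f z = c) → T.card ≤ m

lemma det_cmul (c : ℂ) :
    (((ContinuousLinearMap.toSpanSingleton ℂ c : ℂ →L[ℂ] ℂ).restrictScalars ℝ) : ℂ →L[ℝ] ℂ).det = ‖c‖^2 := by
  simp [ContinuousLinearMap.det, LinearMap.det_restrictScalars,
      Algebra.norm_complex_eq, Complex.normSq_eq_norm_sq]

lemma sum_indicator_le {m : ℕ} {g : ℂ → ℂ} {Q : Set ℂ} (hm : AtMost m g Q)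
    {D : ℕ → Set ℂ} (hD : ∀ n, D n ⊆ Q) (hdis : Pairwise (Function.onFun Disjoint D)) (y : ℂ) :
    ∑' n, (g '' D n).indicator (fun _ => (1 : ENNReal)) y ≤ m := by
  classical
  rw [ENNReal.tsum_eq_iSup_sum]
  refine iSup_le ?_
  intro s
  have hx : ∀ n : ℕ, ∃ x, y ∈ g '' D n → x ∈ D n ∧ g x = y := by
    intro n
    by_cases h : y ∈ g '' D n
    · obtain ⟨x, hx⟩ := h
      exact ⟨x, fun _ => hx⟩
    · exact ⟨0, fun h' => absurd h' h⟩
  choose x hx using hx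
  set s' := s.filter (fun n => y ∈ g '' D n) with hs'
  have h1 : ∑ n ∈ s, (g '' D n).indicator (fun _ => (1 : ENNReal)) y = (s'.card : ENNReal) := by
    simp only [indicator_apply]
    rw [Finset.sum_ite]
    simp [hs']
  rw [h1]
  have hinj : Set.InjOn x s' := by
    intro a ha b hb hab
    by_contra hne
    have ha' := (hx a (Finset.mem_filter.1 ha).2).1
    have hb' := (hx b (Finset.mem_filter.1 hb).2).1
    rw [hab] at ha'
    exact Set.disjoint_left.1 (hdis hne) ha' hb'
  rw [← Finset.card_image_of_injOn hinj]
  have := hm y (s'.image x) (by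
    intro z hz
    obtain ⟨n, hn, rfl⟩ := Finset.mem_image.1 hz
    have := hx n (Finset.mem_filter.1 hn).2
    exact ⟨hD n this.1, this.2⟩)
  exact_mod_cast this

lemma area_bound_s3 {m : ℕ} {g : ℂ → ℂ} {Q : Set ℂ} (hQ : IsOpen Q) (hg : DifferentiableOn ℂ g Q)
    (hm : AtMost m g Q) {φ : ℂ → ENNReal} (hφ : Measurable φ) :
    ∫⁻ x in Q, ENNReal.ofReal (‖deriv g x‖^2) * φ (g x) ≤ m * ∫⁻ y in g '' Q, φ y := by
  classical
  have han : AnalyticOnNhd ℂ g Q := hg.analyticOnNhd hQ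
  set Q0 : Set ℂ := Q ∩ {x | deriv g x ≠ 0} with hQ0
  have hdc : ContinuousOn (deriv g) Q := (hg.deriv hQ).continuousOn
  have hQ0o : IsOpen Q0 := hdc.isOpen_inter_preimage hQ isOpen_ne
  -- local injectivity
  have hloc : ∀ x ∈ Q0, ∃ U : Set ℂ, IsOpen U ∧ x ∈ U ∧ U ⊆ Q0 ∧ InjOn g U := by
    intro x hx
    have hs : HasStrictDerivAt g (deriv g x) x := (han x hx.1).hasStrictDerivAt
    have h1 := (hs.eventually_left_inverse hx.2).and (hQ0o.mem_nhds hx)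
    obtain ⟨U, hU, hUo, hxU⟩ := _root_.eventually_nhds_iff.1 h1
    exact ⟨U, hUo, hxU, fun z hz => (hU z hz).2, fun a ha b hb hab => by
      rw [← (hU a ha).1, ← (hU b hb).1, hab]⟩
  choose! U hUo hxU hUQ hUi using hloc
  obtain ⟨S, hSs, hSc, hSU⟩ := TopologicalSpace.countable_cover_nhdsWithin
    (f := U) (s := Q0) (fun x hx => mem_nhdsWithin_of_mem_nhds ((hUo x hx).mem_nhds (hxU x hx)))
  -- enumerate
  obtain ⟨V, hVo, hVQ, hVi, hVU⟩ : ∃ V : ℕ → Set ℂ, (∀ n, IsOpen (V n)) ∧ (∀ n, V n ⊆ Q0) ∧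
      (∀ n, InjOn g (V n)) ∧ Q0 ⊆ ⋃ n, V n := by
    rcases S.eq_empty_or_nonempty with rfl | hne
    · refine ⟨fun _ => ∅, by simp, by simp, by simp, ?_⟩
      simpa using hSU
    · obtain ⟨e, rfl⟩ := hSc.exists_eq_range hne
      refine ⟨fun n => U (e n), fun n => hUo _ (hSs ⟨n, rfl⟩), fun n => hUQ _ (hSs ⟨n, rfl⟩),
        fun n => hUi _ (hSs ⟨n, rfl⟩), ?_⟩
      simpa using hSU
  set D := disjointed V with hDdef
  have hDm : ∀ n, MeasurableSet (D n) := fun n => MeasurableSet.disjointed (fun n => (hVo n).measurableSet) n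
  have hDV : ∀ n, D n ⊆ V n := fun n => disjointed_subset V n
  have hDU : (⋃ n, D n) = Q0 := by
    rw [hDdef, iUnion_disjointed]
    exact Subset.antisymm (iUnion_subset hVQ) hVU
  have hdis : Pairwise (Function.onFun Disjoint D) := disjoint_disjointed V
  have hDQ : ∀ n, D n ⊆ Q := fun n => (hDV n).trans ((hVQ n).trans inter_subset_left)
  have hfd : ∀ n, ∀ x ∈ D n, HasFDerivWithinAt g
      ((ContinuousLinearMap.toSpanSingleton ℂ (deriv g x) : ℂ →L[ℂ] ℂ).restrictScalars ℝ) (D n) x := by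
    intro n x hx
    have := ((han x (hDQ n hx)).differentiableAt).hasDerivAt.hasFDerivAt.restrictScalars ℝ
    exact this.hasFDerivWithinAt
  have hDi : ∀ n, InjOn g (D n) := fun n => (hVi n).mono (hDV n)
  have key : ∀ n, ∫⁻ x in D n, ENNReal.ofReal (‖deriv g x‖^2) * φ (g x) = ∫⁻ y in g '' D n, φ y := by
    intro n
    rw [lintegral_image_eq_lintegral_abs_det_fderiv_mul volume (hDm n) (hfd n) (hDi n) φ]
    simp only [det_cmul, abs_pow, abs_norm]
  have hgm : ∀ n, MeasurableSet (g '' D n) := fun n =>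
    measurable_image_of_fderivWithin (hDm n) (hfd n) (hDi n)
  have h0 : ∫⁻ x in Q, ENNReal.ofReal (‖deriv g x‖^2) * φ (g x)
      = ∫⁻ x in Q0, ENNReal.ofReal (‖deriv g x‖^2) * φ (g x) := by
    rw [← lintegral_indicator hQ.measurableSet, ← lintegral_indicator hQ0o.measurableSet]
    congr 1
    ext x
    by_cases hx : x ∈ Q
    · by_cases hd : deriv g x = 0
      · have : x ∉ Q0 := fun h => h.2 hd
        simp [hx, this, hd]
      · have : x ∈ Q0 := ⟨hx, hd⟩
        simp [hx, this]
    · have : x ∉ Q0 := fun h => hx h.1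
      simp [hx, this]
  have hQm : MeasurableSet (⋃ n, g '' D n) := MeasurableSet.iUnion hgm
  rw [h0, ← hDU, lintegral_iUnion hDm hdis]
  simp_rw [key]
  calc ∑' n, ∫⁻ y in g '' D n, φ y
      = ∑' n, ∫⁻ y in g '' Q, (g '' D n).indicator φ y := by
        congr 1; ext n
        rw [lintegral_indicator (hgm n), Measure.restrict_restrict (hgm n), inter_eq_left.2 (image_mono (hDQ n))]
    _ = ∫⁻ y in g '' Q, ∑' n, (g '' D n).indicator φ y := by
        rw [lintegral_tsum]
        exact fun n => (hφ.indicator (hgm n)).aemeasurable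
    _ ≤ ∫⁻ y in g '' Q, m * φ y := by
        apply lintegral_mono
        intro y
        have h2 : ∀ n, (g '' D n).indicator φ y = (g '' D n).indicator (fun _ => (1 : ENNReal)) y * φ y := by
          intro n
          by_cases h : y ∈ g '' D n <;> simp [h]
        simp_rw [h2]
        rw [ENNReal.tsum_mul_right]
        gcongr
        exact sum_indicator_le hm hDQ hdis y
    _ = m * ∫⁻ y in g '' Q, φ y := lintegral_const_mul _ hφ

lemma lint_radial {M : ℝ} (hM : 0 ≤ M) :
    ∫⁻ s in Ioc 0 M, ENNReal.ofReal (s / (1 + s^2)) = ENNReal.ofReal (1/2 * log (1 + M^2)) := by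
  have hc : Continuous (fun s : ℝ => s / (1 + s^2)) := by
    apply Continuous.div (by fun_prop) (by fun_prop)
    intro x; positivity
  rw [← ofReal_integral_eq_lintegral_ofReal]
  · congr 1
    rw [← intervalIntegral.integral_of_le hM]
    rw [intervalIntegral.integral_eq_sub_of_hasDerivAt (f := fun s => 1/2 * log (1 + s^2))]
    · simp
    · intro x _
      have h1 : HasDerivAt (fun s : ℝ => 1 + s^2) (2 * x) x := by
        simpa using (hasDerivAt_pow 2 x).const_add 1
      have := (h1.log (by positivity)).const_mul (1/2)
      have h2 : x / (1 + x ^ 2) = 1 / 2 * (2 * x / (1 + x ^ 2)) := by ring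
      rw [h2]; exact this
    · exact hc.intervalIntegrable _ _
  · exact (hc.integrableOn_Icc (a := 0) (b := M)).mono_set Ioc_subset_Icc_self
  · filter_upwards [ae_restrict_mem measurableSet_Ioc] with x hx
    have := hx.1
    simp only [Pi.zero_apply]
    positivity

lemma area_sphere {M : ℝ} (hM : 0 ≤ M) :
    ∫⁻ w in closedBall (0:ℂ) M, ENNReal.ofReal (‖w‖^2 / (1 + ‖w‖^2)^2) ≤ ENNReal.ofReal (π * log (1 + M^2)) := by
  rw [← lintegral_indicator measurableSet_closedBall, ← Complex.lintegral_comp_polarCoord_symm]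
  have hpt : ∀ p ∈ polarCoord.target, ENNReal.ofReal p.1 • (closedBall (0:ℂ) M).indicator
      (fun w => ENNReal.ofReal (‖w‖^2 / (1 + ‖w‖^2)^2)) (Complex.polarCoord.symm p) ≤
      (Ioc 0 M ×ˢ Ioo (-π) π).indicator (fun p : ℝ × ℝ => ENNReal.ofReal (p.1 / (1 + p.1^2)) * 1) p := by
    rintro ⟨s, θ⟩ hp
    simp only [polarCoord_target, mem_prod, mem_Ioi] at hp
    obtain ⟨hs, hθ⟩ := hp
    have hn : ‖Complex.polarCoord.symm (s, θ)‖ = s := by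
      rw [Complex.norm_polarCoord_symm, abs_of_pos hs]
    by_cases h : s ≤ M
    · have hmem : ((s, θ) : ℝ × ℝ) ∈ Ioc 0 M ×ˢ Ioo (-π) π := ⟨⟨hs, h⟩, hθ⟩
      rw [indicator_of_mem (by rw [mem_closedBall_zero_iff, hn]; exact h), indicator_of_mem hmem]
      rw [hn, smul_eq_mul, ← ENNReal.ofReal_mul hs.le, mul_one]
      apply ENNReal.ofReal_le_ofReal
      simp only
      rw [div_eq_mul_inv, div_eq_mul_inv]
      have : s^2 * ((1+s^2)^2)⁻¹ ≤ (1+s^2)⁻¹ := by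
        rw [← div_eq_mul_inv, div_le_iff₀ (by positivity)]
        field_simp
        linarith
      gcongr
    · rw [indicator_of_notMem (by simp only [mem_closedBall_zero_iff, hn]; exact h)]
      simp
  have htm : MeasurableSet polarCoord.target := by
    rw [polarCoord_target]; exact measurableSet_Ioi.prod measurableSet_Ioo
  refine (setLIntegral_mono' htm hpt).trans ?_
  refine (setLIntegral_le_lintegral _ _).trans ?_
  rw [lintegral_indicator (measurableSet_Ioc.prod measurableSet_Ioo), Measure.volume_eq_prod,
    ← Measure.prod_restrict, lintegral_prod_mul (f := fun s : ℝ => ENNReal.ofReal (s / (1+s^2))) (g := fun _ => 1)]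
  · rw [lint_radial hM]
    simp only [lintegral_const, one_mul, Measure.restrict_apply_univ, Real.volume_Ioo]
    rw [← ENNReal.ofReal_mul (mul_nonneg (by norm_num) (log_nonneg (by nlinarith [sq_nonneg M])))]
    apply ENNReal.ofReal_le_ofReal
    apply le_of_eq; ring
  · exact (by fun_prop : Measurable fun s : ℝ => ENNReal.ofReal (s / (1+s^2))).aemeasurable
  · exact aemeasurable_const

noncomputable def uu (w : ℂ) : ℝ := 1/2 * log (1 + ‖w‖^2)

lemma continuous_uu : Continuous uu := by
  unfold uu
  refine continuous_const.mul (Continuous.log (by fun_prop) ?_)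
  intro x; positivity

lemma uu_nonneg (w : ℂ) : 0 ≤ uu w := by
  unfold uu
  have : 0 ≤ log (1 + ‖w‖^2) := log_nonneg (by nlinarith [sq_nonneg ‖w‖])
  positivity

/-- the coefficient of the derivative of `uu (g w)` -/
noncomputable def AA (g : ℂ → ℂ) (w : ℂ) : ℂ := ((1 + ‖g w‖^2)⁻¹ : ℝ) • (conj (g w) * deriv g w)

lemma hasFDerivAt_uu {g : ℂ → ℂ} {w : ℂ} (hg : DifferentiableAt ℂ g w) :
    HasFDerivAt (fun w => uu (g w)) 
      (Complex.reCLM.comp ((ContinuousLinearMap.toSpanSingleton ℂ (AA g w) : ℂ →L[ℂ] ℂ).restrictScalars ℝ)) w := by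
  have h1 := hg.hasDerivAt.hasFDerivAt.restrictScalars ℝ
  have h2 := ((h1.norm_sq.const_add 1).log (by positivity)).const_mul (1/2)
  unfold uu
  refine h2.congr_fderiv ?_
  unfold AA
  generalize (1 + ‖g w‖^2)⁻¹ = t
  ext
  simp [Complex.inner]
  ring

lemma continuousOn_AA {g : ℂ → ℂ} {O : Set ℂ} (hO : IsOpen O) (hg : DifferentiableOn ℂ g O) :
    ContinuousOn (AA g) O := by
  unfold AA
  have h1 : ContinuousOn (fun w => (1 + ‖g w‖^2)⁻¹) O := by
    refine ContinuousOn.inv₀ (continuousOn_const.add (hg.continuousOn.norm.pow 2)) ?_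
    intro w _
    positivity
  have h2 : ContinuousOn (fun w => conj (g w) * deriv g w) O :=
    (Complex.continuous_conj.comp_continuousOn hg.continuousOn).mul (hg.deriv hO).continuousOn
  exact h1.smul h2

lemma cont_inner {E : Type} [NormedAddCommGroup E] [NormedSpace ℝ E] {φ : ℂ → E} {O : Set ℂ} {a b : ℝ}
    (hb : 0 ≤ b) (hsub : Icc a 0 ×ℂ Icc 0 b ⊆ O) (hφ : ContinuousOn φ O) :
    ContinuousOn (fun x : ℝ => ∫ y in (0:ℝ)..b, φ (x + y * Complex.I)) (Icc a 0) := by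
  rw [continuousOn_iff_continuous_domRestrict]
  have h1 : Continuous (fun p : (Icc a 0) × ℝ => φ ((p.1 : ℝ) + (projIcc 0 b hb p.2 : ℝ) * Complex.I)) := by
    refine hφ.comp_continuous ?_ ?_
    · have : Continuous (fun p : (Icc a 0) × ℝ => (projIcc 0 b hb p.2 : ℝ)) :=
        continuous_subtype_val.comp (continuous_projIcc.comp continuous_snd)
      have h2 : Continuous (fun p : (Icc a 0) × ℝ => (p.1 : ℝ)) := continuous_subtype_val.comp continuous_fst
      fun_prop
    · intro p
      apply hsub
      exact ⟨by simpa using p.1.2, by simpa using (projIcc 0 b hb p.2).2⟩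
  have h3 := intervalIntegral.continuous_parametric_intervalIntegral_of_continuous' (μ := volume) 
    (f := fun (x : Icc a 0) (y : ℝ) => φ ((x : ℝ) + (projIcc 0 b hb y : ℝ) * Complex.I)) h1 0 b
  convert h3 using 2 with x
  apply intervalIntegral.integral_congr
  intro y hy
  rw [uIcc_of_le hb] at hy
  simp only
  rw [projIcc_of_mem hb hy]

lemma stokes_core {g K : ℂ → ℂ} {O : Set ℂ} (hO : IsOpen O) {a b : ℝ} (ha : a ≤ 0) (hb : 0 ≤ b)
    (hsub : Icc a 0 ×ℂ Icc 0 b ⊆ O)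
    (hg : DifferentiableOn ℂ g O) (hK : DifferentiableOn ℂ K O)
    (hgp : ∀ x : ℝ, g (x + b * Complex.I) = g x) (hKp : ∀ x : ℝ, K (x + b * Complex.I) = K x) :
    (∫ y in (0:ℝ)..b, uu (g (y * Complex.I)) * (K (y * Complex.I)).re)
      - (∫ y in (0:ℝ)..b, uu (g (a + y * Complex.I)) * (K (a + y * Complex.I)).re)
      ≤ ∫ x in a..0, ∫ y in 0..b, ‖K (x + y * Complex.I)‖ * ‖AA g (x + y * Complex.I)‖ := by
  set Q := Icc a 0 ×ℂ Icc 0 b with hQ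
  have hgan : ∀ w ∈ O, DifferentiableAt ℂ g w := fun w hw => hg.differentiableAt (hO.mem_nhds hw)
  have hKan : ∀ w ∈ O, DifferentiableAt ℂ K w := fun w hw => hK.differentiableAt (hO.mem_nhds hw)
  have hQc : IsCompact Q := isCompact_Icc.reProdIm isCompact_Icc
  have huc : ContinuousOn (fun w => uu (g w)) O := continuous_uu.comp_continuousOn hg.continuousOn
  have hAc := continuousOn_AA hO hg
  set V : ℂ → ℂ := fun w => uu (g w) • K w with hV
  have hVc : ContinuousOn V O := huc.smul hK.continuousOn
  set V' : ℂ → ℂ →L[ℝ] ℂ := fun w =>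
     uu (g w) • ((ContinuousLinearMap.toSpanSingleton ℂ (deriv K w) : ℂ →L[ℂ] ℂ).restrictScalars ℝ) +
      (Complex.reCLM.comp ((ContinuousLinearMap.toSpanSingleton ℂ (AA g w) : ℂ →L[ℂ] ℂ).restrictScalars ℝ)).smulRight (K w) with hV'
  have hVd : ∀ w ∈ O, HasFDerivAt V (V' w) w := by
    intro w hw
    exact (hasFDerivAt_uu (hgan w hw)).smul ((hKan w hw).hasDerivAt.hasFDerivAt.restrictScalars ℝ)
  have hVe : ∀ w, Complex.I • V' w 1 - V' w Complex.I = Complex.I * (K w * conj (AA g w)) := by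
    intro w
    simp [hV']
    apply Complex.ext <;> simp <;> ring
  have hint : ContinuousOn (fun w => Complex.I * (K w * conj (AA g w))) O :=
    continuousOn_const.mul (hK.continuousOn.mul (Complex.continuous_conj.comp_continuousOn hAc))
  have e1 : ((a:ℂ)).re = a := by simp
  have e2 : ((a:ℂ)).im = 0 := by simp
  have e3 : ((b:ℂ) * Complex.I).re = 0 := by simp
  have e4 : ((b:ℂ) * Complex.I).im = b := by simp
  have st := Complex.integral_boundary_rect_of_hasFDerivAt_real_off_countable V V'
    (a : ℂ) (b * Complex.I) ∅ countable_empty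
    (by rw [e1, e2, e3, e4, uIcc_of_le ha, uIcc_of_le hb]; exact hVc.mono hsub) (by
      intro x hx
      rw [e1, e2, e3, e4, min_eq_left ha, min_eq_left hb, max_eq_right ha, max_eq_right hb] at hx
      apply hVd
      apply hsub
      exact ⟨Ioo_subset_Icc_self hx.1.1, Ioo_subset_Icc_self hx.1.2⟩) (by
      rw [e1, e2, e3, e4, uIcc_of_le ha, uIcc_of_le hb]
      simp only [hVe]
      exact (hint.mono hsub).integrableOn_compact hQc)
  rw [e1, e2, e3, e4] at st
  simp only [hVe] at st
  have hVp : ∀ x : ℝ, V (x + b * Complex.I) = V x := by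
    intro x; simp only [hV, hgp, hKp]
  simp only [hVp, Complex.ofReal_zero, zero_mul, add_zero, zero_add, sub_self] at st
  -- continuity along lines
  have hcy : ∀ x ∈ Icc a 0, ∀ {E : Type} [TopologicalSpace E] (φ : ℂ → E), ContinuousOn φ O →
      ContinuousOn (fun y : ℝ => φ (x + y * Complex.I)) (Icc 0 b) := by
    intro x hx E _ φ hφ
    refine hφ.comp (by fun_prop) ?_
    intro y hy
    exact hsub ⟨by simpa using hx, by simpa using hy⟩
  have hii : ∀ x ∈ Icc a 0, ∀ {E : Type} [NormedAddCommGroup E] (φ : ℂ → E), ContinuousOn φ O →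
      IntervalIntegrable (fun y : ℝ => φ (x + y * Complex.I)) volume 0 b := by
    intro x hx E _ φ hφ
    exact ContinuousOn.intervalIntegrable (by rw [uIcc_of_le hb]; exact hcy x hx φ hφ)
  have hre : ∀ x ∈ Icc a 0, (∫ y in (0:ℝ)..b, V (x + y * Complex.I)).re =
      ∫ y in (0:ℝ)..b, uu (g (x + y * Complex.I)) * (K (x + y * Complex.I)).re := by
    intro x hx
    have := Complex.reCLM.intervalIntegral_comp_comm (hii x hx V hVc)
    simp only [Complex.reCLM_apply] at this
    rw [← this]
    simp [hV]
  have st2 : (∫ y in (0:ℝ)..b, V (y * Complex.I)) - (∫ y in (0:ℝ)..b, V (a + y * Complex.I)) =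
      ∫ x in a..0, ∫ y in (0:ℝ)..b, K (x + y * Complex.I) * conj (AA g (x + y * Complex.I)) := by
    simp only [intervalIntegral.integral_const_mul, smul_eq_mul] at st
    have : Complex.I ≠ 0 := Complex.I_ne_zero
    apply mul_left_cancel₀ this
    rw [mul_sub]
    exact st
  have st3 := congrArg Complex.re st2
  have h0 := hre 0 ⟨ha, le_rfl⟩
  simp only [Complex.ofReal_zero, zero_add] at h0
  rw [Complex.sub_re, h0, hre a ⟨le_rfl, ha⟩] at st3
  rw [st3]
  refine (Complex.re_le_norm _).trans ?_
  refine (intervalIntegral.norm_integral_le_integral_norm ha).trans ?_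
  have hKA : ContinuousOn (fun w => K w * conj (AA g w)) O := 
    (hK.continuousOn.mul (Complex.continuous_conj.comp_continuousOn hAc))
  have hKA2 : ContinuousOn (fun w => ‖K w‖ * ‖AA g w‖) O := hK.continuousOn.norm.mul hAc.norm
  refine intervalIntegral.integral_mono_on ha ?_ ?_ ?_
  · exact ((cont_inner hb hsub hKA).norm).intervalIntegrable_of_Icc ha
  · exact (cont_inner hb hsub hKA2).intervalIntegrable_of_Icc ha
  · intro x hx
    refine (intervalIntegral.norm_integral_le_integral_norm hb).trans (le_of_eq ?_)
    simp

noncomputable def KK (z0 w : ℂ) : ℂ := (1 + conj z0 * Complex.exp w) / (1 - conj z0 * Complex.exp w)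

lemma norm_aux (z0 : ℂ) (x y : ℝ) :
    ‖1 - conj z0 * Complex.exp (x + y * Complex.I)‖ = ‖circleMap 0 1 y - z0 * (exp x : ℝ)‖ := by
  have h : (1 - conj z0 * Complex.exp (x + y * Complex.I)) =
      Complex.exp (y * Complex.I) * conj (circleMap 0 1 y - z0 * (exp x : ℝ)) := by
    rw [circleMap]
    simp only [map_sub, map_mul, Complex.conj_ofReal, zero_add, Complex.ofReal_one, one_mul]
    rw [mul_sub, ← Complex.exp_conj, ← Complex.exp_add, Complex.exp_add (x:ℂ), Complex.ofReal_exp]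
    simp
    ring
  rw [h, norm_mul, Complex.norm_exp_ofReal_mul_I, one_mul, Complex.norm_conj]

lemma norm_q (z0 : ℂ) (x y : ℝ) : ‖conj z0 * Complex.exp (x + y * Complex.I)‖ = ‖z0‖ * exp x := by
  rw [norm_mul, Complex.norm_conj, Complex.norm_exp]; simp

lemma KK_re (z0 : ℂ) (x y : ℝ) : (KK z0 (x + y * Complex.I)).re =
    poissonKernel 0 (z0 * (exp x : ℝ)) (circleMap 0 1 y) := by
  have h := congrFun (poissonKernel_eq_re_herglotzRieszKernel (c := 0) (w := conj z0 * Complex.exp (x + y * Complex.I))) 1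
  rw [Function.comp_apply, herglotzRieszKernel_def, poissonKernel_def] at h
  simp only [sub_zero] at h
  rw [KK, ← h, poissonKernel_def, norm_aux, norm_q]
  simp

lemma int_pk {w : ℂ} (hw : ‖w‖ < 1) : ∫ y in (0:ℝ)..(2*π), poissonKernel 0 w (circleMap 0 1 y) = 2 * π := by
  have h : circleAverage (poissonKernel 0 w • fun _ => (1:ℂ)) 0 1 = 1 :=
    DiffContOnCl.circleAverage_poissonKernel_smul (f := fun _ => (1:ℂ)) diffContOnCl_const (by simpa using hw)
  rw [circleAverage_def] at h
  simp only [Pi.smul_apply', Complex.real_smul, mul_one] at h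
  rw [intervalIntegral.integral_ofReal] at h
  have h2 : (2 * π)⁻¹ * ∫ y in (0:ℝ)..(2*π), poissonKernel 0 w (circleMap 0 1 y) = 1 := by
    exact_mod_cast h
  field_simp at h2
  exact h2

lemma KK_den {z0 : ℂ} (h0 : ‖z0‖ < 1) {x y : ℝ} (hx : x ≤ 0) :
    1 - conj z0 * Complex.exp (x + y * Complex.I) ≠ 0 := by
  intro h
  have h1 : ‖conj z0 * Complex.exp (x + y * Complex.I)‖ = 1 := by
    rw [← sub_eq_zero.1 h]; simp
  rw [norm_q] at h1
  have : exp x ≤ 1 := exp_le_one_iff.2 hx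
  nlinarith [norm_nonneg z0, exp_pos x]

lemma KK_sq {z0 : ℂ} (h0 : ‖z0‖ < 1) {x y : ℝ} (hx : x ≤ 0) :
    ‖KK z0 (x + y * Complex.I)‖^2 ≤ 4 / (1 - (‖z0‖ * exp x)^2) *
      poissonKernel 0 (z0 * (exp x : ℝ)) (circleMap 0 1 y) := by
  have he : exp x ≤ 1 := exp_le_one_iff.2 hx
  have hq : ‖z0‖ * exp x < 1 := by nlinarith [norm_nonneg z0, exp_pos x]
  have hq0 : 0 ≤ ‖z0‖ * exp x := by positivity
  have hs : 0 < 1 - (‖z0‖ * exp x)^2 := by nlinarith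
  rw [KK, norm_div, norm_aux, poissonKernel_def]
  simp only [sub_zero, norm_circleMap_zero, abs_one, one_pow, norm_mul, Complex.norm_real, norm_eq_abs, abs_exp]
  rw [div_mul_div_comm, mul_comm (4:ℝ), mul_div_mul_left _ _ hs.ne', div_pow]
  gcongr
  have : ‖1 + conj z0 * Complex.exp (x + y * Complex.I)‖ ≤ 2 := by
    refine (norm_add_le _ _).trans ?_
    rw [norm_q]; simp; linarith
  nlinarith [norm_nonneg (1 + conj z0 * Complex.exp (x + y * Complex.I))]

def OK (z0 : ℂ) : Set ℂ := {w | 1 - conj z0 * Complex.exp w ≠ 0}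

lemma isOpen_OK (z0 : ℂ) : IsOpen (OK z0) := isOpen_ne_fun (by fun_prop) (by fun_prop)

lemma diff_KK (z0 : ℂ) : DifferentiableOn ℂ (KK z0) (OK z0) := by
  unfold KK
  refine DifferentiableOn.div (by fun_prop) (by fun_prop) (fun w hw => hw)

lemma sub_OK {z0 : ℂ} (h0 : ‖z0‖ < 1) {a b : ℝ} : Icc a 0 ×ℂ Icc 0 b ⊆ OK z0 := by
  intro w hw
  have := KK_den h0 (y := w.im) hw.1.2
  rwa [Complex.re_add_im] at this

lemma circ_pk {w : ℂ} (hw : ‖w‖ < 1) : IntervalIntegrable (fun y => poissonKernel 0 w (circleMap 0 1 y)) volume 0 (2*π) := by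
  have := circleIntegrable_poisson_mul (w := w) (R := 1) (by simpa using hw) (g := fun _ => (1:ℝ)) (circleIntegrable_const _ _ _)
  simpa [CircleIntegrable] using this

lemma int_KK_sq {z0 : ℂ} (h0 : ‖z0‖ < 1) {a : ℝ} (ha : a ≤ 0) :
    ∫ x in a..0, ∫ y in (0:ℝ)..(2*π), ‖KK z0 (x + y * Complex.I)‖^2 ≤
      2 * π * (4 * (-a) - 2 * log (1 - ‖z0‖^2)) := by
  have h2π : (0:ℝ) ≤ 2*π := by positivity
  have hcont : ContinuousOn (fun w => ‖KK z0 w‖^2) (OK z0) := (diff_KK z0).continuousOn.norm.pow 2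
  have hpos : ∀ x : ℝ, x ≤ 0 → 0 < 1 - (‖z0‖ * exp x)^2 := by
    intro x hx
    have he : exp x ≤ 1 := exp_le_one_iff.2 hx
    have hq : ‖z0‖ * exp x < 1 := by nlinarith [norm_nonneg z0, exp_pos x]
    have hq0 : 0 ≤ ‖z0‖ * exp x := by positivity
    nlinarith
  have hin : ∀ x ∈ Icc a 0, ∫ y in (0:ℝ)..(2*π), ‖KK z0 (x + y * Complex.I)‖^2 ≤
      8 * π * (1 / (1 - (‖z0‖ * exp x)^2)) := by
    intro x hx
    have hw : ‖z0 * (exp x : ℝ)‖ < 1 := by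
      have he : exp x ≤ 1 := exp_le_one_iff.2 hx.2
      simp only [norm_mul, Complex.norm_real, norm_eq_abs, abs_exp]
      nlinarith [norm_nonneg z0, exp_pos x]
    calc _ ≤ ∫ y in (0:ℝ)..(2*π), 4 / (1 - (‖z0‖ * exp x)^2) *
          poissonKernel 0 (z0 * (exp x : ℝ)) (circleMap 0 1 y) := by
          refine intervalIntegral.integral_mono_on h2π ?_ ((circ_pk hw).const_mul _) (fun y _ => KK_sq h0 hx.2)
          apply ContinuousOn.intervalIntegrable_of_Icc h2π
          refine hcont.comp (by fun_prop) ?_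
          intro y _
          exact KK_den h0 hx.2
      _ = _ := by
          rw [intervalIntegral.integral_const_mul, int_pk hw]; ring
  have hc2 : ContinuousOn (fun x => 8 * π * (1 / (1 - (‖z0‖ * exp x)^2))) (Icc a 0) := by
    refine continuousOn_const.mul (continuousOn_const.div (by fun_prop) ?_)
    intro x hx
    exact (hpos x hx.2).ne'
  refine (intervalIntegral.integral_mono_on ha
    ((cont_inner h2π (sub_OK h0) hcont).intervalIntegrable_of_Icc ha) (hc2.intervalIntegrable_of_Icc ha) hin).trans ?_
  rw [intervalIntegral.integral_eq_sub_of_hasDerivAt (f := fun x => 8 * π * (x - 1/2 * log (1 - (‖z0‖ * exp x)^2)))]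
  · have := log_le_sub_one_of_pos (hpos a ha)
    have h3 : log (1 - (‖z0‖ * exp a)^2) ≤ 0 := by nlinarith [sq_nonneg (‖z0‖ * exp a)]
    simp only [exp_zero, mul_one]
    nlinarith [pi_pos]
  · intro x hx
    rw [uIcc_of_le ha] at hx
    have h1 : HasDerivAt (fun x => 1 - (‖z0‖ * exp x)^2) (-(2 * (‖z0‖ * exp x)^2)) x := by
      have := (((Real.hasDerivAt_exp x).const_mul ‖z0‖).pow 2).const_sub 1
      refine this.congr_deriv ?_
      ring
    have h2 := ((hasDerivAt_id x).sub ((h1.log (hpos x hx.2).ne').const_mul (1/2))).const_mul (8*π)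
    refine h2.congr_deriv ?_
    have := (hpos x hx.2).ne'
    generalize (‖z0‖ * exp x)^2 = q at this ⊢
    field_simp
    ring
  · rw [← uIcc_of_le ha] at hc2
    exact hc2.intervalIntegrable

lemma pk_nonneg {w z : ℂ} (hw : ‖w‖ < 1) (hz : ‖z‖ = 1) : 0 ≤ poissonKernel 0 w z := by
  rw [poissonKernel_def]
  simp only [sub_zero, hz]
  have := norm_nonneg w
  apply div_nonneg <;> nlinarith [sq_nonneg ‖z - w‖]

lemma subharm {F : ℂ → ℂ} (hF : AnalyticOnNhd ℂ F (closedBall 0 1)) {z0 : ℂ} (h0 : ‖z0‖ < 1) :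
    uu (F z0) ≤ circleAverage (fun z => poissonKernel 0 z0 z * uu (F z)) 0 1 := by
  set c := F z0 with hc
  have hh : AnalyticOnNhd ℂ (fun z => 1 + conj c * F z) (closedBall 0 1) :=
    analyticOnNhd_const.add (analyticOnNhd_const.mul hF)
  have hz0 : z0 ∈ ball (0:ℂ) 1 := by simpa using h0
  have e1 : 1 + conj c * c = ((1 + ‖c‖^2 : ℝ) : ℂ) := by
    rw [Complex.conj_mul']; push_cast; rfl
  have e2 : ‖1 + conj c * c‖ = 1 + ‖c‖^2 := by
    rw [e1, Complex.norm_real, norm_eq_abs, abs_of_pos (by positivity)]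
  have h1 := poisson_log hz0 hh (by
    rw [← norm_pos_iff, ← hc, e2]; positivity)
  rw [← hc, e2] at h1
  have hFc : ContinuousOn F (sphere 0 |1|) := hF.continuousOn.mono (by rw [abs_one]; exact sphere_subset_closedBall)
  have hci : CircleIntegrable (fun z => uu (F z)) 0 1 :=
    (continuous_uu.comp_continuousOn hFc).circleIntegrable'
  have hci2 : CircleIntegrable (fun z => uu c + uu (F z)) 0 1 :=
    ((continuousOn_const.add (continuous_uu.comp_continuousOn hFc))).circleIntegrable'
  have hmer : CircleIntegrable (fun z => log ‖1 + conj c * F z‖) 0 1 := by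
    apply MeromorphicOn.circleIntegrable_log_norm
    intro z hz
    exact (hh z (by rw [abs_one] at hz; exact sphere_subset_closedBall hz)).meromorphicAt
  have h2 : circleAverage (fun z => poissonKernel 0 z0 z * log ‖1 + conj c * F z‖) 0 1 ≤
      circleAverage (fun z => poissonKernel 0 z0 z * (uu c + uu (F z))) 0 1 := by
    apply circleAverage_mono (circleIntegrable_poisson_mul hz0 hmer) (circleIntegrable_poisson_mul hz0 hci2)
    intro z hz
    have hz1 : ‖z‖ = 1 := by simpa using hz
    apply mul_le_mul_of_nonneg_left _ (pk_nonneg h0 hz1)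
    by_cases hzero : 1 + conj c * F z = 0
    · rw [hzero]; simp
      linarith [uu_nonneg c, uu_nonneg (F z)]
    · have hp : 0 < ‖1 + conj c * F z‖ := norm_pos_iff.2 hzero
      have h3 : ‖1 + conj c * F z‖ ^ 2 ≤ (1 + ‖c‖^2) * (1 + ‖F z‖^2) := by
        have : ‖1 + conj c * F z‖ ≤ 1 + ‖c‖ * ‖F z‖ := by
          refine (norm_add_le _ _).trans ?_
          simp
        have h4 : ‖1 + conj c * F z‖ ^ 2 ≤ (1 + ‖c‖ * ‖F z‖)^2 := by gcongr
        nlinarith [sq_nonneg (‖c‖ - ‖F z‖)]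
      have h4 := log_le_log (by positivity) h3
      rw [log_pow, log_mul (by positivity) (by positivity)] at h4
      unfold uu
      push_cast at h4
      linarith
  have h3 : circleAverage (fun z => poissonKernel 0 z0 z * (uu c + uu (F z))) 0 1 =
      uu c + circleAverage (fun z => poissonKernel 0 z0 z * uu (F z)) 0 1 := by
    have : (fun z => poissonKernel 0 z0 z * (uu c + uu (F z))) =
      (fun z => poissonKernel 0 z0 z * uu c) + (fun z => poissonKernel 0 z0 z * uu (F z)) := by
      ext z; simp; ring
    rw [this, circleAverage_add (circleIntegrable_poisson_mul hz0 (circleIntegrable_const _ _ _))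
      (circleIntegrable_poisson_mul hz0 hci)]
    congr 1
    rw [circleAverage_def, intervalIntegral.integral_mul_const, int_pk h0, smul_eq_mul]
    field_simp
  have h4 : 2 * uu c = log (1 + ‖c‖^2) := by unfold uu; ring
  linarith

lemma iter_eq {φ : ℂ → ℝ} {O : Set ℂ} {a b : ℝ} (ha : a ≤ 0)
    (hb : 0 ≤ b) (hsub : Icc a 0 ×ℂ Icc 0 b ⊆ O) (hφ : ContinuousOn φ O) :
    ∫ x in a..0, ∫ y in (0:ℝ)..b, φ (x + y * Complex.I) = ∫ w in Ioo a 0 ×ℂ Ioo 0 b, φ w := by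
  simp only [intervalIntegral.integral_of_le ha, intervalIntegral.integral_of_le hb, integral_Ioc_eq_integral_Ioo]
  have h1 := Complex.volume_preserving_equiv_real_prod.symm.setIntegral_preimage_emb
    Complex.measurableEquivRealProd.symm.measurableEmbedding φ (Ioo a 0 ×ℂ Ioo 0 b)
  rw [← h1]
  have h2 : (Complex.measurableEquivRealProd.symm ⁻¹' (Ioo a 0 ×ℂ Ioo 0 b)) = Ioo a 0 ×ˢ Ioo 0 b := by
    ext p; simp [Complex.mem_reProdIm]
  rw [h2, Measure.volume_eq_prod, setIntegral_prod]
  · simp [Complex.mk_eq_add_mul_I]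
  · have hc : ContinuousOn (fun p : ℝ × ℝ => φ (Complex.measurableEquivRealProd.symm p)) (Icc a 0 ×ˢ Icc 0 b) := by
      refine hφ.comp ?_ ?_
      · exact Complex.equivRealProdCLM.symm.continuous.continuousOn
      · intro p hp; exact hsub hp
    exact (hc.integrableOn_compact (isCompact_Icc.prod isCompact_Icc)).mono_set (prod_mono Ioo_subset_Icc_self Ioo_subset_Icc_self)

lemma AtMost_exp {m : ℕ} {F : ℂ → ℂ} (h : AtMost m F (ball 0 1)) (a : ℝ) :
    AtMost m (fun w => F (Complex.exp w)) (Ioo a 0 ×ℂ Ioo 0 (2*π)) := by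
  classical
  intro c T hT
  have hinj : Set.InjOn Complex.exp T := by
    intro x hx y hy hxy
    have hx' := (hT x hx).1.2
    have hy' := (hT y hy).1.2
    simp only [mem_preimage, mem_Ioo] at hx' hy'
    obtain ⟨n, hn⟩ := Complex.exp_eq_exp_iff_exists_int.1 hxy
    have him := congrArg Complex.im hn
    simp at him
    have hπ := pi_pos
    have h1 : (n:ℝ) < 1 := by
      by_contra hcon; push Not at hcon; nlinarith
    have h2 : (-1:ℝ) < n := by
      by_contra hcon; push Not at hcon; nlinarith
    have h3 : n < 1 := by exact_mod_cast h1
    have h4 : -1 < n := by exact_mod_cast h2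
    have : n = 0 := by omega
    rw [hn, this]; simp
  rw [← Finset.card_image_of_injOn hinj]
  apply h c
  intro z hz
  obtain ⟨w, hw, rfl⟩ := Finset.mem_image.1 hz
  refine ⟨?_, (hT w hw).2⟩
  rw [mem_ball_zero_iff, Complex.norm_exp]
  rw [← exp_zero]
  exact exp_lt_exp.2 (hT w hw).1.1.2

lemma rect_sub_ball {R : ℝ} (hR : 1 < R) {a b : ℝ} :
    Icc a 0 ×ℂ Icc 0 b ⊆ Complex.exp ⁻¹' (ball 0 R) := by
  intro w hw
  rw [mem_preimage, mem_ball_zero_iff, Complex.norm_exp]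
  have : exp w.re ≤ 1 := exp_le_one_iff.2 hw.1.2
  linarith

lemma norm_AA_sq (g : ℂ → ℂ) (w : ℂ) :
    ‖AA g w‖^2 = ‖deriv g w‖^2 * (‖g w‖^2 / (1 + ‖g w‖^2)^2) := by
  have h : (0:ℝ) < 1 + ‖g w‖^2 := by positivity
  rw [AA, norm_smul, norm_mul, Complex.norm_conj, norm_eq_abs, abs_of_pos (inv_pos.2 h)]
  field_simp

lemma area_A {m : ℕ} {F : ℂ → ℂ} {R T a : ℝ} (hR : 1 < R) (ha : a ≤ 0)
    (hF : DifferentiableOn ℂ F (ball 0 R)) (hm : AtMost m F (ball 0 1))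
    (hT : ∀ z ∈ ball (0:ℂ) 1, uu (F z) ≤ T) :
    ∫ x in a..0, ∫ y in (0:ℝ)..(2*π), ‖AA (fun w => F (Complex.exp w)) (x + y * Complex.I)‖^2 ≤ m * (2 * π * T) := by
  set g : ℂ → ℂ := fun w => F (Complex.exp w) with hg
  have h2π : (0:ℝ) ≤ 2*π := by positivity
  have hT0 : 0 ≤ T := (uu_nonneg _).trans (hT 0 (by simp))
  have hOo : IsOpen (Complex.exp ⁻¹' (ball 0 R)) := isOpen_ball.preimage Complex.continuous_exp
  have hgd : DifferentiableOn ℂ g (Complex.exp ⁻¹' (ball 0 R)) :=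
    hF.comp Complex.differentiable_exp.differentiableOn (fun w hw => hw)
  have hAc := continuousOn_AA hOo hgd
  rw [iter_eq (φ := fun w => ‖AA g w‖^2) ha h2π (rect_sub_ball hR) (hAc.norm.pow 2)]
  set Q := Ioo a 0 ×ℂ Ioo 0 (2*π) with hQ
  have hQo : IsOpen Q := isOpen_Ioo.reProdIm isOpen_Ioo
  have hQs : Q ⊆ Complex.exp ⁻¹' (ball 0 R) := by
    refine Subset.trans ?_ (rect_sub_ball (a := a) (b := 2*π) hR)
    intro w hw
    exact ⟨Ioo_subset_Icc_self hw.1, Ioo_subset_Icc_self hw.2⟩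
  rw [integral_eq_lintegral_of_nonneg_ae (ae_of_all _ (fun w => sq_nonneg _))
    (((hAc.norm.pow 2).mono hQs).aestronglyMeasurable hQo.measurableSet)]
  apply ENNReal.toReal_le_of_le_ofReal (by positivity)
  set M := √(exp (2*T) - 1) with hM
  have hM2 : M^2 = exp (2*T) - 1 := by
    rw [hM, sq_sqrt]
    have := add_one_le_exp (2*T)
    linarith
  calc ∫⁻ w in Q, ENNReal.ofReal (‖AA g w‖^2)
      = ∫⁻ w in Q, ENNReal.ofReal (‖deriv g w‖^2) * (fun y : ℂ => ENNReal.ofReal (‖y‖^2 / (1 + ‖y‖^2)^2)) (g w) := by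
        congr 1; ext w
        rw [norm_AA_sq, ENNReal.ofReal_mul (by positivity)]
    _ ≤ m * ∫⁻ y in g '' Q, ENNReal.ofReal (‖y‖^2 / (1 + ‖y‖^2)^2) :=
        area_bound_s3 hQo (hgd.mono hQs) (AtMost_exp hm a) (by fun_prop)
    _ ≤ m * ∫⁻ y in closedBall (0:ℂ) M, ENNReal.ofReal (‖y‖^2 / (1 + ‖y‖^2)^2) := by
        gcongr
        rintro _ ⟨w, hw, rfl⟩
        rw [mem_closedBall_zero_iff]
        apply le_sqrt_of_sq_le
        have h1 := hT (Complex.exp w) (by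
          rw [mem_ball_zero_iff, Complex.norm_exp, ← exp_zero]
          exact exp_lt_exp.2 hw.1.2)
        have h2 : log (1 + ‖g w‖^2) ≤ 2 * T := by unfold uu at h1; simp only [hg]; linarith
        have := (log_le_iff_le_exp (by positivity)).1 h2
        linarith
    _ ≤ m * ENNReal.ofReal (π * log (1 + M^2)) := by
        gcongr
        exact area_sphere (sqrt_nonneg _)
    _ = ENNReal.ofReal (m * (2 * π * T)) := by
        rw [hM2, add_sub_cancel, log_exp, ENNReal.ofReal_mul (p := (m:ℝ)) (by positivity), ENNReal.ofReal_natCast]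
        congr 2; ring

lemma main_ineq {m : ℕ} (hm0 : 0 < m) {F : ℂ → ℂ} {R T : ℝ} (hR : 1 < R)
    (hF : DifferentiableOn ℂ F (ball 0 R)) (hm : AtMost m F (ball 0 1))
    (hT : ∀ z ∈ ball (0:ℂ) 1, uu (F z) ≤ T) (hhalf : ∀ z : ℂ, ‖z‖ ≤ 1/2 → ‖F z‖ ≤ 1)
    {z0 : ℂ} (h0 : ‖z0‖ < 1) :
    uu (F z0) ≤ 1/2 * log 2 + T / 2 + m * (2 * log 2 - log (1 - ‖z0‖^2)) := by
  set g : ℂ → ℂ := fun w => F (Complex.exp w) with hg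
  set a := -log 2 with hadef
  have hl2 : 0 < log 2 := log_pos (by norm_num)
  have ha : a ≤ 0 := by linarith
  have hea : exp a = 1/2 := by rw [hadef, exp_neg, exp_log (by norm_num)]; norm_num
  have h2π : (0:ℝ) ≤ 2*π := by positivity
  set O := Complex.exp ⁻¹' (ball 0 R) ∩ OK z0 with hO
  have hOo : IsOpen O := (isOpen_ball.preimage Complex.continuous_exp).inter (isOpen_OK z0)
  have hgd : DifferentiableOn ℂ g O :=
    hF.comp Complex.differentiable_exp.differentiableOn (fun w hw => hw.1)
  have hKd : DifferentiableOn ℂ (KK z0) O := (diff_KK z0).mono inter_subset_right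
  have hsub : Icc a 0 ×ℂ Icc 0 (2*π) ⊆ O := subset_inter (rect_sub_ball hR) (sub_OK h0)
  have hper : ∀ x : ℝ, Complex.exp (x + (2*π : ℝ) * Complex.I) = Complex.exp x := by
    intro x
    have := Complex.exp_periodic x
    push_cast
    exact this
  have st := stokes_core (g := g) (K := KK z0) hOo ha h2π hsub hgd hKd
    (by intro x; simp only [hg]; rw [hper]) (by intro x; simp only [KK]; rw [hper])
  have hAc := continuousOn_AA hOo hgd
  have hKc := hKd.continuousOn
  -- first term
  have t1 : ∫ y in (0:ℝ)..(2*π), uu (g (y * Complex.I)) * (KK z0 (y * Complex.I)).re =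
      2 * π * circleAverage (fun z => poissonKernel 0 z0 z * uu (F z)) 0 1 := by
    rw [circleAverage_def, smul_eq_mul, ← mul_assoc, mul_inv_cancel₀ (by positivity), one_mul]
    congr 1; ext y
    have := KK_re z0 0 y
    simp only [Complex.ofReal_zero, zero_add, exp_zero, Complex.ofReal_one, mul_one] at this
    rw [this, mul_comm]
    simp [hg, circleMap]
  -- second term
  have t2 : ∫ y in (0:ℝ)..(2*π), uu (g (a + y * Complex.I)) * (KK z0 (a + y * Complex.I)).re ≤
      2 * π * (1/2 * log 2) := by
    have hw : ‖z0 * (exp a : ℝ)‖ < 1 := by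
      simp only [norm_mul, Complex.norm_real, norm_eq_abs, hea]
      nlinarith [norm_nonneg z0]
    calc _ ≤ ∫ y in (0:ℝ)..(2*π), (1/2 * log 2) * poissonKernel 0 (z0 * (exp a : ℝ)) (circleMap 0 1 y) := by
          refine intervalIntegral.integral_mono_on h2π ?_ ((circ_pk hw).const_mul _) ?_
          · apply ContinuousOn.intervalIntegrable_of_Icc h2π
            have : ContinuousOn (fun w => uu (g w) * (KK z0 w).re) O :=
              (continuous_uu.comp_continuousOn hgd.continuousOn).mul (Complex.continuous_re.comp_continuousOn hKc)
            refine this.comp (f := fun y : ℝ => (a:ℂ) + y * Complex.I) (by fun_prop) ?_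
            intro y hy
            exact hsub ⟨by simpa using ha, by simpa using hy⟩
          · intro y hy
            rw [KK_re]
            apply mul_le_mul_of_nonneg_right _ (pk_nonneg hw (by simp))
            have h1 : ‖g (a + y * Complex.I)‖ ≤ 1 := by
              apply hhalf
              rw [Complex.norm_exp]
              simp [hea]
            unfold uu
            gcongr
            nlinarith [norm_nonneg (g (a + y * Complex.I))]
      _ = _ := by
          rw [intervalIntegral.integral_const_mul, int_pk hw]; ring
  -- third term
  have hmpos : (0:ℝ) < m := by exact_mod_cast hm0
  have t3 : ∫ x in a..0, ∫ y in (0:ℝ)..(2*π), ‖KK z0 (x + y * Complex.I)‖ * ‖AA g (x + y * Complex.I)‖ ≤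
      1/(2*m) * (m * (2 * π * T)) + m/2 * (2 * π * (4 * (-a) - 2 * log (1 - ‖z0‖^2))) := by
    have c1 : ContinuousOn (fun w => ‖KK z0 w‖ * ‖AA g w‖) O := hKc.norm.mul hAc.norm
    have c2 : ContinuousOn (fun w => ‖AA g w‖^2) O := hAc.norm.pow 2
    have c3 : ContinuousOn (fun w => ‖KK z0 w‖^2) O := hKc.norm.pow 2
    have i2 := (cont_inner h2π hsub c2).intervalIntegrable_of_Icc (μ := volume) ha
    have i3 := (cont_inner h2π hsub c3).intervalIntegrable_of_Icc (μ := volume) ha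
    have hline : ∀ x ∈ Icc a 0, ∀ φ : ℂ → ℝ, ContinuousOn φ O →
        IntervalIntegrable (fun y : ℝ => φ (x + y * Complex.I)) volume 0 (2*π) := by
      intro x hx φ hφ
      apply ContinuousOn.intervalIntegrable_of_Icc h2π
      refine hφ.comp (f := fun y : ℝ => (x:ℂ) + y * Complex.I) (by fun_prop) ?_
      intro y hy
      exact hsub ⟨by simpa using hx, by simpa using hy⟩
    calc _ ≤ ∫ x in a..0, (1/(2*m) * (∫ y in (0:ℝ)..(2*π), ‖AA g (x + y * Complex.I)‖^2) +
            m/2 * (∫ y in (0:ℝ)..(2*π), ‖KK z0 (x + y * Complex.I)‖^2)) := by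
          refine intervalIntegral.integral_mono_on ha
            ((cont_inner h2π hsub c1).intervalIntegrable_of_Icc ha) ((i2.const_mul _).add (i3.const_mul _)) ?_
          intro x hx
          rw [← intervalIntegral.integral_const_mul, ← intervalIntegral.integral_const_mul,
            ← intervalIntegral.integral_add ((hline x hx _ c2).const_mul _) ((hline x hx _ c3).const_mul _)]
          refine intervalIntegral.integral_mono_on h2π (hline x hx _ c1)
            (((hline x hx _ c2).const_mul _).add ((hline x hx _ c3).const_mul _)) ?_
          intro y _
          generalize ‖AA g (x + y * Complex.I)‖ = p
          generalize ‖KK z0 (x + y * Complex.I)‖ = q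
          have : 1/(2*m) * p^2 + m/2 * q^2 - q * p = 1/(2*m) * (p - m*q)^2 := by field_simp; ring
          have : 0 ≤ 1/(2*m) * (p - m*q)^2 := by positivity
          linarith
      _ = 1/(2*m) * (∫ x in a..0, ∫ y in (0:ℝ)..(2*π), ‖AA g (x + y * Complex.I)‖^2) +
            m/2 * (∫ x in a..0, ∫ y in (0:ℝ)..(2*π), ‖KK z0 (x + y * Complex.I)‖^2) := by
          rw [intervalIntegral.integral_add (i2.const_mul _) (i3.const_mul _),
            intervalIntegral.integral_const_mul, intervalIntegral.integral_const_mul]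
      _ ≤ _ := by
          gcongr
          · exact area_A hR ha hF hm hT
          · exact int_KK_sq h0 ha
  have hsh := subharm (F := F) ((hF.analyticOnNhd isOpen_ball).mono (closedBall_subset_ball hR)) h0
  rw [t1] at st
  have e : 1/(2*m) * (m * (2 * π * T)) + m/2 * (2 * π * (4 * (-a) - 2 * log (1 - ‖z0‖^2))) =
      2 * π * (T/2 + m * (2 * log 2 - log (1 - ‖z0‖^2))) := by
    rw [hadef]; field_simp; ring
  rw [e] at t3
  have hfin : 2 * π * circleAverage (fun z => poissonKernel 0 z0 z * uu (F z)) 0 1 ≤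
      2 * π * (1/2 * log 2 + T / 2 + m * (2 * log 2 - log (1 - ‖z0‖^2))) := by
    have : 2 * π * (1/2 * log 2 + T / 2 + m * (2 * log 2 - log (1 - ‖z0‖^2))) =
      2 * π * (1/2 * log 2) + 2 * π * (T/2 + m * (2 * log 2 - log (1 - ‖z0‖^2))) := by ring
    linarith
  exact hsh.trans (le_of_mul_le_mul_left hfin (by positivity))

lemma AtMost_scale {m : ℕ} {f : ℂ → ℂ} (h : AtMost m f (ball 0 1)) {ρ : ℝ} (h0 : 0 < ρ) (h1 : ρ ≤ 1) :
    AtMost m (fun z => f (ρ * z)) (ball 0 1) := by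
  classical
  intro c T hT
  have hρ : (ρ:ℂ) ≠ 0 := by exact_mod_cast h0.ne'
  have hinj : Function.Injective (fun z : ℂ => (ρ:ℂ) * z) := mul_right_injective₀ hρ
  rw [← Finset.card_image_of_injective T hinj]
  apply h c
  intro z hz
  obtain ⟨w, hw, rfl⟩ := Finset.mem_image.1 hz
  refine ⟨?_, (hT w hw).2⟩
  have := (hT w hw).1
  rw [mem_ball_zero_iff] at this ⊢
  rw [norm_mul, Complex.norm_real, norm_eq_abs, abs_of_pos h0]
  nlinarith [norm_nonneg w]

lemma diff_scale {f : ℂ → ℂ} (hf : DifferentiableOn ℂ f (ball 0 1)) {ρ : ℝ} (h0 : 0 < ρ) :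
    DifferentiableOn ℂ (fun z => f (ρ * z)) (ball 0 (1/ρ)) := by
  refine hf.comp (by fun_prop) ?_
  intro z hz
  rw [mem_ball_zero_iff] at hz ⊢
  rw [norm_mul, Complex.norm_real, norm_eq_abs, abs_of_pos h0]
  rw [lt_div_iff₀ h0] at hz
  linarith

lemma growth_bdd {m : ℕ} (hm0 : 0 < m) {f : ℂ → ℂ} (hf : DifferentiableOn ℂ f (ball 0 1))
    (hm : AtMost m f (ball 0 1)) (hhalf : ∀ z : ℂ, ‖z‖ ≤ 1/2 → ‖f z‖ ≤ 1) {B : ℝ}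
    (hB : ∀ z ∈ ball (0:ℂ) 1, uu (f z) ≤ B) (n : ℕ) :
    ∀ z ∈ ball (0:ℂ) 1, uu (f z) ≤ 2 * m * (-log (1 - ‖z‖)) + (log 2 + 8 * m * log 2) + B / 2^n := by
  have hl2 : 0 < log 2 := log_pos (by norm_num)
  induction n with
  | zero =>
    intro z hz
    have h1 := hB z hz
    rw [mem_ball_zero_iff] at hz
    have : log (1 - ‖z‖) ≤ 0 := log_nonpos (by linarith) (by linarith [norm_nonneg z])
    have h2 : 0 ≤ 2 * m * (-log (1 - ‖z‖)) := by
      have : 0 ≤ -log (1 - ‖z‖) := by linarith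
      positivity
    have h3 : 0 ≤ 8 * m * log 2 := by positivity
    simp
    linarith
  | succ n ih =>
    intro z hz
    rw [mem_ball_zero_iff] at hz
    set r := ‖z‖ with hr
    have hr0 : 0 ≤ r := norm_nonneg z
    set ρ := (1 + r)/2 with hρ
    have hρ0 : 0 < ρ := by positivity
    have hρ1 : ρ < 1 := by rw [hρ]; linarith
    have hρc : (ρ:ℂ) ≠ 0 := by exact_mod_cast hρ0.ne'
    have hnρ : ∀ w : ℂ, ‖(ρ:ℂ) * w‖ = ρ * ‖w‖ := by
      intro w; rw [norm_mul, Complex.norm_real, norm_eq_abs, abs_of_pos hρ0]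
    have hz0 : ‖z / ρ‖ = r / ρ := by
      rw [norm_div, Complex.norm_real, norm_eq_abs, abs_of_pos hρ0]
    have key := main_ineq hm0 (F := fun z => f (ρ * z)) (R := 1/ρ)
      (T := 2 * m * (-log (1 - ρ)) + (log 2 + 8 * m * log 2) + B / 2^n)
      (by rw [lt_div_iff₀ hρ0]; linarith) (diff_scale hf hρ0) (AtMost_scale hm hρ0 hρ1.le) (by
        intro w hw
        rw [mem_ball_zero_iff] at hw
        have h1 : ‖(ρ:ℂ) * w‖ ≤ ρ := by rw [hnρ]; nlinarith
        refine (ih _ (by rw [mem_ball_zero_iff]; linarith)).trans ?_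
        gcongr) (by
        intro w hw
        apply hhalf
        rw [hnρ]; nlinarith [norm_nonneg w]) (z0 := z / ρ) (by
        rw [hz0, div_lt_one hρ0, hρ]; linarith)
    have e1 : (ρ:ℂ) * (z / ρ) = z := by field_simp
    simp only [e1] at key
    rw [hz0] at key
    have e2 : log (1 - ρ) = log (1 - r) - log 2 := by
      rw [← log_div (by linarith) (by norm_num)]; congr 1; rw [hρ]; ring
    have e3 : log (1 - r) - log 2 ≤ log (1 - (r/ρ)^2) := by
      rw [← log_div (by linarith) (by norm_num)]
      apply log_le_log (by linarith)
      rw [hρ]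
      have : 1 - (r / ((1 + r)/2))^2 = (1 - r) * (1 + 3*r) / (1 + r)^2 := by field_simp; ring
      rw [this, le_div_iff₀ (by positivity)]
      nlinarith [mul_nonneg (sub_nonneg.2 hz.le) hr0]
    rw [e2] at key
    have e4 : (m:ℝ) * (2 * log 2 - log (1 - (r/ρ)^2)) ≤ m * (2 * log 2 - (log (1 - r) - log 2)) := by gcongr
    have e5 : B / 2^(n+1) = (B / 2^n)/2 := by rw [pow_succ]; field_simp
    rw [e5]
    linarith

lemma growth_uu {m : ℕ} (hm0 : 0 < m) {f : ℂ → ℂ} (hf : DifferentiableOn ℂ f (ball 0 1))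
    (hm : AtMost m f (ball 0 1)) (hhalf : ∀ z : ℂ, ‖z‖ ≤ 1/2 → ‖f z‖ ≤ 1) :
    ∀ z ∈ ball (0:ℂ) 1, uu (f z) ≤ 2 * m * (-log (1 - ‖z‖)) + (log 2 + 8 * m * log 2) := by
  intro z hz
  -- bounded dilations
  have h1 : ∀ δ : ℝ, δ ∈ Ioo (0:ℝ) 1 → uu (f (δ * z)) ≤ 2 * m * (-log (1 - ‖z‖)) + (log 2 + 8 * m * log 2) := by
    intro δ hδ
    have hd := diff_scale hf hδ.1
    have hsub : closedBall (0:ℂ) 1 ⊆ ball 0 (1/δ) := closedBall_subset_ball (by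
      rw [lt_div_iff₀ hδ.1]; linarith [hδ.2])
    have hc : ContinuousOn (fun z => uu (f (δ * z))) (closedBall (0:ℂ) 1) :=
      continuous_uu.comp_continuousOn (hd.continuousOn.mono hsub)
    obtain ⟨B, hB⟩ := (isCompact_closedBall (0:ℂ) 1).bddAbove_image hc
    have hB' : ∀ w ∈ ball (0:ℂ) 1, uu (f (δ * w)) ≤ B := fun w hw =>
      hB ⟨w, ball_subset_closedBall hw, rfl⟩
    have h2 := fun n => growth_bdd hm0 (hd.mono (ball_subset_closedBall.trans hsub)) (AtMost_scale hm hδ.1 hδ.2.le)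
      (by
        intro w hw
        apply hhalf
        rw [norm_mul, Complex.norm_real, norm_eq_abs, abs_of_pos hδ.1]
        nlinarith [norm_nonneg w, hδ.2]) hB' n z hz
    have h3 : Tendsto (fun n : ℕ => 2 * m * (-log (1 - ‖z‖)) + (log 2 + 8 * m * log 2) + B / 2^n) atTop
        (𝓝 (2 * m * (-log (1 - ‖z‖)) + (log 2 + 8 * m * log 2) + 0)) := by
      apply Tendsto.const_add
      have := (tendsto_pow_atTop_nhds_zero_of_lt_one (r := (1/2:ℝ)) (by norm_num) (by norm_num)).const_mul B
      simpa [div_eq_mul_inv] using this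
    rw [add_zero] at h3
    exact ge_of_tendsto' h3 h2
  have h4 : Tendsto (fun δ : ℝ => uu (f (δ * z))) (𝓝[<] 1) (𝓝 (uu (f z))) := by
    have c1 : ContinuousAt (fun δ : ℝ => uu (f (δ * z))) 1 := by
      have : ContinuousAt f (((1:ℝ):ℂ) * z) := by
        simpa using (hf.continuousOn.continuousAt (isOpen_ball.mem_nhds hz))
      have c2 : ContinuousAt (fun δ : ℝ => f ((δ:ℂ) * z)) 1 :=
        ContinuousAt.comp (f := fun δ : ℝ => (δ:ℂ) * z) (x := 1) this (by fun_prop)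
      exact continuous_uu.continuousAt.comp c2
    have := c1.tendsto
    simp only [Complex.ofReal_one, one_mul] at this
    exact this.mono_left nhdsWithin_le_nhds
  refine le_of_tendsto h4 ?_
  filter_upwards [Ioo_mem_nhdsLT (show (0:ℝ) < 1 by norm_num)] with δ hδ
  exact h1 δ hδ

lemma growth_s3 {m : ℕ} (hm0 : 0 < m) {f : ℂ → ℂ} (hf : DifferentiableOn ℂ f (ball 0 1))
    (hm : AtMost m f (ball 0 1)) (hhalf : ∀ z : ℂ, ‖z‖ ≤ 1/2 → ‖f z‖ ≤ 1) :
    ∀ z ∈ ball (0:ℂ) 1, ‖f z‖ * (1 - ‖z‖)^(2*m) ≤ 2^(1 + 8*m) := by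
  intro z hz
  have h := growth_uu hm0 hf hm hhalf z hz
  rw [mem_ball_zero_iff] at hz
  have hp : 0 < 1 - ‖z‖ := by linarith
  rcases (norm_nonneg (f z)).eq_or_lt with h0 | h0
  · rw [← h0]; simp
  · have h1 : log ‖f z‖ ≤ uu (f z) := by
      have : log (‖f z‖^2) ≤ log (1 + ‖f z‖^2) := log_le_log (by positivity) (by linarith)
      rw [log_pow] at this
      unfold uu
      push_cast at this
      linarith
    rw [← log_le_log_iff (by positivity) (by positivity), log_mul (by positivity) (by positivity), log_pow, log_pow]
    push_cast
    linarith

lemma jensen_le {g : ℂ → ℂ} {R d : ℝ} (hR : 0 < R) (hd : 0 < d) {m : ℕ}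
    (hg : AnalyticOnNhd ℂ g (closedBall 0 R)) (h0 : g 0 ≠ 0) (hdR : d ≤ R)
    (hz : ∀ u ∈ closedBall (0:ℂ) R, g u = 0 → d ≤ ‖u‖)
    (hm : ∀ T : Finset ℂ, (∀ u ∈ T, u ∈ closedBall (0:ℂ) R) → ∑ u ∈ T, analyticOrderAt g u ≤ m) :
    circleAverage (fun z => log ‖g z‖) 0 R ≤ log ‖g 0‖ + m * log (R / d) := by
  have hRa : |R| = R := abs_of_pos hR
  have hJ := MeromorphicOn.circleAverage_log_norm (c := 0) (f := g) hR.ne' (by rw [hRa]; exact hg.meromorphicOn)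
  rw [hRa] at hJ
  set D := MeromorphicOn.divisor g (closedBall 0 R) with hD
  have hDv : ∀ u ∈ closedBall (0:ℂ) R, D u = ((analyticOrderAt g u).toNat : ℤ) := by
    intro u hu
    rw [hD, MeromorphicOn.AnalyticOnNhd.divisor_apply hg hu]
    cases analyticOrderAt g u with
    | top => simp
    | coe n => simp
  have hDsupp : ∀ u, u ∉ closedBall (0:ℂ) R → D u = 0 := by
    intro u hu
    exact Function.locallyFinsuppWithin.apply_eq_zero_of_notMem D hu
  have h0m : (0:ℂ) ∈ closedBall (0:ℂ) R := by simp [hR.le]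
  have hD0 : D 0 = 0 := by
    rw [hDv 0 h0m, ((hg 0 h0m).analyticOrderAt_eq_zero).2 h0]; simp
  rw [hD0, (hg 0 h0m).meromorphicTrailingCoeffAt_of_ne_zero h0] at hJ
  have hfin := D.finiteSupport (isCompact_closedBall 0 R)
  rw [finsum_eq_sum_of_support_subset (s := hfin.toFinset)] at hJ
  · rw [hJ]
    have hlog : 0 ≤ log (R/d) := log_nonneg (by rw [le_div_iff₀ hd]; linarith)
    have hmem : ∀ u ∈ hfin.toFinset, u ∈ closedBall (0:ℂ) R := by
      intro u hu
      by_contra hcon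
      exact (hfin.mem_toFinset.1 hu) (hDsupp u hcon)
    have hT := hm hfin.toFinset hmem
    have h1 : ∑ u ∈ hfin.toFinset, (D u : ℝ) ≤ m := by
      have h2 : ∀ u ∈ hfin.toFinset, (D u : ℝ) = ((analyticOrderAt g u).toNat : ℝ) := by
        intro u hu; rw [hDv u (hmem u hu)]; simp
      rw [Finset.sum_congr rfl h2]
      have h3 : ∑ u ∈ hfin.toFinset, (((analyticOrderAt g u).toNat : ℕ) : ℕ∞) ≤ m := by
        refine le_trans (Finset.sum_le_sum (fun u _ => ENat.natCast_toNat_le_self _)) hT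
      exact_mod_cast h3
    have h4 : ∑ u ∈ hfin.toFinset, (D u : ℝ) * log (R * ‖0 - u‖⁻¹) ≤ ∑ u ∈ hfin.toFinset, (D u : ℝ) * log (R / d) := by
      apply Finset.sum_le_sum
      intro u hu
      have hDu : D u ≠ 0 := hfin.mem_toFinset.1 hu
      have hub := hmem u hu
      have hgu : g u = 0 := by
        by_contra hcon
        apply hDu
        rw [hDv u hub, ((hg u hub).analyticOrderAt_eq_zero).2 hcon]; simp
      have hdu := hz u hub hgu
      have hDp : (0:ℝ) ≤ D u := by rw [hDv u hub]; simp
      apply mul_le_mul_of_nonneg_left _ hDp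
      rw [zero_sub, norm_neg, ← div_eq_mul_inv]
      have : 0 < ‖u‖ := by linarith
      apply log_le_log (by positivity)
      gcongr
    rw [← Finset.sum_mul] at h4
    have h5 : (∑ u ∈ hfin.toFinset, (D u : ℝ)) * log (R/d) ≤ m * log (R/d) := by gcongr
    push_cast
    linarith
  · intro u hu
    rw [Finset.mem_coe, hfin.mem_toFinset]
    intro hcon
    apply hu
    simp [hcon]

lemma series_fps {a : ℕ → ℂ} {f : ℂ → ℂ}
    (hs : ∀ z ∈ ball (0:ℂ) 1, HasSum (fun k => a k * z ^ k) (f z)) :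
    HasFPowerSeriesOnBall f (FormalMultilinearSeries.ofScalars ℂ a) 0 1 := by
  refine ⟨?_, one_pos, ?_⟩
  · apply ENNReal.le_of_forall_nnreal_lt
    intro r hr
    have hr1 : (r:ℝ) < 1 := by exact_mod_cast hr
    have h := (hs (r:ℝ) (by simp; exact_mod_cast hr)).summable.norm
    apply FormalMultilinearSeries.le_radius_of_summable
    refine h.congr ?_
    intro k
    rw [FormalMultilinearSeries.ofScalars_norm]
    simp
  · intro y hy
    have hy1 : y ∈ ball (0:ℂ) 1 := by
      have : (1:ENNReal) = ENNReal.ofReal 1 := by simp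
      rw [this, Metric.eball_ofReal] at hy
      exact hy
    have := hs y hy1
    simpa [FormalMultilinearSeries.ofScalars_apply_eq, smul_eq_mul, mul_comm] using this

lemma series_diff {a : ℕ → ℂ} {f : ℂ → ℂ}
    (hs : ∀ z ∈ ball (0:ℂ) 1, HasSum (fun k => a k * z ^ k) (f z)) :
    DifferentiableOn ℂ f (ball 0 1) := by
  have := (series_fps hs).differentiableOn
  have h1 : (1:ENNReal) = ENNReal.ofReal 1 := by simp
  rwa [h1, Metric.eball_ofReal] at this

lemma coeff_bound_s3 {a : ℕ → ℂ} {f : ℂ → ℂ}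
    (hs : ∀ z ∈ ball (0:ℂ) 1, HasSum (fun k => a k * z ^ k) (f z)) {r B : ℝ} (hr : 0 < r) (hr1 : r < 1)
    (hB : ∀ z, ‖z‖ = r → ‖f z‖ ≤ B) (k : ℕ) : ‖a k‖ * r ^ k ≤ B := by
  have hd := series_diff hs
  have h1 := Complex.norm_iteratedDeriv_le_of_forall_mem_sphere_norm_le (c := 0) (f := f) (C := B) k hr
    (DifferentiableOn.diffContOnCl (by
      rw [closure_ball _ hr.ne']; exact hd.mono (closedBall_subset_ball hr1)))
    (fun z hz => hB z (by simpa using hz))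
  have h2 := (series_fps hs).factorial_smul (1:ℂ) k
  rw [← iteratedDeriv_eq_iteratedFDeriv] at h2
  simp at h2
  rw [← h2, norm_mul, Complex.norm_natCast, mul_div_assoc] at h1
  have hk : (0:ℝ) < k.factorial := by exact_mod_cast Nat.factorial_pos k
  have h3 := le_of_mul_le_mul_left h1 hk
  rwa [le_div_iff₀ (by positivity)] at h3

lemma taylor_small {a : ℕ → ℂ} {f : ℂ → ℂ} {m : ℕ} {ε C : ℝ}
    (hs : ∀ z ∈ ball (0:ℂ) 1, HasSum (fun k => a k * z ^ k) (f z)) (h0 : a 0 = 0)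
    (hC : 0 ≤ C) (he : 0 ≤ ε)
    (ha : ∀ i ∈ Finset.Icc 1 m, ‖a i‖ ≤ ε) (hak : ∀ k, ‖a k‖ * (3/4:ℝ) ^ k ≤ C) {z : ℂ}
    (hz : ‖z‖ ≤ 3/8) : ‖f z‖ ≤ m * ε + 2 * C * (4/3:ℝ)^(m+1) * ‖z‖^(m+1) := by
  have hzn := norm_nonneg z
  have hsz := hs z (by simp; linarith)
  have h1 := (hasSum_nat_add_iff' (m+1)).2 hsz
  have hg : HasSum (fun k : ℕ => C * (4/3:ℝ)^(m+1) * ‖z‖^(m+1) * (1/2:ℝ)^k) (C * (4/3:ℝ)^(m+1) * ‖z‖^(m+1) * 2) :=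
    hasSum_geometric_two.mul_left _
  have h2 : ‖f z - ∑ i ∈ Finset.range (m+1), a i * z ^ i‖ ≤ C * (4/3:ℝ)^(m+1) * ‖z‖^(m+1) * 2 := by
    rw [← h1.tsum_eq]
    apply tsum_of_norm_bounded hg
    intro k
    rw [norm_mul, norm_pow]
    have h3 : ‖a (k+(m+1))‖ ≤ C * (4/3:ℝ)^(k+(m+1)) := by
      have := hak (k+(m+1))
      have e : (4/3:ℝ)^(k+(m+1)) = ((3/4:ℝ)^(k+(m+1)))⁻¹ := by
        rw [← inv_pow]; norm_num
      rw [e, ← div_eq_mul_inv, le_div_iff₀ (by positivity)]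
      exact this
    calc ‖a (k+(m+1))‖ * ‖z‖^(k+(m+1)) ≤ C * (4/3:ℝ)^(k+(m+1)) * ‖z‖^(k+(m+1)) := by gcongr
      _ = C * (4/3:ℝ)^(m+1) * ‖z‖^(m+1) * (4/3 * ‖z‖)^k := by rw [mul_pow, pow_add, pow_add]; ring
      _ ≤ C * (4/3:ℝ)^(m+1) * ‖z‖^(m+1) * (1/2:ℝ)^k := by
        gcongr; linarith
  have h4 : ‖∑ i ∈ Finset.range (m+1), a i * z ^ i‖ ≤ m * ε := by
    rw [Finset.sum_range_succ', h0]
    simp only [zero_mul, add_zero]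
    calc _ ≤ ∑ i ∈ Finset.range m, ε := by
          apply norm_sum_le_of_le
          intro i hi
          have hi' := Finset.mem_range.1 hi
          rw [norm_mul, norm_pow]
          have := ha (i+1) (by simp; omega)
          have h5 : ‖z‖^(i+1) ≤ 1 := pow_le_one₀ hzn (by linarith)
          calc _ ≤ ε * 1 := by gcongr
            _ = ε := mul_one _
      _ = m * ε := by simp
  calc ‖f z‖ = ‖(f z - ∑ i ∈ Finset.range (m+1), a i * z ^ i) + ∑ i ∈ Finset.range (m+1), a i * z ^ i‖ := by simp
    _ ≤ _ := norm_add_le _ _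
    _ ≤ _ := by linarith

lemma harnack_log {g : ℂ → ℂ} {L : ℝ} (hL : 0 ≤ L) (hg : AnalyticOnNhd ℂ g (closedBall 0 (3/4)))
    (hb : ∀ z, ‖z‖ = 3/4 → log ‖g z‖ ≤ L) {w : ℂ} (hw : ‖w‖ ≤ 1/2) (hgw : g w ≠ 0) :
    log ‖g w‖ ≤ L - (1/5) * (L - circleAverage (fun z => log ‖g z‖) 0 (3/4)) := by
  have hwb : w ∈ ball (0:ℂ) (3/4) := by simp; linarith
  have h1 := poisson_log hwb hg hgw
  have hci : CircleIntegrable (fun z => log ‖g z‖) 0 (3/4) := by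
    apply MeromorphicOn.circleIntegrable_log_norm
    intro z hz
    apply (hg z _).meromorphicAt
    rw [abs_of_pos (by norm_num)] at hz
    exact sphere_subset_closedBall hz
  have hone : circleAverage (fun z => poissonKernel 0 w z * L) 0 (3/4) = L := by
    have h : circleAverage (poissonKernel 0 w • fun _ => (L:ℝ)) 0 (3/4) = L := by
      have h := DiffContOnCl.circleAverage_poissonKernel_smul (f := fun _ => (L:ℂ)) diffContOnCl_const hwb
      have h' := congrArg Complex.re h
      rw [circleAverage_def] at h' ⊢
      simp only [Pi.smul_apply', Complex.real_smul, smul_eq_mul, Complex.ofReal_re] at h' ⊢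
      have e : (∫ θ in (0:ℝ)..2*π, (poissonKernel 0 w (circleMap 0 (3/4) θ) : ℂ) * (L:ℂ)) =
        ((∫ θ in (0:ℝ)..2*π, poissonKernel 0 w (circleMap 0 (3/4) θ) * L : ℝ) : ℂ) := by
        rw [← intervalIntegral.integral_ofReal]; simp
      rw [e] at h'
      rw [← Complex.ofReal_mul, Complex.ofReal_re] at h'
      exact h'
    exact h
  have hcL : CircleIntegrable (fun _ : ℂ => L) 0 (3/4) := circleIntegrable_const L _ _
  have hP := circleIntegrable_poisson_mul hwb hcL
  have hPg := circleIntegrable_poisson_mul hwb hci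
  have h2 : circleAverage (fun z => poissonKernel 0 w z * log ‖g z‖) 0 (3/4) ≤
      circleAverage ((fun z => poissonKernel 0 w z * L) - (1/5:ℝ) • ((fun _ => L) - (fun z => log ‖g z‖))) 0 (3/4) := by
    apply circleAverage_mono hPg
    · exact hP.sub ((hcL.sub hci).const_smul)
    · intro z hz
      rw [abs_of_pos (by norm_num)] at hz
      have hk := le_re_herglotzRieszKernel hz hwb
      have hk2 : (1/5:ℝ) ≤ poissonKernel 0 w z := by
        rw [poissonKernel_eq_re_herglotzRieszKernel]
        refine le_trans ?_ hk
        rw [sub_zero, div_le_div_iff₀ (by norm_num) (by positivity)]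
        linarith
      have hb' := hb z (by simpa using hz)
      simp only [Pi.sub_apply, Pi.smul_apply, smul_eq_mul]
      nlinarith
  rw [circleAverage_sub hP ((hcL.sub hci).const_smul), circleAverage_smul, circleAverage_sub hcL hci, hone, circleAverage_const] at h2
  simp only [smul_eq_mul] at h2
  linarith

lemma lower_coeff (m : ℕ) (hm0 : 0 < m) : ∃ ε : ℝ, 0 < ε ∧ ∀ (a : ℕ → ℂ) (f : ℂ → ℂ),
    (∀ z ∈ ball (0:ℂ) 1, HasSum (fun k => a k * z ^ k) (f z)) → a 0 = 0 →
    AtMost m f (ball 0 1) →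
    (∀ c : ℂ, ∀ T : Finset ℂ, (∀ u ∈ T, u ∈ ball (0:ℂ) 1) →
      ∑ u ∈ T, analyticOrderAt (fun z => f z - c) u ≤ m) →
    (∀ z, ‖z‖ ≤ 1/2 → ‖f z‖ ≤ 1) → (∃ z, ‖z‖ ≤ 1/2 ∧ ‖f z‖ = 1) →
    ∃ i ∈ Finset.Icc 1 m, ε ≤ ‖a i‖ := by
  obtain ⟨C, hCdef⟩ : ∃ C : ℝ, C = 2^(1+8*m) * 4^(2*m) := ⟨_, rfl⟩
  have hC1 : 1 ≤ C := by
    rw [hCdef]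
    exact one_le_mul_of_one_le_of_one_le (one_le_pow₀ (by norm_num)) (one_le_pow₀ (by norm_num))
  obtain ⟨C', hC'def⟩ : ∃ C' : ℝ, C' = 2 * C * (4/3:ℝ)^(m+1) := ⟨_, rfl⟩
  have hC'1 : 1 ≤ C' := by
    rw [hC'def]
    exact one_le_mul_of_one_le_of_one_le (by linarith) (one_le_pow₀ (by norm_num))
  obtain ⟨d, hd⟩ : ∃ d : ℝ, d = 1 / (256 * C' * (C+1)^4) := ⟨_, rfl⟩
  have hd0 : 0 < d := by rw [hd]; positivity
  have hC4 : 1 ≤ (C+1)^4 := one_le_pow₀ (by linarith)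
  have hdd : 2 * C' * d = 1 / (128 * (C+1)^4) := by
    rw [hd]; field_simp; norm_num
  have hdd2 : 2 * C' * d ≤ 1/128 := by
    rw [hdd]; apply one_div_le_one_div_of_le <;> linarith
  have hd1 : d ≤ 1/128 := by nlinarith
  obtain ⟨δ, hδ⟩ : ∃ δ : ℝ, δ = 2 * C' * d^(m+1) := ⟨_, rfl⟩
  have hδ0 : 0 < δ := by rw [hδ]; positivity
  have hδ1 : δ ≤ 1/2 := by
    have : d^(m+1) ≤ d := by
      calc d^(m+1) ≤ d^1 := pow_le_pow_of_le_one hd0.le (by linarith) (by omega)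
        _ = d := pow_one d
    rw [hδ]
    have : 2 * C' * d^(m+1) ≤ 2 * C' * d := by gcongr
    linarith
  have hmp : (0:ℝ) < m := by exact_mod_cast hm0
  refine ⟨δ / (4 * m), by positivity, ?_⟩
  intro a f hs h0 hAM hord hhalf ⟨z1, hz1, hfz1⟩
  by_contra! hcon
  have hdiff := series_diff hs
  have hgr := growth_s3 hm0 hdiff hAM hhalf
  have hb34 : ∀ z, ‖z‖ ≤ 3/4 → ‖f z‖ ≤ C := by
    intro z hz
    have h1 := hgr z (by simp; linarith)
    have h2 : (1/4:ℝ)^(2*m) ≤ (1-‖z‖)^(2*m) := by gcongr; linarith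
    have h3 : ‖f z‖ * (1/4:ℝ)^(2*m) ≤ 2^(1+8*m) := le_trans (by gcongr) h1
    rw [one_div, inv_pow, ← div_eq_mul_inv, div_le_iff₀ (by positivity)] at h3
    rw [hCdef]; exact h3
  have hak : ∀ k, ‖a k‖ * (3/4:ℝ) ^ k ≤ C := fun k =>
    coeff_bound_s3 hs (by norm_num) (by norm_num) (fun z hz => hb34 z hz.le) k
  have hf0 : f 0 = 0 := by
    have h1 := hs 0 (by simp)
    have h2 := hasSum_single (f := fun k => a k * (0:ℂ)^k) 0 (by intro k hk; simp [hk])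
    rw [h1.unique h2]; simp [h0]
  have hsmall : ∀ z, ‖z‖ < d → f z ≠ δ := by
    intro z hz hfz
    have h1 := taylor_small (m := m) (ε := δ/(4*m)) hs h0 (by linarith) (by positivity)
      (fun i hi => (hcon i hi).le) hak (z := z) (by linarith)
    rw [hfz, Complex.norm_real, norm_of_nonneg hδ0.le, ← hC'def] at h1
    have h2 : ‖z‖^(m+1) ≤ d^(m+1) := by gcongr
    have h3 : C' * ‖z‖^(m+1) ≤ C' * d^(m+1) := by gcongr
    have h4 : (m:ℝ) * (δ/(4*m)) = δ/4 := by field_simp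
    rw [h4] at h1
    linarith
  have hana : AnalyticOnNhd ℂ (fun z => f z - δ) (closedBall 0 (3/4)) := by
    intro z hz
    have hz' : z ∈ ball (0:ℂ) 1 := closedBall_subset_ball (by norm_num) hz
    exact (hdiff.analyticAt (isOpen_ball.mem_nhds hz')).sub analyticAt_const
  have hJ := jensen_le (g := fun z => f z - δ) (R := 3/4) (d := d) (m := m) (by norm_num) hd0 hana
    (by simp [hf0, hδ0.ne']) (by linarith)
    (by
      intro u _ hu
      by_contra! hlt
      exact hsmall u hlt (sub_eq_zero.1 hu))
    (fun T hT => hord δ T (fun u hu => closedBall_subset_ball (by norm_num) (hT u hu)))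
  have hg1 : (1/2:ℝ) ≤ ‖f z1 - δ‖ := by
    have h1 := norm_sub_norm_le (f z1) (δ:ℂ)
    rw [hfz1, Complex.norm_real, norm_of_nonneg hδ0.le] at h1
    linarith
  have hH := harnack_log (g := fun z => f z - δ) (L := log (C+1)) (log_nonneg (by linarith)) hana
    (by
      intro z hz
      have h1 : ‖f z - δ‖ ≤ C + 1 := by
        have h2 := norm_sub_le (f z) (δ:ℂ)
        rw [Complex.norm_real, norm_of_nonneg hδ0.le] at h2
        linarith [hb34 z hz.le]
      rcases (norm_nonneg (f z - δ)).eq_or_lt with h | h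
      · simp only [← h, log_zero]; exact log_nonneg (by linarith)
      · exact log_le_log h h1) hz1 (by
        intro h
        rw [h] at hg1; norm_num at hg1)
  have hlow : log (1/2) ≤ log ‖f z1 - δ‖ := log_le_log (by norm_num) hg1
  have hJ2 : log ‖f 0 - δ‖ + m * log (3/4/d) ≤ log (2 * C' * d) := by
    rw [hf0, zero_sub, norm_neg, Complex.norm_real, norm_of_nonneg hδ0.le, ← log_pow, ← log_mul hδ0.ne' (by positivity)]
    apply log_le_log (by positivity)
    have h5 : (3/4:ℝ)^m ≤ 1 := pow_le_one₀ (by norm_num) (by norm_num)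
    calc δ * (3/4/d)^m = 2 * C' * d * (3/4:ℝ)^m := by rw [hδ, div_pow, pow_succ]; field_simp
      _ ≤ 2 * C' * d * 1 := by gcongr
      _ = _ := mul_one _
  have hlast : log (2*C'*d) = - (7 * log 2 + 4 * log (C+1)) := by
    rw [hdd, one_div, log_inv, log_mul (by norm_num) (by positivity), log_pow]
    have : (128:ℝ) = 2^7 := by norm_num
    rw [this, log_pow]; push_cast; ring
  have hl2 : log (1/2:ℝ) = - log 2 := by rw [one_div, log_inv]
  have hl2p : 0 < log 2 := log_pos (by norm_num)
  linarith

def OrdLe (m : ℕ) (f : ℂ → ℂ) (S : Set ℂ) : Prop :=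
  ∀ c : ℂ, ∀ T : Finset ℂ, (∀ u ∈ T, u ∈ S) → ∑ u ∈ T, analyticOrderAt (fun z => f z - c) u ≤ m

lemma OrdLe.atMost {m : ℕ} {f : ℂ → ℂ} (hf : DifferentiableOn ℂ f (ball 0 1)) (h : OrdLe m f (ball 0 1)) :
    AtMost m f (ball 0 1) := by
  intro c T hT
  have h1 := h c T (fun u hu => (hT u hu).1)
  have h2 : ∑ u ∈ T, (1:ℕ∞) ≤ ∑ u ∈ T, analyticOrderAt (fun z => f z - c) u := by
    apply Finset.sum_le_sum
    intro u hu
    have ha : AnalyticAt ℂ (fun z => f z - c) u :=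
      (hf.analyticAt (isOpen_ball.mem_nhds (hT u hu).1)).sub analyticAt_const
    rw [Order.one_le_iff_ne_zero]
    rw [ha.analyticOrderAt_ne_zero]
    simp [(hT u hu).2]
  have h3 := h2.trans h1
  simp only [Finset.sum_const, nsmul_eq_mul, mul_one] at h3
  exact_mod_cast h3

lemma unit_case (m : ℕ) (hm : 0 < m) : ∃ K : ℝ, 0 < K ∧ ∀ (a : ℕ → ℂ) (f : ℂ → ℂ),
    (∀ z ∈ ball (0:ℂ) 1, HasSum (fun k => a k * z ^ k) (f z)) → OrdLe m f (ball 0 1) →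
    ∃ i ∈ Finset.Icc 1 m, ∀ k : ℕ, 1 ≤ k → ‖a k‖ ≤ K * k^(2*m) * ‖a i‖ := by
  obtain ⟨ε, he, hlow⟩ := lower_coeff m hm
  refine ⟨2 * 2^(1+8*m) * 2^(2*m) / ε, by positivity, ?_⟩
  intro a f hs ho
  have hd := series_diff hs
  obtain ⟨z1, hz1, hmax⟩ := (isCompact_closedBall (0:ℂ) (1/2)).exists_isMaxOn (f := fun z => ‖f z - a 0‖)
    ⟨0, by simp⟩ ((hd.continuousOn.mono (closedBall_subset_ball (by norm_num))).sub continuousOn_const).norm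
  have hmax' : ∀ z, ‖z‖ ≤ 1/2 → ‖f z - a 0‖ ≤ ‖f z1 - a 0‖ := fun z hz => hmax (by simpa using hz)
  obtain ⟨M, hM⟩ : ∃ M, M = ‖f z1 - a 0‖ := ⟨_, rfl⟩
  rw [← hM] at hmax'
  have hM0 : 0 < M := by
    rcases (hM ▸ norm_nonneg _ : 0 ≤ M).eq_or_lt with h | h
    · exfalso
      have h1 := ho (a 0) {0} (by simp)
      rw [Finset.sum_singleton, analyticOrderAt_eq_top.2] at h1
      · simp at h1
      · filter_upwards [closedBall_mem_nhds (0:ℂ) (by norm_num : (0:ℝ) < 1/2)] with z hz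
        have := hmax' z (by simpa using hz)
        rw [← h] at this
        exact norm_le_zero_iff.1 this
    · exact h
  have hMc : (M:ℂ) ≠ 0 := by exact_mod_cast hM0.ne'
  set b : ℕ → ℂ := fun k => (if k = 0 then 0 else a k) / M with hb
  set h : ℂ → ℂ := fun z => (f z - a 0) / M with hh
  have hsb : ∀ z ∈ ball (0:ℂ) 1, HasSum (fun k => b k * z ^ k) (h z) := by
    intro z hz
    have h0 : HasSum (fun k => if k = 0 then a 0 else 0) (a 0) := hasSum_ite_eq 0 (a 0)
    have h1 : HasSum (fun k => (a k * z ^ k - if k = 0 then a 0 else 0) * (M:ℂ)⁻¹) ((f z - a 0) * (M:ℂ)⁻¹) :=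
      ((hs z hz).sub h0).mul_right _
    have e : (fun k => b k * z ^ k) = (fun k => (a k * z ^ k - if k = 0 then a 0 else 0) * (M:ℂ)⁻¹) := by
      funext k
      by_cases hk : k = 0
      · subst hk; simp [hb]
      · simp [hb, hk]; ring
    rw [e]
    simpa only [hh, div_eq_mul_inv] using h1
  have hhd := series_diff hsb
  have hob : OrdLe m h (ball 0 1) := by
    intro c T hT
    refine le_trans (le_of_eq ?_) (ho (M * c + a 0) T hT)
    apply Finset.sum_congr rfl
    intro u hu
    have ha : AnalyticAt ℂ (fun z => h z - c) u :=
      (hhd.analyticAt (isOpen_ball.mem_nhds (hT u hu))).sub analyticAt_const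
    have e : (fun z => f z - (M * c + a 0)) = (fun _ : ℂ => (M:ℂ)) • (fun z => h z - c) := by
      funext z
      simp only [hh, Pi.smul_apply', smul_eq_mul]
      field_simp
      ring
    rw [e, analyticOrderAt_smul analyticAt_const ha, ((analyticAt_const : AnalyticAt ℂ (fun _ : ℂ => (M:ℂ)) u).analyticOrderAt_eq_zero).2 hMc, zero_add]
  have hAM := hob.atMost hhd
  have hhalf : ∀ z, ‖z‖ ≤ 1/2 → ‖h z‖ ≤ 1 := by
    intro z hz
    simp only [hh]
    rw [norm_div, Complex.norm_real, norm_of_nonneg hM0.le, div_le_one hM0]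
    exact hmax' z hz
  obtain ⟨i, hi, hεi⟩ := hlow b h hsb (by simp [hb]) hAM hob hhalf
    ⟨z1, by simpa using hz1, by
      simp only [hh]
      rw [norm_div, Complex.norm_real, norm_of_nonneg hM0.le, ← hM, div_self hM0.ne']⟩
  have hnb : ∀ k, 1 ≤ k → ‖b k‖ = ‖a k‖ / M := by
    intro k hk
    have : k ≠ 0 := by omega
    simp only [hb, this, if_false]
    rw [norm_div, Complex.norm_real, norm_of_nonneg hM0.le]
  refine ⟨i, hi, ?_⟩
  intro k hk
  have hk1 : (1:ℝ) ≤ k := by exact_mod_cast hk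
  have hi1 : 1 ≤ i := (Finset.mem_Icc.1 hi).1
  have hg := growth_s3 hm hhd hAM hhalf
  have hr1 : (1:ℝ) / (2*k) ≤ 1/2 := by
    apply one_div_le_one_div_of_le <;> linarith
  have hr0 : (0:ℝ) < 1 / (2*k) := by positivity
  have hcb := coeff_bound_s3 hsb (r := 1 - 1/(2*k)) (B := 2^(1+8*m) * (2*k)^(2*m)) (by linarith) (by linarith) (by
    intro z hz
    have h1 := hg z (by simp [hz]; linarith)
    rw [hz, sub_sub_cancel, one_div, inv_pow, ← div_eq_mul_inv, div_le_iff₀ (by positivity)] at h1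
    exact h1) k
  have hbern : (1/2:ℝ) ≤ (1 - 1/(2*k))^k := by
    have h1 := one_add_mul_le_pow (a := -(1/(2*(k:ℝ)))) (by linarith) k
    have h2 : 1 + (k:ℝ) * -(1/(2*(k:ℝ))) = 1/2 := by field_simp; norm_num
    rw [h2] at h1
    exact h1
  have h5 : ‖b k‖ * (1/2) ≤ 2^(1+8*m) * (2*k)^(2*m) := le_trans (by gcongr) hcb
  rw [hnb k hk] at h5
  rw [hnb i hi1, le_div_iff₀ hM0] at hεi
  have h6 : ‖a k‖ ≤ 2 * (2^(1+8*m) * (2*k)^(2*m)) * M := by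
    rw [← div_le_iff₀ hM0]; linarith
  have h7 : M ≤ ‖a i‖ / ε := by rw [le_div_iff₀ he]; linarith
  calc ‖a k‖ ≤ 2 * (2^(1+8*m) * (2*k)^(2*m)) * M := h6
    _ ≤ 2 * (2^(1+8*m) * (2*k)^(2*m)) * (‖a i‖ / ε) := by gcongr
    _ = _ := by rw [mul_pow]; ring

lemma valent_ordLe {m : ℕ} {R : ℝ} {f : ℂ → ℂ} (hR : 0 < R) (hf : DifferentiableOn ℂ (fun z => f (R * z)) (ball 0 1))
    (h : IsPValentOn f (ball (0:ℂ) R) m) : OrdLe m (fun z => f (R * z)) (ball 0 1) := by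
  classical
  intro c T hT
  have hRc : (R:ℂ) ≠ 0 := by exact_mod_cast hR.ne'
  have hinj : Function.Injective (fun z : ℂ => (R:ℂ) * z) := mul_right_injective₀ hRc
  have hc := h c
  unfold solCount at hc
  set S : Finset ℂ := T.image (fun z => (R:ℂ) * z) with hS
  have hSb : ∀ u ∈ S, u ∈ ball (0:ℂ) R := by
    intro u hu
    obtain ⟨v, hv, rfl⟩ := Finset.mem_image.1 hu
    have := hT v hv
    rw [mem_ball_zero_iff] at this ⊢
    rw [norm_mul, Complex.norm_real, norm_of_nonneg hR.le]
    nlinarith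
  have hsum : HasSum (fun z : ball (0:ℂ) R => ordAt (fun z => f z - c) z)
      (⨆ s : Finset (ball (0:ℂ) R), ∑ i ∈ s, ordAt (fun z => f z - c) i) :=
    hasSum_of_isLUB _ isLUB_iSup
  have h1 : ∑ u ∈ S, ordAt (fun z => f z - c) u ≤ m := by
    rw [← Finset.sum_subtype_of_mem (p := fun x => x ∈ ball (0:ℂ) R) _ hSb]
    exact (sum_le_hasSum _ (fun _ _ => zero_le) hsum.summable.hasSum).trans hc
  refine le_trans (le_of_eq ?_) h1
  rw [hS, Finset.sum_image (fun x _ y _ hxy => hinj hxy)]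
  apply Finset.sum_congr rfl
  intro u hu
  have ha : AnalyticAt ℂ (fun z => f (R * z) - c) u :=
    (hf.analyticAt (isOpen_ball.mem_nhds (hT u hu))).sub analyticAt_const
  have hlin : AnalyticAt ℂ (fun z : ℂ => (R:ℂ) * z) u := by fun_prop
  have hder : deriv (fun z : ℂ => (R:ℂ) * z) u ≠ 0 := by
    rw [deriv_const_mul_field]; simpa using hR.ne'
  have e : (fun z => f (R * z) - c) = (fun z => f z - c) ∘ (fun z : ℂ => (R:ℂ) * z) := rfl
  have ha2 : AnalyticAt ℂ (fun z => f z - c) (R * u) := by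
    rw [e] at ha
    exact (analyticAt_comp_iff_of_deriv_ne_zero hlin hder).1 ha
  unfold ordAt
  rw [dif_pos ha2, e, analyticOrderAt_comp_of_deriv_ne_zero hlin hder]

theorem statement3_aux (m : ℕ) (hm : 0 < m) :
    ∃ A : ℝ, 0 < A ∧
      ∀ (R : ℝ) (a : ℕ → ℂ) (f : ℂ → ℂ), 0 < R →
        (∀ z ∈ Metric.ball (0 : ℂ) R, HasSum (fun k => a k * z ^ k) (f z)) →
        IsPValentOn f (Metric.ball (0 : ℂ) R) m →
        ∀ k : ℕ, m + 1 ≤ k →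
          ‖a k‖ * R ^ k ≤
            (A * k / m) ^ (2 * m) *
              (Finset.Icc 1 m).sup' (Finset.nonempty_Icc.mpr hm)
                (fun i => ‖a i‖ * R ^ i) := by
  obtain ⟨K, hK, hmain⟩ := unit_case m hm
  have hmp : (0:ℝ) < m := by exact_mod_cast hm
  refine ⟨m * max K 1, by positivity, ?_⟩
  intro R a f hR hs hv k hk
  have hs1 : ∀ z ∈ Metric.ball (0:ℂ) 1, HasSum (fun k => (a k * (R:ℂ)^k) * z ^ k) (f (R * z)) := by
    intro z hz
    have h1 := hs (R * z) (by
      rw [mem_ball_zero_iff] at hz ⊢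
      rw [norm_mul, Complex.norm_real, norm_of_nonneg hR.le]
      nlinarith)
    simp only [mul_pow, ← mul_assoc] at h1
    exact h1
  obtain ⟨i, hi, hik⟩ := hmain _ (fun z => f (R * z)) hs1 (valent_ordLe hR (series_diff hs1) hv)
  have h2 := hik k (by omega)
  have hn : ∀ j, ‖a j * (R:ℂ)^j‖ = ‖a j‖ * R^j := by
    intro j; rw [norm_mul, norm_pow, Complex.norm_real, norm_of_nonneg hR.le]
  rw [hn, hn] at h2
  refine h2.trans ?_
  have h3 : ‖a i‖ * R^i ≤ (Finset.Icc 1 m).sup' (Finset.nonempty_Icc.mpr hm) (fun i => ‖a i‖ * R ^ i) :=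
    Finset.le_sup' (fun i => ‖a i‖ * R ^ i) hi
  have h4 : K * (k:ℝ)^(2*m) ≤ (m * max K 1 * k / m)^(2*m) := by
    have e : (m:ℝ) * max K 1 * k / m = max K 1 * k := by field_simp
    rw [e, mul_pow]
    gcongr
    calc K ≤ max K 1 := le_max_left _ _
      _ ≤ (max K 1)^(2*m) := le_self_pow₀ (le_max_right _ _) (by omega)
  have h5 : 0 ≤ ‖a i‖ * R^i := by positivity
  gcongr

end Helpers

/-- Biernacki's theorem: for every positive integer `m` there is a constant `A_m > 0`
such that if `f(z) = ∑ a_k z^k` is analytic and `m`-valent in `D_R`, then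
`|a_k| R^k ≤ (A_m k / m)^{2m} · max_{1 ≤ i ≤ m} |a_i| R^i` for all `k ≥ m + 1`. -/
theorem statement3 (m : ℕ) (hm : 0 < m) :
    ∃ A : ℝ, 0 < A ∧
      ∀ (R : ℝ) (a : ℕ → ℂ) (f : ℂ → ℂ), 0 < R →
        (∀ z ∈ Metric.ball (0 : ℂ) R, HasSum (fun k => a k * z ^ k) (f z)) →
        IsPValentOn f (Metric.ball (0 : ℂ) R) m →
        ∀ k : ℕ, m + 1 ≤ k →
          ‖a k‖ * R ^ k ≤
            (A * k / m) ^ (2 * m) *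
              (Finset.Icc 1 m).sup' (Finset.nonempty_Icc.mpr hm)
                (fun i => ‖a i‖ * R ^ i) := by
  exact statement3_aux m hm
end
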